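/- arXiv:1809.08554 — 3 statements merged into one kernel-verified Lean document; each statement's English description precedes it below -/
import Mathlib

section
/- Let f : [0,1] → ℝ be continuously differentiable, monotonically nondecreasing and convex, with ∫₀¹ (t − 2/3)·f(t) dt = 0. Then there exists a (nonnegative) measure μ on ℝ³ concentrated on the triangle Δ = {(x,y,z) ∈ [0,1]³ : x + y + z = 2} (that is, μ(Δ) equals the total mass of μ) such that the pushforward of μ under each of the three coordinate projections is absolutely continuous with respect to Lebesgue measure on [0,1] with density f. -/
open Set MeasureTheory intervalIntegral

/-- The triangle `Δ = {(x,y,z) ∈ [0,1]³ : x + y + z = 2}`. -/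
def triangleΔ : Set (ℝ × ℝ × ℝ) :=
  {p | p.1 ∈ Set.Icc (0 : ℝ) 1 ∧ p.2.1 ∈ Set.Icc (0 : ℝ) 1 ∧ p.2.2 ∈ Set.Icc (0 : ℝ) 1 ∧
    p.1 + p.2.1 + p.2.2 = 2}

/-!
By duality (Riesz extension and Riesz–Markov–Kakutani) it is enough that `0 ≤ ∫ φ f` for every
test function `φ` with `φ x + φ y + φ z ≥ 0` on `Δ`. Since `x - 2/3` sums to zero on `Δ` and is
orthogonal to `f`, a multiple of it may be added to `φ`, so that `∫ φ = 0`. Now let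
`Ψ'' u = φ (1 - u)` with `Ψ 0 = Ψ' 0 = 0`; integrating by parts against the convex nondecreasing
function `f` reduces the claim to `Ψ ≥ 0` on `[0, 1]`.

In the coordinates `u = 1 - x`, `v = 1 - y`, `w = 1 - z` the hypothesis on `φ` says that
`Ψ u + Ψ v + Ψ w` is subharmonic on the simplex `u + v + w = 1`. Integrating its Laplacian over
polygons gives inequalities between values of `Ψ` and `Ψ'`, and at a minimum of `Ψ`, where `Ψ'`
vanishes, these force `Ψ` to be nonnegative.
-/

section Calculus

theorem le_of_hasDerivAt_nonneg {g g' : ℝ → ℝ} {a b : ℝ} (hab : a ≤ b)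
    (hg : ∀ x ∈ Icc a b, HasDerivAt g (g' x) x) (hg' : ∀ x ∈ Icc a b, 0 ≤ g' x) : g a ≤ g b :=
  monotoneOn_of_hasDerivWithinAt_nonneg (convex_Icc a b)
    (fun x hx => (hg x hx).continuousAt.continuousWithinAt)
    (fun x hx => (hg x (interior_subset hx)).hasDerivWithinAt)
    (fun x hx => hg' x (interior_subset hx)) (left_mem_Icc.2 hab) (right_mem_Icc.2 hab) hab

theorem hasDerivAt_comp_const_sub_mul {g : ℝ → ℝ} {g' c m x : ℝ}
    (hg : HasDerivAt g g' (c - m * x)) : HasDerivAt (fun t => g (c - m * t)) (-(m * g')) x :=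
  (hg.comp x ((hasDerivAt_const_mul m).const_sub c)).congr_deriv (by ring)

theorem continuousOn_mul_of_monotoneOn_of_convexOn {f v : ℝ → ℝ} {a b : ℝ}
    (hmono : MonotoneOn f (Icc a b)) (hconv : ConvexOn ℝ (Icc a b) f)
    (hv : ContinuousOn v (Icc a b)) (hva : v a = 0) (hvb : v b = 0) :
    ContinuousOn (fun x => f x * v x) (Icc a b) := by
  intro x hx
  by_cases hxint : x ∈ interior (Icc a b)
  · exact (hconv.continuousOn_interior.continuousAt
      (isOpen_interior.mem_nhds hxint)).continuousWithinAt.mul (hv x hx)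
  have hvx : v x = 0 := by
    rw [interior_Icc, mem_Ioo, not_and_or, not_lt, not_lt] at hxint
    rcases hxint with h | h
    · rwa [le_antisymm h hx.1]
    · rwa [← le_antisymm h hx.2]
  have hab : a ≤ b := hx.1.trans hx.2
  have hbdd : ∀ᶠ y in nhdsWithin x (Icc a b), |f y| ≤ max |f a| |f b| :=
    eventually_mem_nhdsWithin.mono fun y hy => abs_le_max_abs_abs
      (hmono (left_mem_Icc.2 hab) hy hy.1) (hmono hy (right_mem_Icc.2 hab) hy.2)
  have hlim : Filter.Tendsto v (nhdsWithin x (Icc a b)) (nhds 0) := hvx ▸ hv x hx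
  simpa only [ContinuousWithinAt, hvx, mul_zero] using bdd_le_mul_tendsto_zero' _ hbdd hlim

theorem intervalIntegrable_derivWithin_Ioi {f : ℝ → ℝ} {a b : ℝ} (hf : MonotoneOn f (uIcc a b)) :
    IntervalIntegrable (fun x => derivWithin f (Ioi x) x) volume a b := by
  refine hf.intervalIntegrable_deriv.congr_ae ((ae_restrict_iff' measurableSet_uIoc).2 ?_)
  filter_upwards [hf.ae_differentiableWithinAt_of_mem, Measure.ae_ne volume (max a b)]
    with x hdiff hne hx
  have hnhds : uIcc a b ∈ nhds x := Icc_mem_nhds hx.1 (lt_of_le_of_ne hx.2 hne)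
  exact (((hdiff (uIoc_subset_uIcc hx)).differentiableAt hnhds).derivWithin
    (uniqueDiffWithinAt_Ioi x)).symm

theorem integral_mul_deriv_eq_neg_integral_derivWithin_Ioi_mul {f v v' : ℝ → ℝ} {a b : ℝ}
    (hab : a ≤ b) (hmono : MonotoneOn f (Icc a b)) (hconv : ConvexOn ℝ (Icc a b) f)
    (hv : ∀ x ∈ Icc a b, HasDerivAt v (v' x) x) (hv' : ContinuousOn v' (Icc a b))
    (hva : v a = 0) (hvb : v b = 0) :
    ∫ x in a..b, f x * v' x = -∫ x in a..b, derivWithin f (Ioi x) x * v x := by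
  have hvcont : ContinuousOn v (Icc a b) := fun x hx => (hv x hx).continuousAt.continuousWithinAt
  have hmono_uIcc : MonotoneOn f (uIcc a b) := by rwa [uIcc_of_le hab]
  have hf'v : IntervalIntegrable (fun x => derivWithin f (Ioi x) x * v x) volume a b :=
    (intervalIntegrable_derivWithin_Ioi hmono_uIcc).mul_continuousOn (by rwa [uIcc_of_le hab])
  have hfv' : IntervalIntegrable (fun x => f x * v' x) volume a b :=
    hmono_uIcc.intervalIntegrable.mul_continuousOn (by rwa [uIcc_of_le hab])
  have hftc := integral_eq_sub_of_hasDeriv_right_of_le hab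
    (continuousOn_mul_of_monotoneOn_of_convexOn hmono hconv hvcont hva hvb)
    (fun x hx => (hconv.hasDerivWithinAt_rightDeriv_of_mem_interior (by rwa [interior_Icc])).mul
      (hv x (Ioo_subset_Icc_self hx)).hasDerivWithinAt) (hf'v.add hfv')
  rw [intervalIntegral.integral_add hf'v hfv', hva, hvb] at hftc
  linarith

theorem integral_mul_nonneg_of_setIntegral_nonneg {α : Type*} [MeasurableSpace α] {μ : Measure α}
    [SFinite μ] {w η : α → ℝ} (hw : AEStronglyMeasurable w μ) (hη : AEMeasurable η μ)
    (hη0 : 0 ≤ᵐ[μ] η) (hwη : Integrable (fun x => w x * η x) μ)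
    (h : ∀ t, 0 < t → 0 ≤ ∫ x in {x | t < η x}, w x ∂μ) : 0 ≤ ∫ x, w x * η x ∂μ := by
  have hvol {x : α} (hx : 0 ≤ η x) : (volume.restrict (Ioi 0)).real (Iio (η x)) = η x := by
    rw [measureReal_restrict_apply measurableSet_Iio, Iio_inter_Ioi, Real.volume_real_Ioo_of_le hx,
      sub_zero]
  have hint : Integrable (Function.uncurry fun x t => (Iio (η x)).indicator (fun _ => w x) t)
      (μ.prod (volume.restrict (Ioi 0))) := by
    have hlevel : NullMeasurableSet {p : α × ℝ | p.2 < η p.1} (μ.prod (volume.restrict (Ioi 0))) :=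
      nullMeasurableSet_lt measurable_snd.aemeasurable hη.comp_fst
    have hmeas : AEStronglyMeasurable
        (Function.uncurry fun x t => (Iio (η x)).indicator (fun _ => w x) t)
        (μ.prod (volume.restrict (Ioi 0))) := hw.comp_fst.indicator₀ hlevel
    refine (integrable_prod_iff hmeas).2 ⟨?_, ?_⟩
    · have hsection (x : α) :
          Integrable ((Iio (η x)).indicator fun _ => w x) (volume.restrict (Ioi 0)) := by
        refine (integrable_indicator_iff measurableSet_Iio).2 (integrableOn_const ?_)
        rw [Measure.restrict_apply measurableSet_Iio, Iio_inter_Ioi]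
        exact measure_Ioo_lt_top.ne
      exact .of_forall hsection
    · refine hwη.norm.congr (hη0.mono fun x hx => ?_)
      simp only [Function.uncurry_apply_pair, norm_indicator_eq_indicator_norm]
      rw [integral_indicator_const _ measurableSet_Iio, hvol hx, norm_mul, Real.norm_of_nonneg hx,
        smul_eq_mul, mul_comm]
  calc 0 ≤ ∫ t in Ioi 0, ∫ x in {x | t < η x}, w x ∂μ := setIntegral_nonneg measurableSet_Ioi h
    _ = ∫ t in Ioi 0, ∫ x, (Iio (η x)).indicator (fun _ => w x) t ∂μ :=
        setIntegral_congr_fun measurableSet_Ioi fun t _ =>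
          (integral_indicator₀ (nullMeasurableSet_lt aemeasurable_const hη)).symm
    _ = ∫ x, (∫ t in Ioi 0, (Iio (η x)).indicator (fun _ => w x) t) ∂μ :=
        (integral_integral_swap hint).symm
    _ = ∫ x, w x * η x ∂μ := integral_congr_ae <| hη0.mono fun x hx => by
        simp only [integral_indicator_const _ measurableSet_Iio, hvol hx, smul_eq_mul, mul_comm]

theorem exists_ae_eq_Ioo_of_forall_Ioo_subset {s : Set ℝ} {a b : ℝ} (hab : a ≤ b)
    (hs : s ⊆ Ioo a b) (h : ∀ x ∈ s, Ioo x b ⊆ s) : ∃ c ∈ Icc a b, s =ᵐ[volume] Ioo c b := by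
  rcases s.eq_empty_or_nonempty with rfl | ⟨x, hx⟩
  · exact ⟨b, right_mem_Icc.2 hab, by simp⟩
  have hbdd : BddBelow s := ⟨a, fun y hy => (hs hy).1.le⟩
  refine ⟨sInf s, ⟨?_, (csInf_le hbdd hx).trans (hs hx).2.le⟩, Filter.EventuallyLE.antisymm ?_ ?_⟩
  · exact le_csInf ⟨x, hx⟩ fun y hy => (hs hy).1.le
  · have hsub : s ⊆ Ico (sInf s) b := fun y hy => ⟨csInf_le hbdd hy, (hs hy).2⟩
    exact hsub.eventuallyLE.trans Ioo_ae_eq_Ico.symm.le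
  · have hsub : Ioo (sInf s) b ⊆ s := fun y hy => by
      obtain ⟨z, hz, hzy⟩ := exists_lt_of_csInf_lt ⟨x, hx⟩ hy.1
      exact h z hz ⟨hzy, hy.2⟩
    exact hsub.eventuallyLE

theorem integral_mul_nonneg_of_monotoneOn {w η : ℝ → ℝ} {a b : ℝ} (hab : a ≤ b)
    (hw : IntervalIntegrable w volume a b) (hη : MonotoneOn η (Ioo a b))
    (hη0 : ∀ x ∈ Ioo a b, 0 ≤ η x) (hwη : IntervalIntegrable (fun x => w x * η x) volume a b)
    (h : ∀ c ∈ Icc a b, 0 ≤ ∫ x in c..b, w x) : 0 ≤ ∫ x in a..b, w x * η x := by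
  rw [integral_of_le hab, integral_Ioc_eq_integral_Ioo]
  refine integral_mul_nonneg_of_setIntegral_nonneg
    ((intervalIntegrable_iff_integrableOn_Ioo_of_le hab).1 hw).aestronglyMeasurable
    (aemeasurable_restrict_of_monotoneOn measurableSet_Ioo hη)
    ((ae_restrict_mem measurableSet_Ioo).mono hη0)
    ((intervalIntegrable_iff_integrableOn_Ioo_of_le hab).1 hwη) fun t _ => ?_
  obtain ⟨c, hc, hlevel⟩ := exists_ae_eq_Ioo_of_forall_Ioo_subset (s := {x | t < η x} ∩ Ioo a b) hab
    inter_subset_right fun x hx y hy =>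
      have hy' : y ∈ Ioo a b := ⟨hx.2.1.trans hy.1, hy.2⟩
      ⟨hx.1.trans_le (hη hx.2 hy' hy.1.le), hy'⟩
  rw [Measure.restrict_restrict' measurableSet_Ioo, setIntegral_congr_set hlevel,
    ← integral_Ioc_eq_integral_Ioo, ← integral_of_le hc.2]
  exact h c hc

theorem integral_deriv_deriv_mul_nonneg {f Θ Θ' Θ'' : ℝ → ℝ} {a b : ℝ} (hab : a ≤ b)
    (hmono : MonotoneOn f (Icc a b)) (hconv : ConvexOn ℝ (Icc a b) f)
    (hΘ : ∀ x ∈ Icc a b, HasDerivAt Θ (Θ' x) x) (hΘ' : ∀ x ∈ Icc a b, HasDerivAt Θ' (Θ'' x) x)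
    (hΘ'' : ContinuousOn Θ'' (Icc a b)) (hΘ'a : Θ' a = 0) (hΘ'b : Θ' b = 0) (hΘb : Θ b = 0)
    (hΘ0 : ∀ x ∈ Icc a b, 0 ≤ Θ x) : 0 ≤ ∫ x in a..b, Θ'' x * f x := by
  have hΘ'cont : ContinuousOn Θ' (Icc a b) := fun x hx =>
    (hΘ' x hx).continuousAt.continuousWithinAt
  have hint {c : ℝ} (hc : c ∈ Icc a b) : IntervalIntegrable Θ' volume c b :=
    (hΘ'cont.mono (Icc_subset_Icc_left hc.1)).intervalIntegrable_of_Icc hc.2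
  have htail : ∀ c ∈ Icc a b, 0 ≤ ∫ x in c..b, -Θ' x := fun c hc => by
    have hsub : uIcc c b ⊆ Icc a b := uIcc_of_le hc.2 ▸ Icc_subset_Icc_left hc.1
    rw [intervalIntegral.integral_neg,
      integral_eq_sub_of_hasDerivAt (fun x hx => hΘ x (hsub hx)) (hint hc), hΘb, zero_sub, neg_neg]
    exact hΘ0 c hc
  have hf'nonneg : ∀ x ∈ Ioo a b, 0 ≤ derivWithin f (Ioi x) x := fun x hx => by
    rw [← derivWithin_inter (Icc_mem_nhds hx.1 hx.2)]
    exact (hmono.mono inter_subset_right).derivWithin_nonneg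
  have hf'int : IntervalIntegrable (fun x => derivWithin f (Ioi x) x) volume a b :=
    intervalIntegrable_derivWithin_Ioi (by rwa [uIcc_of_le hab])
  calc 0 ≤ ∫ x in a..b, -Θ' x * derivWithin f (Ioi x) x :=
        integral_mul_nonneg_of_monotoneOn hab (hint (left_mem_Icc.2 hab)).neg
          (by simpa only [interior_Icc] using hconv.monotoneOn_rightDeriv) hf'nonneg
          (hf'int.continuousOn_mul (uIcc_of_le hab ▸ hΘ'cont.neg)) htail
    _ = -∫ x in a..b, derivWithin f (Ioi x) x * Θ' x := by
        simp only [neg_mul, intervalIntegral.integral_neg, mul_comm (Θ' _)]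
    _ = ∫ x in a..b, Θ'' x * f x := by
        rw [← integral_mul_deriv_eq_neg_integral_derivWithin_Ioi_mul hab hmono hconv hΘ' hΘ'' hΘ'a
          hΘ'b]
        simp only [mul_comm (Θ'' _)]

end Calculus

/-- A potential with second derivative `Ψ''` satisfying `Ψ'' u + Ψ'' v + Ψ'' w ≥ 0` on the standard
simplex `u + v + w = 1`, so that `Ψ u + Ψ v + Ψ w` is subharmonic there. The derivatives are
carried as data rather than written with `deriv`. -/
structure IsSimplexPotential (Ψ Ψ' Ψ'' : ℝ → ℝ) : Prop where
  hasDerivAt : ∀ x, HasDerivAt Ψ (Ψ' x) x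
  hasDerivAt_deriv : ∀ x, HasDerivAt Ψ' (Ψ'' x) x
  map_zero : Ψ 0 = 0
  deriv_zero : Ψ' 0 = 0
  deriv_one : Ψ' 1 = 0
  sum_nonneg : ∀ u v w, 0 ≤ u → 0 ≤ v → 0 ≤ w → u + v + w = 1 → 0 ≤ Ψ'' u + Ψ'' v + Ψ'' w

namespace IsSimplexPotential

variable {Ψ Ψ' Ψ'' : ℝ → ℝ}

/-- The right-hand side is the integral of `Ψ'' u + Ψ'' v + Ψ'' w` over the segment `u = c`,
`α ≤ v ≤ β` of the simplex; the polygons below are swept out by such segments. -/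
theorem segment_nonneg (h : IsSimplexPotential Ψ Ψ' Ψ'') {c α β : ℝ} (hc : 0 ≤ c) (hα : 0 ≤ α)
    (hαβ : α ≤ β) (hβ : β ≤ 1 - c) :
    0 ≤ (β - α) * Ψ'' c + (Ψ' β - Ψ' α) + (Ψ' (1 - c - α) - Ψ' (1 - c - β)) := by
  have := le_of_hasDerivAt_nonneg hαβ (g := fun v => v * Ψ'' c + Ψ' v - Ψ' (1 - c - v))
    (fun v _ => (((hasDerivAt_id v).mul_const (Ψ'' c)).add (h.hasDerivAt_deriv v)).sub
      ((h.hasDerivAt_deriv _).comp_const_sub (1 - c) v))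
    (fun v hv => by
      have := h.sum_nonneg c v (1 - c - v) hc (hα.trans hv.1) (by linarith [hv.2]) (by ring)
      linarith)
  linarith

theorem deriv_one_sub_two_mul_le (h : IsSimplexPotential Ψ Ψ' Ψ'') {a : ℝ} (h0 : 0 ≤ a)
    (h1 : a ≤ 1 / 2) : Ψ' (1 - 2 * a) ≤ 4 * Ψ' a := by
  have := le_of_hasDerivAt_nonneg h0 (g := fun t => 4 * Ψ' t - Ψ' (1 - 2 * t))
    (fun t _ => ((h.hasDerivAt_deriv t).const_mul 4).sub
      (hasDerivAt_comp_const_sub_mul (h.hasDerivAt_deriv _)))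
    (fun t ht => by
      have := h.sum_nonneg t t (1 - 2 * t) ht.1 ht.1 (by linarith [ht.2]) (by ring)
      linarith)
  simp only [mul_zero, sub_zero, h.deriv_zero, h.deriv_one] at this
  linarith

theorem monotoneOn_eight_mul_add (h : IsSimplexPotential Ψ Ψ' Ψ'') :
    MonotoneOn (fun t => 8 * Ψ t + Ψ (1 - 2 * t)) (Icc 0 (1 / 2)) := fun a ha b hb hab =>
  le_of_hasDerivAt_nonneg hab
    (fun t _ => ((h.hasDerivAt t).const_mul 8).add (hasDerivAt_comp_const_sub_mul (h.hasDerivAt _)))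
    (fun t ht => by linarith [h.deriv_one_sub_two_mul_le (ha.1.trans ht.1) (ht.2.trans hb.2)])

theorem one_le_eight_mul_add (h : IsSimplexPotential Ψ Ψ' Ψ'') {b : ℝ} (h0 : 0 ≤ b)
    (h1 : b ≤ 1 / 2) : Ψ 1 ≤ 8 * Ψ b + Ψ (1 - 2 * b) := by
  simpa [h.map_zero] using h.monotoneOn_eight_mul_add (by norm_num) ⟨h0, h1⟩ h0

/-- The increment over `[a, b]` is the integral over the trapezoid `a ≤ u ≤ b`. -/
theorem monotoneOn_trapezoid (h : IsSimplexPotential Ψ Ψ' Ψ'') :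
    MonotoneOn (fun c => (1 - c) * Ψ' c + Ψ c - 2 * Ψ (1 - c)) (Icc 0 1) := fun a ha b hb hab =>
  le_of_hasDerivAt_nonneg hab
    (fun c _ => ((((hasDerivAt_id c).const_sub 1).mul (h.hasDerivAt_deriv c)).add
      (h.hasDerivAt c)).sub (((h.hasDerivAt _).comp_const_sub 1 c).const_mul 2))
    (fun c hc => by
      have := h.segment_nonneg (α := 0) (β := 1 - c) (ha.1.trans hc.1) le_rfl
        (by linarith [hc.2, hb.2]) le_rfl
      simp only [sub_zero, sub_self, h.deriv_zero, id] at this ⊢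
      linarith)

theorem one_nonneg (h : IsSimplexPotential Ψ Ψ' Ψ'') : 0 ≤ Ψ 1 := by
  have := h.monotoneOn_trapezoid (left_mem_Icc.2 zero_le_one) (right_mem_Icc.2 zero_le_one)
    zero_le_one
  simp only [sub_zero, sub_self, h.deriv_zero, h.map_zero] at this
  linarith

/-- The difference of the two sides is an integral over the medial triangle `u, v, w ≤ 1 / 2`. -/
theorem two_mul_half_le (h : IsSimplexPotential Ψ Ψ' Ψ'') : 2 * Ψ (1 / 2) ≤ Ψ' (1 / 2) := by
  have := le_of_hasDerivAt_nonneg (by norm_num : (0 : ℝ) ≤ 1 / 2)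
    (g := fun c => c * Ψ' c - Ψ c + c * (2 * Ψ' (1 / 2)) + 2 * Ψ (1 / 2 - c))
    (fun c _ => ((((hasDerivAt_id c).mul (h.hasDerivAt_deriv c)).sub (h.hasDerivAt c)).add
      ((hasDerivAt_id c).mul_const (2 * Ψ' (1 / 2)))).add
      (((h.hasDerivAt _).comp_const_sub (1 / 2) c).const_mul 2))
    (fun c hc => by
      have := h.segment_nonneg (α := 1 / 2 - c) (β := 1 / 2) hc.1 (by linarith [hc.2])
        (by linarith [hc.1]) (by linarith [hc.2])
      rw [show 1 - c - (1 / 2 - c) = 1 / 2 by ring, show 1 - c - 1 / 2 = 1 / 2 - c by ring] at this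
      simp only [id]
      linarith)
  simp only [sub_zero, sub_self, h.deriv_zero, h.map_zero] at this
  linarith

theorem two_mul_one_sub_le (h : IsSimplexPotential Ψ Ψ' Ψ'') {b : ℝ} (h0 : 1 / 2 ≤ b)
    (h1 : b ≤ 1) : 2 * Ψ (1 - b) ≤ Ψ b + (1 - b) * Ψ' b := by
  have htrapezoid := h.monotoneOn_trapezoid ⟨by norm_num, by norm_num⟩ ⟨by linarith, h1⟩ h0
  have hmedial := h.two_mul_half_le
  simp only [show (1 : ℝ) - 1 / 2 = 1 / 2 by norm_num] at htrapezoid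
  linarith

/-- The right-hand side is an integral over the complement of the triangle `u, v, w ≥ b`. -/
theorem frame_nonneg (h : IsSimplexPotential Ψ Ψ' Ψ'') {b : ℝ} (h0 : 0 ≤ b) (h1 : b ≤ 1 / 3) :
    0 ≤ Ψ 1 - Ψ (1 - 2 * b) + Ψ b + (1 - 3 * b) * Ψ' b := by
  have := le_of_hasDerivAt_nonneg h0
    (g := fun c => (1 - b - c) * Ψ' c + Ψ c - Ψ (1 - c) - c * Ψ' b - Ψ (1 - b - c))
    (fun c _ => (((((hasDerivAt_id c).const_sub (1 - b)).mul (h.hasDerivAt_deriv c)).add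
      (h.hasDerivAt c)).sub ((h.hasDerivAt _).comp_const_sub 1 c)).sub
      ((hasDerivAt_id c).mul_const (Ψ' b)) |>.sub ((h.hasDerivAt _).comp_const_sub (1 - b) c))
    (fun c hc => by
      have := h.segment_nonneg (α := b) (β := 1 - c) hc.1 h0 (by linarith [hc.2]) le_rfl
      rw [show 1 - c - b = 1 - b - c by ring] at this
      simp only [id, sub_self, h.deriv_zero] at this ⊢
      linarith)
  simp only [sub_zero, h.deriv_zero, h.map_zero] at this
  rw [show 1 - b - b = 1 - 2 * b by ring] at this
  linarith

theorem continuous (h : IsSimplexPotential Ψ Ψ' Ψ'') : Continuous Ψ :=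
  continuous_iff_continuousAt.2 fun x => (h.hasDerivAt x).continuousAt

theorem nonneg_of_le_third (h : IsSimplexPotential Ψ Ψ' Ψ'') {x : ℝ}
    (hx : x ∈ Icc (0 : ℝ) (1 / 3)) : 0 ≤ Ψ x := by
  obtain ⟨b, hb, hmin⟩ := isCompact_Icc.exists_isMinOn ⟨x, hx⟩ h.continuous.continuousOn
  refine le_trans ?_ (hmin hx)
  rcases hb.1.eq_or_lt with rfl | hb0
  · exact h.map_zero.ge
  have hstationary : (1 - 3 * b) * Ψ' b = 0 := by
    rcases hb.2.eq_or_lt with rfl | hb1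
    · norm_num
    · rw [(hmin.isLocalMin (Icc_mem_nhds hb0 hb1)).hasDerivAt_eq_zero (h.hasDerivAt b), mul_zero]
  have hframe := h.frame_nonneg hb.1 hb.2
  have hdilate := h.one_le_eight_mul_add hb.1 (by linarith [hb.2])
  linarith

theorem four_mul_sub_one_le (h : IsSimplexPotential Ψ Ψ' Ψ'') {b : ℝ} (h0 : 1 / 3 ≤ b)
    (h1 : b ≤ 1 / 2) : Ψ (4 * b - 1) ≤ 8 * Ψ b := by
  have hmono := h.monotoneOn_eight_mul_add (a := 1 - 2 * b) (b := b)
    ⟨by linarith, by linarith⟩ ⟨by linarith, h1⟩ (by linarith)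
  have hnonneg := h.nonneg_of_le_third (x := 1 - 2 * b) ⟨by linarith, by linarith⟩
  simp only [show 1 - 2 * (1 - 2 * b) = 4 * b - 1 by ring] at hmono
  linarith

theorem nonneg (h : IsSimplexPotential Ψ Ψ' Ψ'') {x : ℝ} (hx : x ∈ Icc (0 : ℝ) 1) : 0 ≤ Ψ x := by
  rcases le_total x (1 / 3) with hx3 | hx3
  · exact h.nonneg_of_le_third ⟨hx.1, hx3⟩
  obtain ⟨b, hb, hmin⟩ := isCompact_Icc.exists_isMinOn ⟨x, hx3, hx.2⟩ h.continuous.continuousOn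
  have hle : ∀ t ∈ Icc (1 / 3 : ℝ) 1, Ψ b ≤ Ψ t := fun t ht => hmin ht
  have hdilate {t : ℝ} (h0 : 1 / 3 ≤ t) (h1 : t ≤ 1 / 2) : Ψ b ≤ 8 * Ψ t :=
    (hle _ ⟨by linarith, by linarith⟩).trans (h.four_mul_sub_one_le h0 h1)
  refine le_trans ?_ (hmin ⟨hx3, hx.2⟩)
  rcases le_or_gt b (1 / 2) with hb2 | hb2
  · linarith [hdilate hb.1 hb2]
  rcases hb.2.eq_or_lt with rfl | hb1
  · exact h.one_nonneg
  have hstationary : Ψ' b = 0 :=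
    (hmin.isLocalMin (Icc_mem_nhds (by linarith) hb1)).hasDerivAt_eq_zero (h.hasDerivAt b)
  have hreflect : 2 * Ψ (1 - b) ≤ Ψ b := by
    simpa [hstationary] using h.two_mul_one_sub_le hb2.le hb1.le
  rcases le_total (1 - b) (1 / 3) with hb3 | hb3
  · linarith [h.nonneg_of_le_third ⟨by linarith, hb3⟩]
  · linarith [hdilate hb3 (by linarith)]

theorem of_continuous (hcont : Continuous Ψ'') (hint : ∫ u in (0 : ℝ)..1, Ψ'' u = 0)
    (hsum : ∀ u v w, 0 ≤ u → 0 ≤ v → 0 ≤ w → u + v + w = 1 → 0 ≤ Ψ'' u + Ψ'' v + Ψ'' w) :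
    IsSimplexPotential (fun x => ∫ t in (0 : ℝ)..x, ∫ u in (0 : ℝ)..t, Ψ'' u)
      (fun x => ∫ u in (0 : ℝ)..x, Ψ'' u) Ψ'' where
  hasDerivAt x := ((continuous_primitive (fun _ _ => hcont.intervalIntegrable _ _)
    0).integral_hasStrictDerivAt 0 x).hasDerivAt
  hasDerivAt_deriv x := (hcont.integral_hasStrictDerivAt 0 x).hasDerivAt
  map_zero := integral_same
  deriv_zero := integral_same
  deriv_one := hint
  sum_nonneg := hsum

theorem integral_mul_nonneg (h : IsSimplexPotential Ψ Ψ' Ψ'') (hcont : Continuous Ψ'')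
    {f : ℝ → ℝ} (hmono : MonotoneOn f (Icc 0 1)) (hconv : ConvexOn ℝ (Icc 0 1) f) :
    0 ≤ ∫ x in (0 : ℝ)..1, Ψ'' (1 - x) * f x :=
  integral_deriv_deriv_mul_nonneg (Θ := fun x => Ψ (1 - x)) (Θ' := fun x => -Ψ' (1 - x))
    zero_le_one hmono hconv (fun x _ => (h.hasDerivAt _).comp_const_sub 1 x)
    (fun x _ => (((h.hasDerivAt_deriv _).comp_const_sub 1 x).neg).congr_deriv (neg_neg _))
    (by fun_prop) (by simp [h.deriv_one]) (by simp [h.deriv_zero]) (by simp [h.map_zero])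
    fun x hx => h.nonneg ⟨by linarith [hx.2], by linarith [hx.1]⟩

end IsSimplexPotential

section TestFunctions

variable {f φ : ℝ → ℝ}

theorem integral_mul_nonneg_of_integral_eq_zero (hmono : MonotoneOn f (Icc 0 1))
    (hconv : ConvexOn ℝ (Icc 0 1) f) (hφ : Continuous φ)
    (hsum : ∀ p ∈ triangleΔ, 0 ≤ φ p.1 + φ p.2.1 + φ p.2.2)
    (hφ0 : ∫ x in (0 : ℝ)..1, φ x = 0) : 0 ≤ ∫ x in (0 : ℝ)..1, φ x * f x := by
  have hpot := IsSimplexPotential.of_continuous (Ψ'' := fun u => φ (1 - u)) (by fun_prop)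
    (by simpa [integral_comp_sub_left] using hφ0)
    (fun u v w hu hv hw huvw => hsum (1 - u, 1 - v, 1 - w)
      ⟨⟨by linarith, by linarith⟩, ⟨by linarith, by linarith⟩, ⟨by linarith, by linarith⟩,
        by linarith⟩)
  simpa only [sub_sub_cancel] using hpot.integral_mul_nonneg (by fun_prop) hmono hconv

theorem integral_mul_nonneg_of_sum_nonneg (hmono : MonotoneOn f (Icc 0 1))
    (hconv : ConvexOn ℝ (Icc 0 1) f) (hint : ∫ t in (0 : ℝ)..1, (t - 2 / 3) * f t = 0)
    (hφ : Continuous φ) (hsum : ∀ p ∈ triangleΔ, 0 ≤ φ p.1 + φ p.2.1 + φ p.2.2) :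
    0 ≤ ∫ x in (0 : ℝ)..1, φ x * f x := by
  set k : ℝ := 6 * ∫ x in (0 : ℝ)..1, φ x with hk
  have hfint : IntervalIntegrable f volume 0 1 :=
    MonotoneOn.intervalIntegrable (by rwa [uIcc_of_le zero_le_one])
  have hlinear : ∫ x in (0 : ℝ)..1, (x - 2 / 3) = -(1 / 6) := by
    rw [intervalIntegral.integral_sub intervalIntegrable_id intervalIntegrable_const, integral_id,
      intervalIntegral.integral_const]
    norm_num
  have hzero : ∫ x in (0 : ℝ)..1, (φ x + k * (x - 2 / 3)) = 0 := by
    rw [intervalIntegral.integral_add (hφ.intervalIntegrable _ _)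
      (Continuous.intervalIntegrable (by fun_prop) _ _), intervalIntegral.integral_const_mul,
      hlinear, hk]
    ring
  have hnonneg := integral_mul_nonneg_of_integral_eq_zero hmono hconv
    (φ := fun x => φ x + k * (x - 2 / 3)) (by fun_prop)
    (fun p hp => by linarith [hsum p hp, congrArg (k * ·) hp.2.2.2]) hzero
  have hsplit :
      ∫ x in (0 : ℝ)..1, (φ x + k * (x - 2 / 3)) * f x = ∫ x in (0 : ℝ)..1, φ x * f x := by
    simp only [add_mul, mul_assoc]
    rw [intervalIntegral.integral_add (hfint.continuousOn_mul hφ.continuousOn)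
      ((hfint.continuousOn_mul (by fun_prop)).const_mul k), intervalIntegral.integral_const_mul,
      hint, mul_zero, add_zero]
  rwa [hsplit] at hnonneg

end TestFunctions

theorem mul_sub_secant_nonneg {f : ℝ → ℝ} {s : Set ℝ} (hf : ConvexOn ℝ s f) {a c x : ℝ}
    (ha : a ∈ s) (hc : c ∈ s) (hx : x ∈ s) (hac : a < c) (hax : a ≤ x) :
    0 ≤ (x - c) * (f x - (f a + (f c - f a) / (c - a) * (x - a))) := by
  rcases hax.eq_or_lt with rfl | hax
  · simp
  have hfactor : f x - (f a + (f c - f a) / (c - a) * (x - a)) =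
      (x - a) * ((f x - f a) / (x - a) - (f c - f a) / (c - a)) := by
    have := sub_pos.2 hax
    field_simp
    ring
  have hslope : 0 ≤ (x - c) * ((f x - f a) / (x - a) - (f c - f a) / (c - a)) := by
    rcases le_total x c with hxc | hxc
    · exact mul_nonneg_of_nonpos_of_nonpos (sub_nonpos.2 hxc)
        (sub_nonpos.2 (hf.secant_mono ha hx hc hax.ne' hac.ne' hxc))
    · exact mul_nonneg (sub_nonneg.2 hxc)
        (sub_nonneg.2 (hf.secant_mono ha hc hx hac.ne' hax.ne' hxc))
  rw [hfactor, mul_left_comm]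
  exact mul_nonneg (sub_nonneg.2 hax.le) hslope

theorem nonneg_of_integral_eq_zero {f : ℝ → ℝ} (hmono : MonotoneOn f (Icc 0 1))
    (hconv : ConvexOn ℝ (Icc 0 1) f) (hint : ∫ t in (0 : ℝ)..1, (t - 2 / 3) * f t = 0) {x : ℝ}
    (hx : x ∈ Icc (0 : ℝ) 1) : 0 ≤ f x := by
  have h0 : (0 : ℝ) ∈ Icc (0 : ℝ) 1 := left_mem_Icc.2 zero_le_one
  refine le_trans ?_ (hmono h0 hx hx.1)
  set p : ℝ := (f (2 / 3) - f 0) / (2 / 3 - 0)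
  have hfint : IntervalIntegrable f volume 0 1 :=
    MonotoneOn.intervalIntegrable (by rwa [uIcc_of_le zero_le_one])
  have hsecant : ∫ t in (0 : ℝ)..1, (t - 2 / 3) * (f 0 + p * (t - 0)) = -(f 0 / 6) := by
    have hexpand (t : ℝ) : (t - 2 / 3) * (f 0 + p * (t - 0)) =
        p * t ^ 2 + (f 0 - 2 / 3 * p) * t - 2 / 3 * f 0 := by ring
    simp only [hexpand]
    rw [intervalIntegral.integral_sub, intervalIntegral.integral_add] <;>
      try exact Continuous.intervalIntegrable (by fun_prop) _ _
    rw [intervalIntegral.integral_const_mul, intervalIntegral.integral_const_mul, integral_pow,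
      integral_id, intervalIntegral.integral_const]
    norm_num
    ring
  have hnonneg : 0 ≤ ∫ t in (0 : ℝ)..1, (t - 2 / 3) * (f t - (f 0 + p * (t - 0))) :=
    integral_nonneg zero_le_one fun t ht =>
      mul_sub_secant_nonneg hconv h0 ⟨by norm_num, by norm_num⟩ ht (by norm_num) ht.1
  simp only [mul_sub (_ - (2 / 3 : ℝ)) (f _)] at hnonneg
  rw [intervalIntegral.integral_sub (hfint.continuousOn_mul (by fun_prop))
    (Continuous.intervalIntegrable (by fun_prop) _ _), hint, hsecant] at hnonneg
  linarith

section Duality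

open scoped BoundedContinuousFunction

theorem exists_nonneg_comp_eq_of_nonneg {X V : Type*} [TopologicalSpace X] [CompactSpace X]
    [AddCommGroup V] [Module ℝ V] (T : V →ₗ[ℝ] C(X, ℝ)) (L : V →ₗ[ℝ] ℝ)
    (hL : ∀ v, 0 ≤ T v → 0 ≤ L v) {e : V} (he : T e = 1) :
    ∃ g : C(X, ℝ) →ₗ[ℝ] ℝ, (∀ φ, 0 ≤ φ → 0 ≤ g φ) ∧ ∀ v, g (T v) = L v := by
  have hker : LinearMap.ker T ≤ LinearMap.ker L := fun v hv => by
    rw [LinearMap.mem_ker] at hv ⊢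
    have hneg : 0 ≤ L (-v) := hL (-v) (by simp [hv])
    rw [map_neg] at hneg
    linarith [hL v hv.ge]
  obtain ⟨g₀, hg₀⟩ : L ∈ LinearMap.range T.dualMap := by
    rw [LinearMap.range_dualMap_eq_dualAnnihilator_ker, Submodule.mem_dualAnnihilator]
    exact fun v hv => hker hv
  obtain ⟨g, hgT, hg⟩ := riesz_extension (PointedCone.positive ℝ C(X, ℝ))
    ⟨LinearMap.range T, g₀.domRestrict _⟩
    (by
      rintro ⟨_, v, rfl⟩ hv
      exact (hL v ((PointedCone.mem_positive _ _).1 hv)).trans_eq (LinearMap.congr_fun hg₀ v).symm)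
    (fun φ => by
      refine ⟨⟨T (‖φ‖ • e), LinearMap.mem_range_self _ _⟩, ?_⟩
      rw [PointedCone.mem_positive, ContinuousMap.le_def]
      intro x
      have := neg_le_of_abs_le (φ.norm_coe_le_norm x)
      simp only [map_smul, he, ContinuousMap.add_apply, ContinuousMap.smul_apply,
        ContinuousMap.one_apply, ContinuousMap.zero_apply, smul_eq_mul]
      linarith)
  exact ⟨g, fun φ hφ => hg φ ((PointedCone.mem_positive _ _).2 hφ), fun v =>
    (hgT ⟨T v, LinearMap.mem_range_self _ _⟩).trans (LinearMap.congr_fun hg₀ v)⟩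

theorem exists_measure_integral_eq {X : Type*} [TopologicalSpace X] [T2Space X] [CompactSpace X]
    [MeasurableSpace X] [BorelSpace X] (g : C(X, ℝ) →ₗ[ℝ] ℝ) (hg : ∀ φ, 0 ≤ φ → 0 ≤ g φ) :
    ∃ μ : Measure X, IsFiniteMeasure μ ∧ ∀ φ : C(X, ℝ), ∫ x, φ x ∂μ = g φ := by
  let Λ : CompactlySupportedContinuousMap X ℝ →ₚ[ℝ] ℝ := PositiveLinearMap.mk₀
    { toFun := fun φ => g φ.toContinuousMap
      map_add' := fun φ χ => g.map_add φ.toContinuousMap χ.toContinuousMap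
      map_smul' := fun c φ => g.map_smul c φ.toContinuousMap }
    (fun φ hφ => hg _ hφ)
  exact ⟨RealRMK.rieszMeasure Λ, inferInstance, fun φ => RealRMK.integral_rieszMeasure Λ
    { toContinuousMap := φ, hasCompactSupport' := HasCompactSupport.of_compactSpace _ }⟩

theorem exists_measure_forall_map_eq {X ι : Type*} [TopologicalSpace X] [T2Space X]
    [CompactSpace X] [MeasurableSpace X] [BorelSpace X] [Fintype ι] {Y : ι → Type*}
    [∀ i, TopologicalSpace (Y i)] [∀ i, MeasurableSpace (Y i)] [∀ i, BorelSpace (Y i)]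
    [∀ i, HasOuterApproxClosed (Y i)] (π : ∀ i, C(X, Y i)) (ν : ∀ i, Measure (Y i))
    [∀ i, IsFiniteMeasure (ν i)]
    (h : ∀ φ : ∀ i, Y i →ᵇ ℝ, (∀ x, 0 ≤ ∑ i, φ i (π i x)) → 0 ≤ ∑ i, ∫ y, φ i y ∂ν i) :
    ∃ μ : Measure X, IsFiniteMeasure μ ∧ ∀ i, μ.map (π i) = ν i := by
  classical
  rcases isEmpty_or_nonempty ι with _ | ⟨⟨i₀⟩⟩
  · exact ⟨0, inferInstance, isEmptyElim⟩
  let T : (∀ i, Y i →ᵇ ℝ) →ₗ[ℝ] C(X, ℝ) :=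
    { toFun := fun φ => ∑ i, (φ i).toContinuousMap.comp (π i)
      map_add' := fun φ χ => by ext x; simp [Finset.sum_add_distrib]
      map_smul' := fun c φ => by ext x; simp [Finset.mul_sum] }
  let L : (∀ i, Y i →ᵇ ℝ) →ₗ[ℝ] ℝ :=
    { toFun := fun φ => ∑ i, ∫ y, φ i y ∂ν i
      map_add' := fun φ χ => by
        simp [MeasureTheory.integral_add ((φ _).integrable _) ((χ _).integrable _),
          Finset.sum_add_distrib]
      map_smul' := fun c φ => by simp [MeasureTheory.integral_const_mul, Finset.mul_sum] }
  have hTsingle (i : ι) (g : Y i →ᵇ ℝ) (x : X) : T (Pi.single i g) x = g (π i x) := by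
    simp only [T, LinearMap.coe_mk, AddHom.coe_mk, ContinuousMap.sum_apply]
    rw [Finset.sum_eq_single i (fun j _ hj => by simp [Pi.single_eq_of_ne hj]) (by simp)]
    simp
  have hLsingle (i : ι) (g : Y i →ᵇ ℝ) : L (Pi.single i g) = ∫ y, g y ∂ν i := by
    simp only [L, LinearMap.coe_mk, AddHom.coe_mk]
    rw [Finset.sum_eq_single i (fun j _ hj => by simp [Pi.single_eq_of_ne hj]) (by simp)]
    simp
  obtain ⟨g, hg, hgT⟩ := exists_nonneg_comp_eq_of_nonneg T L
    (fun φ hφ => h φ fun x => by simpa [T] using hφ x)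
    (e := Pi.single i₀ 1) (by ext x; simp [hTsingle])
  obtain ⟨μ, hμ, hμg⟩ := exists_measure_integral_eq g hg
  refine ⟨μ, hμ, fun i => ext_of_forall_integral_eq_of_IsFiniteMeasure fun φ => ?_⟩
  rw [integral_map (π i).continuous.aemeasurable φ.continuous.aestronglyMeasurable, ← hLsingle,
    ← hgT, ← hμg]
  simp only [hTsingle]

theorem isCompact_triangleΔ : IsCompact triangleΔ := by
  refine (isCompact_Icc.prod (isCompact_Icc.prod isCompact_Icc) :
    IsCompact (Icc (0 : ℝ) 1 ×ˢ Icc (0 : ℝ) 1 ×ˢ Icc (0 : ℝ) 1)).of_isClosed_subset ?_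
    fun p hp => ⟨hp.1, hp.2.1, hp.2.2.1⟩
  exact (isClosed_Icc.preimage (by fun_prop)).inter ((isClosed_Icc.preimage (by fun_prop)).inter
    ((isClosed_Icc.preimage (by fun_prop)).inter (isClosed_eq (by fun_prop) (by fun_prop))))

theorem exists_measure_triangleΔ_of_integral_nonneg {ν : Measure ℝ} [IsFiniteMeasure ν]
    (h : ∀ φ : ℝ →ᵇ ℝ, (∀ p ∈ triangleΔ, 0 ≤ φ p.1 + φ p.2.1 + φ p.2.2) → 0 ≤ ∫ x, φ x ∂ν) :
    ∃ μ : Measure (ℝ × ℝ × ℝ), IsFiniteMeasure μ ∧ μ triangleΔ = μ univ ∧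
      μ.map (fun p => p.1) = ν ∧ μ.map (fun p => p.2.1) = ν ∧ μ.map (fun p => p.2.2) = ν := by
  have : CompactSpace triangleΔ := isCompact_iff_compactSpace.1 isCompact_triangleΔ
  let π : Fin 3 → C(triangleΔ, ℝ) :=
    ![⟨fun p => p.1.1, by fun_prop⟩, ⟨fun p => p.1.2.1, by fun_prop⟩,
      ⟨fun p => p.1.2.2, by fun_prop⟩]
  obtain ⟨μ, hμ, hmap⟩ := exists_measure_forall_map_eq π (fun _ => ν) fun φ hφ => by
    have hcyclic : ∀ p ∈ triangleΔ, 0 ≤ (∑ i, φ i) p.1 + (∑ i, φ i) p.2.1 + (∑ i, φ i) p.2.2 := by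
      rintro ⟨x, y, z⟩ ⟨hx, hy, hz, hxyz⟩
      have hxyz := hφ ⟨(x, y, z), hx, hy, hz, hxyz⟩
      have hyzx := hφ ⟨(y, z, x), hy, hz, hx, by simp only at hxyz ⊢; linarith⟩
      have hzxy := hφ ⟨(z, x, y), hz, hx, hy, by simp only at hxyz ⊢; linarith⟩
      simp only [Fin.sum_univ_three, Fin.isValue, Matrix.cons_val_zero, ContinuousMap.coe_mk,
        Matrix.cons_val_one, Matrix.cons_val, BoundedContinuousFunction.coe_add, Pi.add_apply,
        π] at hxyz hyzx hzxy ⊢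
      linarith
    have := h (∑ i, φ i) hcyclic
    simpa [MeasureTheory.integral_finsetSum _ fun i _ => (φ i).integrable ν] using this
  refine ⟨μ.map Subtype.val, inferInstance, ?_, ?_, ?_, ?_⟩
  · rw [Measure.map_apply measurable_subtype_coe isCompact_triangleΔ.measurableSet,
      Measure.map_apply measurable_subtype_coe MeasurableSet.univ, Subtype.coe_preimage_self,
      preimage_univ]
  all_goals rw [Measure.map_map (by fun_prop) measurable_subtype_coe]
  exacts [hmap 0, hmap 1, hmap 2]

end Duality

theorem integral_withDensity_ofReal {f φ : ℝ → ℝ} {a b : ℝ} (hab : a ≤ b)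
    (hf : AEMeasurable f (volume.restrict (Icc a b))) (hf0 : ∀ x ∈ Icc a b, 0 ≤ f x) :
    ∫ x, φ x ∂(volume.restrict (Icc a b)).withDensity (fun x => ENNReal.ofReal (f x)) =
      ∫ x in a..b, φ x * f x := by
  rw [integral_withDensity_eq_integral_toReal_smul₀ hf.ennreal_ofReal (by simp),
    integral_of_le hab, ← integral_Icc_eq_integral_Ioc]
  refine setIntegral_congr_fun measurableSet_Icc fun x hx => ?_
  simp only [ENNReal.toReal_ofReal (hf0 x hx), smul_eq_mul, mul_comm]

theorem exists_measure_on_triangle_general (f : ℝ → ℝ) (hmono : MonotoneOn f (Icc 0 1))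
    (hconv : ConvexOn ℝ (Icc 0 1) f) (hint : ∫ t in (0 : ℝ)..1, (t - 2 / 3) * f t = 0) :
    ∃ μ : Measure (ℝ × ℝ × ℝ), IsFiniteMeasure μ ∧ μ triangleΔ = μ univ ∧
      μ.map (fun p => p.1) =
        (volume.restrict (Icc 0 1)).withDensity (fun x => ENNReal.ofReal (f x)) ∧
      μ.map (fun p => p.2.1) =
        (volume.restrict (Icc 0 1)).withDensity (fun x => ENNReal.ofReal (f x)) ∧
      μ.map (fun p => p.2.2) =
        (volume.restrict (Icc 0 1)).withDensity (fun x => ENNReal.ofReal (f x)) := by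
  have hfint : IntegrableOn f (Icc 0 1) := hmono.integrableOn_isCompact isCompact_Icc
  have := isFiniteMeasure_withDensity_ofReal hfint.2
  refine exists_measure_triangleΔ_of_integral_nonneg fun φ hφ => ?_
  rw [integral_withDensity_ofReal zero_le_one hfint.aemeasurable
    fun x hx => nonneg_of_integral_eq_zero hmono hconv hint hx]
  exact integral_mul_nonneg_of_sum_nonneg hmono hconv hint φ.continuous hφ

/-- For every continuously differentiable, nondecreasing, convex `f : [0,1] → ℝ` with
`∫₀¹ (t − 2/3) f(t) dt = 0`, there exists a measure on the triangle `Δ` whose three coordinate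
projections all have density `f` with respect to Lebesgue measure on `[0,1]`. -/
theorem exists_measure_on_triangle (f f' : ℝ → ℝ)
    (hderiv : ∀ x ∈ Set.Icc (0 : ℝ) 1, HasDerivWithinAt f (f' x) (Set.Icc (0 : ℝ) 1) x)
    (hf'cont : ContinuousOn f' (Set.Icc (0 : ℝ) 1))
    (hmono : MonotoneOn f (Set.Icc (0 : ℝ) 1))
    (hconv : ConvexOn ℝ (Set.Icc (0 : ℝ) 1) f)
    (hint : (∫ t in (0 : ℝ)..1, (t - 2/3) * f t) = 0) :
    ∃ μ : Measure (ℝ × ℝ × ℝ), IsFiniteMeasure μ ∧ μ triangleΔ = μ Set.univ ∧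
      μ.map (fun p => p.1) =
        (volume.restrict (Set.Icc (0 : ℝ) 1)).withDensity (fun x => ENNReal.ofReal (f x)) ∧
      μ.map (fun p => p.2.1) =
        (volume.restrict (Set.Icc (0 : ℝ) 1)).withDensity (fun x => ENNReal.ofReal (f x)) ∧
      μ.map (fun p => p.2.2) =
        (volume.restrict (Set.Icc (0 : ℝ) 1)).withDensity (fun x => ENNReal.ofReal (f x)) :=
  exists_measure_on_triangle_general f hmono hconv hint
end

section
/- Let l ∈ (0, 1/4) satisfy 9l + log(1−2l) − log l = 3, let r = 1 − 2l, and let M be as defined. Then there exists a probability measure π on ℝ³ with π(M) = 1 whose pushforwards under the three coordinate projections all equal Lebesgue measure on [0,1]. -/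
open Set MeasureTheory

/-- The set `M ⊆ [0,1]³`: the union of the three segments
`Mx = {(t, 1−2t, 1−2t) : 0 ≤ t ≤ l}`, `My = {(1−2t, t, 1−2t) : 0 ≤ t ≤ l}`,
`Mz = {(1−2t, 1−2t, t) : 0 ≤ t ≤ l}` and the two-dimensional piece
`M₂ = {(x,y,z) : l ≤ x,y,z ≤ 1−2l, xyz = l(1−2l)²}`. -/
def Mset (l : ℝ) : Set (ℝ × ℝ × ℝ) :=
  {p | ∃ t, 0 ≤ t ∧ t ≤ l ∧
    (p = (t, 1 - 2*t, 1 - 2*t) ∨ p = (1 - 2*t, t, 1 - 2*t) ∨ p = (1 - 2*t, 1 - 2*t, t))} ∪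
  {p | l ≤ p.1 ∧ p.1 ≤ 1 - 2*l ∧ l ≤ p.2.1 ∧ p.2.1 ≤ 1 - 2*l ∧ l ≤ p.2.2 ∧ p.2.2 ≤ 1 - 2*l ∧
    p.1 * p.2.1 * p.2.2 = l * (1 - 2*l)^2}

/-!
The map `t ↦ (t, 1 - 2t, 1 - 2t)` carries Lebesgue measure on `[0, l]` to a measure on a segment
whose three marginals sum to Lebesgue measure on `[0, l] ∪ [1 - 2l, 1]`. To cover `[l, 1 - 2l]`, put
`c = 3 - 9l`; the equation for `l` says `l = (1 - 2l) e⁻ᶜ`, so the substitution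
`x = (1 - 2l) e⁻ᶜˢ` in each coordinate turns the surface `M₂` into the simplex `a + b + d = 1`,
and one needs a measure on the simplex whose marginals sum to the density
`f s = c (1 - 2l) e⁻ᶜˢ`. Since `a + b + d = 1`, such a measure can only exist if the probability
density proportional to `f` has mean `1/3`, and this is again the equation for `l`.

In the coordinates `a = 1 - u`, `b = u θ`, `d = u (1 - θ)`, take the density `k u + m θ` with `k`
and `m` invariant under `t ↦ 1 - t`. The marginals of `b` and `d` then agree, and the three
marginals sum to the density `∫₀¹ m + k s + 2 ∫ₛ¹ (k θ + m θ) / θ dθ`. Explicit `k` and `m` make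
this equal to `f`, and both are nonnegative for this `f`. Finally, summing over the cyclic
permutations of the coordinates, which preserve `M`, makes each marginal the sum of the three.
-/

/-- The weight of the segments `{a = 1 - u}` in a measure on the simplex `a + b + d = 1` whose three
marginals are to sum to a density with derivative `-h`. -/
noncomputable def radialWeight (h : ℝ → ℝ) (u : ℝ) : ℝ :=
  ∫ v in u..1, (v * h v - (1 - v) * h (1 - v))

/-- The companion weight of the segments `{b / (b + d) = θ}` of the simplex, chosen such that
`radialWeight h θ + angularWeight h θ` is divisible by `θ (1 - θ)`. -/
noncomputable def angularWeight (h : ℝ → ℝ) (θ : ℝ) : ℝ :=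
  θ * (1 - θ) * (h θ + h (1 - θ)) / 2 - radialWeight h θ

section Weights

variable {h f : ℝ → ℝ}

lemma radialWeight_one (h : ℝ → ℝ) : radialWeight h 1 = 0 :=
  intervalIntegral.integral_same

lemma hasDerivAt_radialWeight (hh : Continuous h) (u : ℝ) :
    HasDerivAt (radialWeight h) ((1 - u) * h (1 - u) - u * h u) u := by
  have hcont : Continuous fun v => v * h v - (1 - v) * h (1 - v) := by fun_prop
  refine (intervalIntegral.integral_hasDerivAt_left (hcont.intervalIntegrable _ _)
    (hcont.stronglyMeasurableAtFilter _ _) hcont.continuousAt).congr_deriv ?_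
  ring

lemma continuous_radialWeight (hh : Continuous h) : Continuous (radialWeight h) :=
  continuous_iff_continuousAt.2 fun u => (hasDerivAt_radialWeight hh u).continuousAt

lemma continuous_angularWeight (hh : Continuous h) : Continuous (angularWeight h) := by
  have := continuous_radialWeight hh
  unfold angularWeight
  fun_prop

lemma radialWeight_one_sub (hh : Continuous h) (u : ℝ) :
    radialWeight h (1 - u) = radialWeight h u := by
  have hderiv (x : ℝ) :
      HasDerivAt (fun y => radialWeight h (1 - y) - radialWeight h y) 0 x := by
    refine (((hasDerivAt_radialWeight hh (1 - x)).comp x ((hasDerivAt_id' x).const_sub 1)).sub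
      (hasDerivAt_radialWeight hh x)).congr_deriv ?_
    rw [sub_sub_cancel]
    ring
  have hconst := is_const_of_deriv_eq_zero (fun x => (hderiv x).differentiableAt)
    (fun x => (hderiv x).deriv) u (1 / 2)
  rw [show (1 : ℝ) - 1 / 2 = 1 / 2 by norm_num, sub_self] at hconst
  exact sub_eq_zero.1 hconst

lemma angularWeight_one_sub (hh : Continuous h) (θ : ℝ) :
    angularWeight h (1 - θ) = angularWeight h θ := by
  rw [angularWeight, angularWeight, radialWeight_one_sub hh, sub_sub_cancel]
  ring

lemma integral_angularWeight (hh : Continuous h) (hf : ∀ x, HasDerivAt f (-h x) x) :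
    ∫ θ in (0 : ℝ)..1, angularWeight h θ = f 1 + 2 * ∫ t in (0 : ℝ)..1, (1 - 3 * t) * f t := by
  have hfc : Continuous f := continuous_iff_continuousAt.2 fun x => (hf x).continuousAt
  have hderiv (t : ℝ) : HasDerivAt
      (fun t => -(t * radialWeight h t) - (2 * t - 3 * t ^ 2) * f t)
      (angularWeight h t - 2 * ((1 - 3 * t) * f t)
        - 3 / 2 * (t * (1 - t) * (h (1 - t) - h t))) t := by
    have ht := hasDerivAt_id' t
    refine ((ht.mul (hasDerivAt_radialWeight hh t)).neg.sub
      (((ht.const_mul 2).sub ((ht.pow 2).const_mul 3)).mul (hf t))).congr_deriv ?_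
    simp only [angularWeight, Pi.sub_apply, Pi.pow_apply]
    push_cast
    ring
  have hodd : ∫ t in (0 : ℝ)..1, t * (1 - t) * (h (1 - t) - h t) = 0 := by
    have hreflect := intervalIntegral.integral_comp_sub_left (a := 0) (b := 1)
      (fun t => t * (1 - t) * (h (1 - t) - h t)) 1
    have hneg : ∀ t : ℝ, (1 - t) * (1 - (1 - t)) * (h (1 - (1 - t)) - h (1 - t))
        = -(t * (1 - t) * (h (1 - t) - h t)) := fun t => by rw [sub_sub_cancel]; ring
    simp only [hneg, intervalIntegral.integral_neg, sub_self, sub_zero] at hreflect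
    linarith
  have hftc := intervalIntegral.integral_eq_sub_of_hasDerivAt (fun t _ => hderiv t)
    (Continuous.intervalIntegrable (by have := continuous_angularWeight hh; fun_prop) 0 1)
  rw [intervalIntegral.integral_sub, intervalIntegral.integral_sub,
    intervalIntegral.integral_const_mul, intervalIntegral.integral_const_mul, hodd,
    radialWeight_one] at hftc
  · linarith
  all_goals
    exact Continuous.intervalIntegrable (by have := continuous_angularWeight hh; fun_prop) _ _

/-- Along a segment, `θ⁻¹ * (radialWeight h θ + angularWeight h θ)` has no singularity at `0`. -/
lemma radialWeight_add_integral (hh : Continuous h) (hf : ∀ x, HasDerivAt f (-h x) x) {s : ℝ}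
    (h0 : 0 < s) (h1 : s ≤ 1) :
    radialWeight h s + 2 * ∫ θ in s..1, θ⁻¹ * (radialWeight h θ + angularWeight h θ)
      = f s - f 1 := by
  have hcancel : ∫ θ in s..1, θ⁻¹ * (radialWeight h θ + angularWeight h θ)
      = ∫ θ in s..1, (1 - θ) * (h θ + h (1 - θ)) / 2 := by
    refine intervalIntegral.integral_congr fun θ hθ => ?_
    rw [uIcc_of_le h1] at hθ
    have : θ ≠ 0 := (h0.trans_le hθ.1).ne'
    simp only [angularWeight]
    field_simp
    ring
  have hftc := intervalIntegral.integral_eq_sub_of_hasDerivAt (fun t _ => hf t)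
    ((by fun_prop : Continuous fun x => -h x).intervalIntegrable s 1)
  rw [hcancel, radialWeight, ← intervalIntegral.integral_const_mul,
    ← intervalIntegral.integral_add (Continuous.intervalIntegrable (by fun_prop) _ _)
      (Continuous.intervalIntegrable (by fun_prop) _ _), ← neg_sub (f 1), ← hftc,
    ← intervalIntegral.integral_neg]
  congr 1 with θ
  ring

end Weights

lemma min_le_of_quasiconcaveOn_deriv {f f' : ℝ → ℝ} {a b x : ℝ}
    (hf : ∀ y ∈ Icc a b, HasDerivAt f (f' y) y) (hf' : QuasiconcaveOn ℝ (Icc a b) f')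
    (ha : 0 ≤ f' a) (hx : x ∈ Icc a b) : min (f a) (f b) ≤ f x := by
  have hab : a ≤ b := hx.1.trans hx.2
  have hnonneg {y z : ℝ} (hz : z ∈ Icc a b) (hfz : 0 ≤ f' z) (hy : y ∈ Icc a z) : 0 ≤ f' y :=
    ((hf' 0).ordConnected.out ⟨left_mem_Icc.2 hab, ha⟩ ⟨hz, hfz⟩ hy).2
  rcases le_or_gt 0 (f' x) with hfx | hfx
  · have hsub : Icc a x ⊆ Icc a b := Icc_subset_Icc_right hx.2
    have hmono : MonotoneOn f (Icc a x) := monotoneOn_of_hasDerivWithinAt_nonneg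
      (convex_Icc a x) (fun y hy => (hf y (hsub hy)).continuousAt.continuousWithinAt)
      (fun y hy => (hf y (hsub (interior_subset hy))).hasDerivWithinAt)
      (fun y hy => hnonneg hx hfx (interior_subset hy))
    exact min_le_of_left_le (hmono (left_mem_Icc.2 hx.1) (right_mem_Icc.2 hx.1) hx.1)
  · have hsub : Icc x b ⊆ Icc a b := Icc_subset_Icc_left hx.1
    have hnonpos : ∀ y ∈ Icc x b, f' y ≤ 0 := fun y hy => by
      by_contra! hfy
      exact hfx.not_ge (hnonneg (hsub hy) hfy.le ⟨hx.1, hy.1⟩)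
    have hanti : AntitoneOn f (Icc x b) := antitoneOn_of_hasDerivWithinAt_nonpos
      (convex_Icc x b) (fun y hy => (hf y (hsub hy)).continuousAt.continuousWithinAt)
      (fun y hy => (hf y (hsub (interior_subset hy))).hasDerivWithinAt)
      (fun y hy => hnonpos y (interior_subset hy))
    exact min_le_of_right_le (hanti (left_mem_Icc.2 hx.2) (right_mem_Icc.2 hx.2) hx.2)

/-- The curve `s ↦ r e^{-cs}`, carrying `[0, 1]` to `[r e^{-c}, r]`; coordinatewise, it carries the
simplex `a + b + d = 1` into the surface `x y z = r³ e^{-c}`. -/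
noncomputable def expCurve (r c s : ℝ) : ℝ := r * Real.exp (-(c * s))

section ExpCurve

variable {r c : ℝ}

@[fun_prop]
lemma continuous_expCurve (r c : ℝ) : Continuous (expCurve r c) := by
  unfold expCurve; fun_prop

lemma hasDerivAt_expCurve (r c s : ℝ) :
    HasDerivAt (expCurve r c) (-(c * expCurve r c s)) s := by
  refine (((hasDerivAt_id' s).const_mul c).neg.exp.const_mul r).congr_deriv ?_
  simp only [expCurve, Pi.neg_apply]
  ring

lemma expCurve_pos (hr : 0 < r) (c s : ℝ) : 0 < expCurve r c s :=
  mul_pos hr (Real.exp_pos _)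

lemma expCurve_zero (r c : ℝ) : expCurve r c 0 = r := by simp [expCurve]

lemma expCurve_one (r c : ℝ) : expCurve r c 1 = r * Real.exp (-c) := by simp [expCurve]

lemma strictAnti_expCurve (hr : 0 < r) (hc : 0 < c) : StrictAnti (expCurve r c) := fun a b hab => by
  unfold expCurve
  gcongr

lemma expCurve_mul_expCurve_mul_expCurve (r c a b d : ℝ) :
    expCurve r c a * expCurve r c b * expCurve r c d = r ^ 2 * expCurve r c (a + b + d) := by
  simp only [expCurve, mul_add, neg_add, Real.exp_add]
  ring

lemma image_expCurve_Ioo (hr : 0 < r) (hc : 0 < c) :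
    expCurve r c '' Ioo 0 1 = Ioo (expCurve r c 1) (expCurve r c 0) :=
  ((strictAnti_expCurve hr hc).image_Ioo_subset).antisymm
    (intermediate_value_Ioo' zero_le_one (continuous_expCurve r c).continuousOn)

end ExpCurve

section ExpWeights

variable {r c : ℝ}

lemma integral_one_sub_three_mul_expCurve (r : ℝ) (hc : c ≠ 0)
    (hmean : (3 + 2 * c) * Real.exp (-c) = 3 - c) :
    ∫ t in (0 : ℝ)..1, (1 - 3 * t) * expCurve r c t = 0 := by
  have hderiv (t : ℝ) : HasDerivAt (fun t => ((3 * t - 1) / c + 3 / c ^ 2) * expCurve r c t)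
      ((1 - 3 * t) * expCurve r c t) t := by
    refine ((((((hasDerivAt_id' t).const_mul 3).sub_const 1).div_const c).add_const
      (3 / c ^ 2)).mul (hasDerivAt_expCurve r c t)).congr_deriv ?_
    field_simp
    ring
  rw [intervalIntegral.integral_eq_sub_of_hasDerivAt (fun t _ => hderiv t)
    (Continuous.intervalIntegrable (by fun_prop) _ _), expCurve_zero, expCurve_one]
  field_simp
  linear_combination r * hmean

lemma radialWeight_expCurve (r c u : ℝ) :
    radialWeight (fun s => c ^ 2 * expCurve r c s) u
      = (c * u + 1) * expCurve r c u + (c * (1 - u) + 1) * expCurve r c (1 - u)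
        - (c + 1) * expCurve r c 1 - r := by
  have hderiv (v : ℝ) : HasDerivAt (fun v => -((c * v + 1) * expCurve r c v
      + (c * (1 - v) + 1) * expCurve r c (1 - v)))
      (v * (c ^ 2 * expCurve r c v) - (1 - v) * (c ^ 2 * expCurve r c (1 - v))) v := by
    have hprim (x : ℝ) : HasDerivAt (fun x => (c * x + 1) * expCurve r c x)
        (-(x * (c ^ 2 * expCurve r c x))) x :=
      ((((hasDerivAt_id' x).const_mul c).add_const 1).mul
        (hasDerivAt_expCurve r c x)).congr_deriv (by ring)
    exact ((hprim v).add ((hprim (1 - v)).comp v ((hasDerivAt_id' v).const_sub 1))).neg.congr_deriv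
      (by ring)
  rw [radialWeight, intervalIntegral.integral_eq_sub_of_hasDerivAt (fun v _ => hderiv v)
    (Continuous.intervalIntegrable (by fun_prop) _ _), sub_self, expCurve_zero]
  ring

/-- The bound separates the positive solution `c ≈ 2.149` from the root `(1 + √13) / 2 ≈ 2.303` of
`3 + c - c ^ 2`, the sign of which decides `radialWeight_expCurve_half_nonneg`. -/
lemma le_of_three_add_two_mul_mul_exp_neg (hmean : (3 + 2 * c) * Real.exp (-c) = 3 - c) :
    c ≤ 23 / 10 := by
  by_contra! hlt
  have hexp : Real.exp (23 / 10) < 10.6 := by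
    have h2 : Real.exp 2 < 7.39 := by
      rw [← one_add_one_eq_two, Real.exp_add]
      nlinarith [Real.exp_one_lt_d9, Real.exp_pos 1]
    have h3 : Real.exp (3 / 10) * 0.7 ≤ 1 := by
      have := mul_le_mul_of_nonneg_left (Real.add_one_le_exp (-(3 / 10))) (Real.exp_pos (3 / 10)).le
      rw [← Real.exp_add, add_neg_cancel, Real.exp_zero] at this
      linarith
    rw [show (23 / 10 : ℝ) = 2 + 3 / 10 by norm_num, Real.exp_add]
    nlinarith [Real.exp_pos (3 / 10)]
  have htangent : 1 + (23 / 10 - c) ≤ Real.exp (23 / 10) * Real.exp (-c) := by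
    rw [← Real.exp_add, ← sub_eq_add_neg, add_comm]
    exact Real.add_one_le_exp _
  have : 33 / 10 - c ≤ 10.6 * Real.exp (-c) := by
    nlinarith [Real.exp_pos (-c)]
  nlinarith [Real.exp_pos (-c)]

/-- After squaring, with `e^{-c} = (3 - c) / (3 + 2 * c)`, the claim reads
`3 * c ^ 2 * (3 + c - c ^ 2) ≥ 0`. -/
lemma radialWeight_expCurve_half_nonneg (hr : 0 ≤ r) (hc : 0 ≤ c)
    (hmean : (3 + 2 * c) * Real.exp (-c) = 3 - c) :
    0 ≤ radialWeight (fun s => c ^ 2 * expCurve r c s) (1 / 2) := by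
  have hc' := le_of_three_add_two_mul_mul_exp_neg hmean
  have hsq : Real.exp (-c) = Real.exp (-(c / 2)) ^ 2 := by
    rw [← Real.exp_nat_mul]
    congr 1
    ring
  have hkey : (c + 1) * Real.exp (-c) + 1 ≤ (c + 2) * Real.exp (-(c / 2)) := by
    have hE : Real.exp (-c) = (3 - c) / (3 + 2 * c) := by
      rw [eq_div_iff (by positivity), ← hmean, mul_comm]
    refine le_of_sq_le_sq ?_ (by positivity)
    rw [mul_pow, ← hsq, hE, ← sub_nonneg]
    have hdiff : (c + 2) ^ 2 * ((3 - c) / (3 + 2 * c))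
        - ((c + 1) * ((3 - c) / (3 + 2 * c)) + 1) ^ 2
        = 3 * c ^ 2 * (3 + c - c ^ 2) / (3 + 2 * c) ^ 2 := by
      field_simp
      ring
    rw [hdiff]
    have : 0 ≤ 3 + c - c ^ 2 := by nlinarith
    positivity
  calc 0 ≤ r * ((c + 2) * Real.exp (-(c / 2)) - ((c + 1) * Real.exp (-c) + 1)) :=
        mul_nonneg hr (sub_nonneg.2 hkey)
    _ = _ := by
        rw [radialWeight_expCurve, show (1 : ℝ) - 1 / 2 = 1 / 2 by norm_num, expCurve_one,
          expCurve, show c * (1 / 2) = c / 2 by ring]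
        ring

lemma forall_Icc_zero_one_of_forall_Icc_half_one {p : ℝ → Prop} (hp : ∀ t, p (1 - t) → p t)
    (h : ∀ t ∈ Icc (1 / 2 : ℝ) 1, p t) {t : ℝ} (ht : t ∈ Icc (0 : ℝ) 1) : p t := by
  rcases le_total (1 / 2) t with h2 | h2
  · exact h t ⟨h2, ht.2⟩
  · exact hp t (h (1 - t) ⟨by linarith, by linarith [ht.1]⟩)

lemma concaveOn_reflect_sub_mul_expCurve (hr : 0 < r) (hc : 0 < c) (hc4 : c ≤ 4) :
    ConcaveOn ℝ (Icc (1 / 2) 1) fun u =>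
      (1 - u) * (c ^ 2 * expCurve r c (1 - u)) - u * (c ^ 2 * expCurve r c u) := by
  have hderiv₁ (u : ℝ) : HasDerivAt (fun u => u * (c ^ 2 * expCurve r c u))
      (c ^ 2 * ((1 - c * u) * expCurve r c u)) u :=
    ((hasDerivAt_id' u).mul ((hasDerivAt_expCurve r c u).const_mul _)).congr_deriv (by ring)
  have hderiv₂ (u : ℝ) : HasDerivAt (fun u => c ^ 2 * ((1 - c * u) * expCurve r c u))
      (c ^ 3 * ((c * u - 2) * expCurve r c u)) u :=
    (((((hasDerivAt_id' u).const_mul c).const_sub 1).mul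
      (hasDerivAt_expCurve r c u)).const_mul (c ^ 2)).congr_deriv (by ring)
  have hreflect (u : ℝ) := (hasDerivAt_id' u).const_sub 1
  refine concaveOn_of_hasDerivWithinAt2_nonpos (convex_Icc _ _) (by fun_prop)
    (fun u _ => (((hderiv₁ (1 - u)).comp u (hreflect u)).sub (hderiv₁ u)).hasDerivWithinAt)
    (fun u _ => ((((hderiv₂ (1 - u)).comp u (hreflect u)).mul_const (-1)).sub
      (hderiv₂ u)).hasDerivWithinAt) fun u hu => ?_
  rw [interior_Icc, mem_Ioo] at hu
  have hle : expCurve r c u ≤ expCurve r c (1 - u) :=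
    (strictAnti_expCurve hr hc).antitone (by linarith)
  have hsecond : (c * (1 - u) - 2) * expCurve r c (1 - u) ≤ (c * u - 2) * expCurve r c u :=
    calc (c * (1 - u) - 2) * expCurve r c (1 - u) ≤ (c * (1 - u) - 2) * expCurve r c u :=
          mul_le_mul_of_nonpos_left hle (by nlinarith)
      _ ≤ (c * u - 2) * expCurve r c u :=
          mul_le_mul_of_nonneg_right (by nlinarith) (expCurve_pos hr c u).le
  have := mul_le_mul_of_nonneg_left hsecond (pow_pos hc 3).le
  linarith

lemma radialWeight_expCurve_nonneg (hr : 0 < r) (hc : 0 < c)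
    (hmean : (3 + 2 * c) * Real.exp (-c) = 3 - c) {u : ℝ} (hu : u ∈ Icc (0 : ℝ) 1) :
    0 ≤ radialWeight (fun s => c ^ 2 * expCurve r c s) u := by
  have hcont : Continuous fun s => c ^ 2 * expCurve r c s := by fun_prop
  have hc4 : c ≤ 4 := (le_of_three_add_two_mul_mul_exp_neg hmean).trans (by norm_num)
  refine forall_Icc_zero_one_of_forall_Icc_half_one
    (p := fun t => 0 ≤ radialWeight (fun s => c ^ 2 * expCurve r c s) t)
    (fun t h => by rwa [radialWeight_one_sub hcont] at h) (fun t ht => ?_) hu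
  have hmin := min_le_of_quasiconcaveOn_deriv (fun y _ => hasDerivAt_radialWeight hcont y)
    (concaveOn_reflect_sub_mul_expCurve hr hc hc4).quasiconcaveOn (by norm_num) ht
  rw [radialWeight_one] at hmin
  exact (le_min (radialWeight_expCurve_half_nonneg hr.le hc.le hmean) le_rfl).trans hmin

lemma hasDerivAt_angularWeight_expCurve (r c θ : ℝ) :
    HasDerivAt (angularWeight fun s => c ^ 2 * expCurve r c s)
      (c ^ 2 * ((1 - c * (θ * (1 - θ))) * (expCurve r c θ - expCurve r c (1 - θ))) / 2) θ := by
  have hreflect := (hasDerivAt_id' θ).const_sub 1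
  have hexp (x : ℝ) := (hasDerivAt_expCurve r c x).const_mul (c ^ 2)
  refine ((((hasDerivAt_id' θ).mul hreflect).mul
    ((hexp θ).add ((hexp (1 - θ)).comp θ hreflect))).div_const 2
    |>.sub (hasDerivAt_radialWeight (by fun_prop) θ)).congr_deriv ?_
  simp only [Pi.add_apply, Pi.mul_apply, Function.comp_apply]
  ring

lemma angularWeight_expCurve_nonneg (hr : 0 < r) (hc : 0 < c) (hc4 : c ≤ 4) {θ : ℝ}
    (hθ : θ ∈ Icc (0 : ℝ) 1) : 0 ≤ angularWeight (fun s => c ^ 2 * expCurve r c s) θ := by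
  have hcont : Continuous fun s => c ^ 2 * expCurve r c s := by fun_prop
  refine forall_Icc_zero_one_of_forall_Icc_half_one
    (p := fun t => 0 ≤ angularWeight (fun s => c ^ 2 * expCurve r c s) t)
    (fun t h => by rwa [angularWeight_one_sub hcont] at h) (fun t ht => ?_) hθ
  have hanti : AntitoneOn (angularWeight fun s => c ^ 2 * expCurve r c s) (Icc (1 / 2) 1) := by
    refine antitoneOn_of_hasDerivWithinAt_nonpos (convex_Icc _ _)
      (continuous_angularWeight hcont).continuousOn
      (fun θ _ => (hasDerivAt_angularWeight_expCurve r c θ).hasDerivWithinAt) fun θ hθ => ?_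
    rw [interior_Icc, mem_Ioo] at hθ
    have hquarter : 0 ≤ 1 - c * (θ * (1 - θ)) := by nlinarith [sq_nonneg (2 * θ - 1)]
    have hle : expCurve r c θ - expCurve r c (1 - θ) ≤ 0 :=
      sub_nonpos.2 ((strictAnti_expCurve hr hc).antitone (by linarith))
    have := mul_nonpos_of_nonneg_of_nonpos (sq_nonneg c)
      (mul_nonpos_of_nonneg_of_nonpos hquarter hle)
    linarith
  have hone : angularWeight (fun s => c ^ 2 * expCurve r c s) 1 = 0 := by
    simp [angularWeight, radialWeight_one]
  exact hone ▸ hanti ht (right_mem_Icc.2 (ht.1.trans ht.2)) ht.2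

end ExpWeights

open scoped ENNReal

section LIntegral

lemma lintegral_Ioo_lintegral_Ioo_swap {F : ℝ × ℝ → ℝ≥0∞} (hF : Measurable F) (a b : ℝ) :
    ∫⁻ x in Ioo a b, ∫⁻ y in Ioo a x, F (x, y) = ∫⁻ y in Ioo a b, ∫⁻ x in Ioo y b, F (x, y) := by
  have hind : Measurable ({p : ℝ × ℝ | p.2 < p.1}.indicator F) :=
    hF.indicator (measurableSet_lt measurable_snd measurable_fst)
  calc ∫⁻ x in Ioo a b, ∫⁻ y in Ioo a x, F (x, y)
      = ∫⁻ x in Ioo a b, ∫⁻ y in Ioo a b, {p : ℝ × ℝ | p.2 < p.1}.indicator F (x, y) := by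
        refine setLIntegral_congr_fun measurableSet_Ioo fun x hx => ?_
        have hinter : Iio x ∩ Ioo a b = Ioo a x := by rw [Iio_inter_Ioo, min_eq_left hx.2.le]
        rw [← hinter, ← setLIntegral_indicator measurableSet_Iio]
        rfl
    _ = ∫⁻ y in Ioo a b, ∫⁻ x in Ioo a b, {p : ℝ × ℝ | p.2 < p.1}.indicator F (x, y) :=
        lintegral_lintegral_swap hind.aemeasurable
    _ = ∫⁻ y in Ioo a b, ∫⁻ x in Ioo y b, F (x, y) := by
        refine setLIntegral_congr_fun measurableSet_Ioo fun y hy => ?_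
        have hinter : Ioi y ∩ Ioo a b = Ioo y b := by rw [Ioi_inter_Ioo, max_eq_left hy.1.le]
        rw [← hinter, ← setLIntegral_indicator measurableSet_Ioi]
        rfl

lemma measurable_lintegral_Ioo_left (g : ℝ → ℝ≥0∞) (b : ℝ) :
    Measurable fun s => ∫⁻ θ in Ioo s b, g θ :=
  Antitone.measurable fun _ _ hst => lintegral_mono_set (Ioo_subset_Ioo_left hst)

lemma lintegral_Ioo_comp_one_sub (φ : ℝ → ℝ≥0∞) :
    ∫⁻ t in Ioo (0 : ℝ) 1, φ (1 - t) = ∫⁻ t in Ioo (0 : ℝ) 1, φ t := by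
  simpa using (volume.measurePreserving_sub_left (1 : ℝ)).setLIntegral_comp_preimage_emb
    (MeasurableEquiv.subLeft (1 : ℝ)).measurableEmbedding φ (Ioo 0 1)

lemma lintegral_Ioo_comp_mul_left {θ : ℝ} (hθ : 0 < θ) (φ : ℝ → ℝ≥0∞) :
    ∫⁻ u in Ioo (0 : ℝ) 1, φ (θ * u) = ENNReal.ofReal θ⁻¹ * ∫⁻ s in Ioo 0 θ, φ s := by
  have himage : (fun u => θ * u) '' Ioo 0 1 = Ioo 0 θ := by
    rw [image_mul_left_Ioo hθ, mul_zero, mul_one]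
  rw [← himage, lintegral_image_eq_lintegral_abs_deriv_mul measurableSet_Ioo
    (fun x _ => (hasDerivAt_const_mul θ).hasDerivWithinAt) (mul_right_injective₀ hθ.ne').injOn,
    lintegral_const_mul' _ _ ENNReal.ofReal_ne_top, ← mul_assoc, abs_of_pos hθ,
    ← ENNReal.ofReal_mul (inv_pos.2 hθ).le, inv_mul_cancel₀ hθ.ne', ENNReal.ofReal_one, one_mul]

lemma lintegral_lintegral_mul_comp_mul {g φ : ℝ → ℝ≥0∞} (hg : Measurable g) (hφ : Measurable φ) :
    ∫⁻ θ in Ioo (0 : ℝ) 1, ∫⁻ u in Ioo (0 : ℝ) 1, g θ * φ (θ * u)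
      = ∫⁻ s in Ioo (0 : ℝ) 1, (∫⁻ θ in Ioo s 1, ENNReal.ofReal θ⁻¹ * g θ) * φ s :=
  calc ∫⁻ θ in Ioo (0 : ℝ) 1, ∫⁻ u in Ioo (0 : ℝ) 1, g θ * φ (θ * u)
      = ∫⁻ θ in Ioo (0 : ℝ) 1, ∫⁻ s in Ioo 0 θ, ENNReal.ofReal θ⁻¹ * g θ * φ s := by
        refine setLIntegral_congr_fun measurableSet_Ioo fun θ hθ => ?_
        rw [lintegral_const_mul _ (by fun_prop), lintegral_const_mul _ hφ,
          lintegral_Ioo_comp_mul_left hθ.1, mul_left_comm, mul_assoc]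
    _ = ∫⁻ s in Ioo (0 : ℝ) 1, ∫⁻ θ in Ioo s 1, ENNReal.ofReal θ⁻¹ * g θ * φ s :=
        lintegral_Ioo_lintegral_Ioo_swap
          (F := fun p => ENNReal.ofReal p.1⁻¹ * g p.1 * φ p.2) (by fun_prop) 0 1
    _ = ∫⁻ s in Ioo (0 : ℝ) 1, (∫⁻ θ in Ioo s 1, ENNReal.ofReal θ⁻¹ * g θ) * φ s := by
        simp_rw [lintegral_mul_const _
          (by fun_prop : Measurable fun θ => ENNReal.ofReal θ⁻¹ * g θ)]

end LIntegral

section MarginalSum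

variable {α β : Type*} [MeasurableSpace α] [MeasurableSpace β]

/-- The sum of the three marginals of a measure on `α × α × α`. It is each of the marginals of the
sum of the three cyclic rotations of the measure. -/
noncomputable def marginalSum (ρ : Measure (α × α × α)) : Measure α :=
  ρ.map (fun p => p.1) + ρ.map (fun p => p.2.1) + ρ.map (fun p => p.2.2)

lemma marginalSum_add (ρ σ : Measure (α × α × α)) :
    marginalSum (ρ + σ) = marginalSum ρ + marginalSum σ := by
  simp only [marginalSum]
  rw [Measure.map_add _ _ (by fun_prop), Measure.map_add _ _ (by fun_prop),
    Measure.map_add _ _ (by fun_prop)]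
  abel

lemma marginalSum_map_prodMap {X : α → β} (hX : Measurable X) (ρ : Measure (α × α × α)) :
    marginalSum (ρ.map (Prod.map X (Prod.map X X))) = (marginalSum ρ).map X := by
  simp only [marginalSum, Measure.map_add _ _ hX]
  iterate 3 rw [Measure.map_map (by fun_prop) (by fun_prop)]
  iterate 3 rw [Measure.map_map (by fun_prop) (by fun_prop)]
  rfl

lemma exists_measure_marginals_eq_marginalSum {S : Set (α × α × α)} (hS : MeasurableSet S)
    (hrot : ∀ a b d, (a, b, d) ∈ S → (b, d, a) ∈ S) {ρ : Measure (α × α × α)} (hρ : ρ Sᶜ = 0) :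
    ∃ π : Measure (α × α × α), π Sᶜ = 0 ∧ π.map (fun p => p.1) = marginalSum ρ ∧
      π.map (fun p => p.2.1) = marginalSum ρ ∧ π.map (fun p => p.2.2) = marginalSum ρ := by
  have hrot₁ : Measurable fun p : α × α × α => (p.2.1, p.2.2, p.1) := by fun_prop
  have hrot₂ : Measurable fun p : α × α × α => (p.2.2, p.1, p.2.1) := by fun_prop
  have hmap {g : α × α × α → α} (hg : Measurable g) :
      (ρ + ρ.map (fun p => (p.2.1, p.2.2, p.1)) + ρ.map (fun p => (p.2.2, p.1, p.2.1))).map g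
        = ρ.map g + ρ.map (fun p => g (p.2.1, p.2.2, p.1))
          + ρ.map (fun p => g (p.2.2, p.1, p.2.1)) := by
    rw [Measure.map_add _ _ hg, Measure.map_add _ _ hg, Measure.map_map hg hrot₁,
      Measure.map_map hg hrot₂]
    rfl
  refine ⟨ρ + ρ.map (fun p => (p.2.1, p.2.2, p.1)) + ρ.map (fun p => (p.2.2, p.1, p.2.1)),
    ?_, ?_, ?_, ?_⟩
  · have hρ₁ : ρ.map (fun p => (p.2.1, p.2.2, p.1)) Sᶜ = 0 := by
      rw [Measure.map_apply hrot₁ hS.compl]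
      exact measure_mono_null (fun p hp hpS => hp (hrot _ _ _ hpS)) hρ
    have hρ₂ : ρ.map (fun p => (p.2.2, p.1, p.2.1)) Sᶜ = 0 := by
      rw [Measure.map_apply hrot₂ hS.compl]
      exact measure_mono_null (fun p hp hpS => hp (hrot _ _ _ (hrot _ _ _ hpS))) hρ
    simp only [Measure.add_apply, hρ, hρ₁, hρ₂, add_zero]
  · exact hmap (by fun_prop)
  · rw [hmap (by fun_prop), marginalSum]
    abel
  · rw [hmap (by fun_prop), marginalSum]
    abel

end MarginalSum

section Simplex

/-- The parametrization `(u, θ) ↦ (1 - u, u θ, u (1 - θ))` of the simplex `a + b + d = 1`. -/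
def simplexParam (q : ℝ × ℝ) : ℝ × ℝ × ℝ := (1 - q.1, q.1 * q.2, q.1 * (1 - q.2))

@[fun_prop]
lemma measurable_simplexParam : Measurable simplexParam := by
  unfold simplexParam; fun_prop

/-- The Lebesgue measure on the unit interval. -/
noncomputable abbrev unitVolume : Measure ℝ := volume.restrict (Ioo 0 1)

/-- The measure on the simplex `a + b + d = 1` with density `k u + m θ` in the coordinates
`u = b + d` and `θ = b / (b + d)`. -/
noncomputable def simplexMeasure (k m : ℝ → ℝ≥0∞) : Measure (ℝ × ℝ × ℝ) :=
  ((unitVolume.prod unitVolume).withDensity fun q => k q.1 + m q.2).map simplexParam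

variable {k m : ℝ → ℝ≥0∞}

lemma lintegral_simplexMeasure (hk : Measurable k) (hm : Measurable m) {φ : ℝ × ℝ × ℝ → ℝ≥0∞}
    (hφ : Measurable φ) : ∫⁻ p, φ p ∂simplexMeasure k m
      = ∫⁻ q, (k q.1 + m q.2) * φ (simplexParam q) ∂unitVolume.prod unitVolume := by
  rw [simplexMeasure, lintegral_map hφ measurable_simplexParam,
    lintegral_withDensity_eq_lintegral_mul _ (by fun_prop) (by fun_prop)]
  rfl

lemma map_fst_simplexMeasure (hk : Measurable k) (hm : Measurable m)
    (hksymm : ∀ t, k (1 - t) = k t) : (simplexMeasure k m).map (fun p => p.1)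
      = unitVolume.withDensity fun s => (∫⁻ θ in Ioo 0 1, m θ) + k s := by
  refine Measure.ext_of_lintegral _ fun φ hφ => ?_
  have hfiber (u : ℝ) : ∫⁻ θ in Ioo 0 1, (k u + m θ) * φ (1 - u)
      = ((∫⁻ θ in Ioo 0 1, m θ) + k (1 - u)) * φ (1 - u) := by
    rw [lintegral_mul_const _ (by fun_prop), lintegral_add_right _ hm, hksymm, lintegral_const,
      Measure.restrict_apply_univ, Real.volume_Ioo, sub_zero, ENNReal.ofReal_one, mul_one, add_comm]
  rw [lintegral_map hφ (by fun_prop), lintegral_simplexMeasure hk hm (by fun_prop),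
    lintegral_prod _ (by unfold simplexParam; fun_prop),
    lintegral_withDensity_eq_lintegral_mul _ (by fun_prop) hφ]
  simp only [simplexParam, hfiber, Pi.mul_apply]
  exact lintegral_Ioo_comp_one_sub fun s => ((∫⁻ θ in Ioo 0 1, m θ) + k s) * φ s

lemma map_snd_fst_simplexMeasure (hk : Measurable k) (hm : Measurable m) :
    (simplexMeasure k m).map (fun p => p.2.1)
      = unitVolume.withDensity fun s => ∫⁻ θ in Ioo s 1, ENNReal.ofReal θ⁻¹ * (k θ + m θ) := by
  refine Measure.ext_of_lintegral _ fun φ hφ => ?_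
  -- `b = u * θ` is symmetric in the two coordinates, so `m θ` may be replaced by `m u`.
  have hswap : ∫⁻ q, m q.2 * φ (q.1 * q.2) ∂unitVolume.prod unitVolume
      = ∫⁻ q, m q.1 * φ (q.1 * q.2) ∂unitVolume.prod unitVolume := by
    rw [← lintegral_prod_swap]
    simp only [Prod.fst_swap, Prod.snd_swap, mul_comm]
  rw [lintegral_map hφ (by fun_prop), lintegral_simplexMeasure hk hm (by fun_prop),
    lintegral_withDensity_eq_lintegral_mul _ (measurable_lintegral_Ioo_left _ _) hφ]
  calc ∫⁻ q, (k q.1 + m q.2) * φ (q.1 * q.2) ∂unitVolume.prod unitVolume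
      = ∫⁻ q, (k q.1 + m q.1) * φ (q.1 * q.2) ∂unitVolume.prod unitVolume := by
        simp only [add_mul]
        rw [lintegral_add_left (by fun_prop), hswap, ← lintegral_add_left (by fun_prop)]
    _ = _ := by
        rw [lintegral_prod _ (by fun_prop)]
        exact lintegral_lintegral_mul_comp_mul (hk.add hm) hφ

lemma map_snd_snd_simplexMeasure (hk : Measurable k) (hm : Measurable m)
    (hmsymm : ∀ t, m (1 - t) = m t) :
    (simplexMeasure k m).map (fun p => p.2.2) = (simplexMeasure k m).map (fun p => p.2.1) := by
  refine Measure.ext_of_lintegral _ fun φ hφ => ?_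
  rw [lintegral_map hφ (by fun_prop), lintegral_map hφ (by fun_prop),
    lintegral_simplexMeasure hk hm (by fun_prop), lintegral_simplexMeasure hk hm (by fun_prop),
    lintegral_prod _ (by fun_prop), lintegral_prod _ (by fun_prop)]
  refine lintegral_congr fun u => ?_
  rw [← lintegral_Ioo_comp_one_sub]
  simp only [simplexParam, hmsymm, sub_sub_cancel]

lemma marginalSum_simplexMeasure (hk : Measurable k) (hm : Measurable m)
    (hksymm : ∀ t, k (1 - t) = k t) (hmsymm : ∀ t, m (1 - t) = m t) :
    marginalSum (simplexMeasure k m) = unitVolume.withDensity fun s =>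
      (∫⁻ θ in Ioo 0 1, m θ) + (k s + 2 * ∫⁻ θ in Ioo s 1, ENNReal.ofReal θ⁻¹ * (k θ + m θ)) := by
  rw [marginalSum, map_snd_snd_simplexMeasure hk hm hmsymm, map_snd_fst_simplexMeasure hk hm,
    map_fst_simplexMeasure hk hm hksymm, add_assoc,
    ← withDensity_add_left (measurable_lintegral_Ioo_left _ _),
    ← withDensity_add_left (by fun_prop)]
  congr 1 with s
  simp only [Pi.add_apply, add_assoc, two_mul]

end Simplex

lemma lintegral_Ioo_ofReal {g : ℝ → ℝ} {a b : ℝ} (hab : a ≤ b) (hg : ContinuousOn g (Icc a b))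
    (hg0 : ∀ x ∈ Ioo a b, 0 ≤ g x) :
    ∫⁻ x in Ioo a b, ENNReal.ofReal (g x) = ENNReal.ofReal (∫ x in a..b, g x) := by
  rw [intervalIntegral.integral_of_le hab, integral_Ioc_eq_integral_Ioo,
    ofReal_integral_eq_lintegral_ofReal]
  · exact (hg.integrableOn_compact isCompact_Icc).mono_set Ioo_subset_Icc_self
  · exact (ae_restrict_iff' measurableSet_Ioo).2 (ae_of_all _ hg0)

lemma lintegral_Ioo_inv_mul_ofReal_add_ofReal {k m : ℝ → ℝ} {s b : ℝ} (hs : 0 < s) (hsb : s ≤ b)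
    (hk : Continuous k) (hm : Continuous m) (hk0 : ∀ θ ∈ Icc s b, 0 ≤ k θ)
    (hm0 : ∀ θ ∈ Icc s b, 0 ≤ m θ) :
    ∫⁻ θ in Ioo s b, ENNReal.ofReal θ⁻¹ * (ENNReal.ofReal (k θ) + ENNReal.ofReal (m θ))
      = ENNReal.ofReal (∫ θ in s..b, θ⁻¹ * (k θ + m θ)) := by
  have hpos {θ : ℝ} (hθ : θ ∈ Icc s b) : 0 < θ := hs.trans_le hθ.1
  have hcont : ContinuousOn (fun θ => θ⁻¹ * (k θ + m θ)) (Icc s b) :=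
    (continuousOn_id.inv₀ fun θ hθ => (hpos hθ).ne').mul (hk.add hm).continuousOn
  have hnonneg : ∀ θ ∈ Icc s b, 0 ≤ θ⁻¹ * (k θ + m θ) := fun θ hθ =>
    mul_nonneg (inv_pos.2 (hpos hθ)).le (add_nonneg (hk0 θ hθ) (hm0 θ hθ))
  rw [← lintegral_Ioo_ofReal hsb hcont fun θ hθ => hnonneg θ (Ioo_subset_Icc_self hθ)]
  refine setLIntegral_congr_fun measurableSet_Ioo fun θ hθ => ?_
  have hθ' := Ioo_subset_Icc_self hθ
  rw [ENNReal.ofReal_mul (inv_pos.2 (hpos hθ')).le, ENNReal.ofReal_add (hk0 θ hθ') (hm0 θ hθ')]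

lemma ae_simplexMeasure (k m : ℝ → ℝ≥0∞) :
    ∀ᵐ p ∂simplexMeasure k m, p.1 ∈ Ioo 0 1 ∧ p.2.1 ∈ Ioo 0 1 ∧ p.2.2 ∈ Ioo 0 1 ∧
      p.1 + p.2.1 + p.2.2 = 1 := by
  rw [simplexMeasure, ae_map_iff (by fun_prop) (by measurability)]
  refine (withDensity_absolutelyContinuous _ _).ae_le ?_
  rw [Measure.prod_restrict]
  filter_upwards [ae_restrict_mem (measurableSet_Ioo.prod measurableSet_Ioo)]
    with ⟨u, θ⟩ ⟨⟨hu0, hu1⟩, hθ0, hθ1⟩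
  simp only [simplexParam, mem_Ioo] at *
  refine ⟨⟨?_, ?_⟩, ⟨?_, ?_⟩, ⟨?_, ?_⟩, ?_⟩ <;> nlinarith

lemma marginalSum_simplexMeasure_weights {h f : ℝ → ℝ} (hh : Continuous h)
    (hf : ∀ x, HasDerivAt f (-h x) x) (hmean : ∫ t in (0 : ℝ)..1, (1 - 3 * t) * f t = 0)
    (hradial : ∀ t ∈ Icc 0 1, 0 ≤ radialWeight h t)
    (hangular : ∀ t ∈ Icc 0 1, 0 ≤ angularWeight h t) :
    marginalSum (simplexMeasure (fun u => ENNReal.ofReal (radialWeight h u))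
        fun θ => ENNReal.ofReal (angularWeight h θ))
      = unitVolume.withDensity fun s => ENNReal.ofReal (f s) := by
  have hkc := continuous_radialWeight hh
  have hmc := continuous_angularWeight hh
  rw [marginalSum_simplexMeasure (by fun_prop) (by fun_prop)
    (fun t => by rw [radialWeight_one_sub hh]) (fun t => by rw [angularWeight_one_sub hh])]
  have hangular_mass : ∫⁻ θ in Ioo 0 1, ENNReal.ofReal (angularWeight h θ)
      = ENNReal.ofReal (f 1) := by
    rw [lintegral_Ioo_ofReal zero_le_one hmc.continuousOn
      fun θ hθ => hangular θ (Ioo_subset_Icc_self hθ), integral_angularWeight hh hf, hmean,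
      mul_zero, add_zero]
  have hf1 : 0 ≤ f 1 := by
    have := intervalIntegral.integral_nonneg (μ := volume) zero_le_one hangular
    rwa [integral_angularWeight hh hf, hmean, mul_zero, add_zero] at this
  refine withDensity_congr_ae ?_
  filter_upwards [ae_restrict_mem measurableSet_Ioo] with s hs
  have hIcc {θ : ℝ} (hθ : θ ∈ Icc s 1) : θ ∈ Icc 0 1 := Icc_subset_Icc_left hs.1.le hθ
  have hks : 0 ≤ radialWeight h s := hradial s (Ioo_subset_Icc_self hs)
  have hray : 0 ≤ 2 * ∫ θ in s..1, θ⁻¹ * (radialWeight h θ + angularWeight h θ) :=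
    mul_nonneg zero_le_two <| intervalIntegral.integral_nonneg hs.2.le fun θ hθ =>
      mul_nonneg (inv_nonneg.2 (hIcc hθ).1) (add_nonneg (hradial θ (hIcc hθ))
        (hangular θ (hIcc hθ)))
  rw [hangular_mass, lintegral_Ioo_inv_mul_ofReal_add_ofReal hs.1 hs.2.le hkc hmc
    (fun θ hθ => hradial θ (hIcc hθ)) (fun θ hθ => hangular θ (hIcc hθ)),
    ← ENNReal.ofReal_ofNat 2, ← ENNReal.ofReal_mul zero_le_two,
    ← ENNReal.ofReal_add hks hray, ← ENNReal.ofReal_add hf1 (add_nonneg hks hray),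
    radialWeight_add_integral hh hf hs.1 hs.2.le, add_sub_cancel]

lemma map_withDensity_abs_deriv {s : Set ℝ} {f f' : ℝ → ℝ} (hs : MeasurableSet s)
    (hf' : ∀ x ∈ s, HasDerivWithinAt f (f' x) s x) (hf : InjOn f s) :
    ((volume.restrict s).withDensity fun x => ENNReal.ofReal |f' x|).map f
      = volume.restrict (f '' s) := by
  simpa only [ContinuousLinearMap.det_toSpanSingleton] using
    map_withDensity_abs_det_fderiv_eq_addHaar volume hs.nullMeasurableSet
      (fun x hx => (hf' x hx).hasFDerivWithinAt) hf

lemma restrict_Ioo_add_restrict_Ioo {a b d : ℝ} (hab : a ≤ b) (hbd : b ≤ d) :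
    (volume.restrict (Ioo a b) + volume.restrict (Ioo b d) : Measure ℝ)
      = volume.restrict (Ioo a d) := by
  rw [restrict_Ioo_eq_restrict_Ioc, restrict_Ioo_eq_restrict_Ioc, restrict_Ioo_eq_restrict_Ioc,
    ← Ioc_union_Ioc_eq_Ioc hab hbd, Measure.restrict_union (Ioc_disjoint_Ioc_of_le le_rfl)
      measurableSet_Ioc]

section Measures

/-- The image, under `expCurve r c` in each coordinate, of the measure on the simplex whose three
marginals sum to the density `-(expCurve r c)'`. -/
noncomputable def surfaceMeasure (r c : ℝ) : Measure (ℝ × ℝ × ℝ) :=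
  (simplexMeasure (fun u => ENNReal.ofReal (radialWeight (fun s => c ^ 2 * expCurve r c s) u))
    fun θ => ENNReal.ofReal (angularWeight (fun s => c ^ 2 * expCurve r c s) θ)).map
      (Prod.map (expCurve r c) (Prod.map (expCurve r c) (expCurve r c)))

lemma marginalSum_surfaceMeasure {r c : ℝ} (hr : 0 < r) (hc : 0 < c)
    (hmean : (3 + 2 * c) * Real.exp (-c) = 3 - c) :
    marginalSum (surfaceMeasure r c) = volume.restrict (Ioo (r * Real.exp (-c)) r) := by
  have hc4 : c ≤ 4 := (le_of_three_add_two_mul_mul_exp_neg hmean).trans (by norm_num)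
  have hderiv (x : ℝ) :
      HasDerivAt (fun s => c * expCurve r c s) (-(c ^ 2 * expCurve r c x)) x :=
    ((hasDerivAt_expCurve r c x).const_mul c).congr_deriv (by ring)
  have hzero : ∫ t in (0 : ℝ)..1, (1 - 3 * t) * (c * expCurve r c t) = 0 := by
    simp only [mul_left_comm _ c, intervalIntegral.integral_const_mul,
      integral_one_sub_three_mul_expCurve r hc.ne' hmean, mul_zero]
  have hdensity (s : ℝ) : c * expCurve r c s = |-(c * expCurve r c s)| := by
    rw [abs_neg, abs_of_pos (mul_pos hc (expCurve_pos hr c s))]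
  rw [surfaceMeasure, marginalSum_map_prodMap (continuous_expCurve r c).measurable,
    marginalSum_simplexMeasure_weights (by fun_prop) hderiv hzero
      (fun t ht => radialWeight_expCurve_nonneg hr hc hmean ht)
      (fun t ht => angularWeight_expCurve_nonneg hr hc hc4 ht),
    funext fun s => congrArg ENNReal.ofReal (hdensity s),
    map_withDensity_abs_deriv measurableSet_Ioo
      (fun x _ => (hasDerivAt_expCurve r c x).hasDerivWithinAt)
      (strictAnti_expCurve hr hc).injective.injOn,
    image_expCurve_Ioo hr hc, expCurve_zero, expCurve_one]

lemma ae_surfaceMeasure {r c : ℝ} (hr : 0 < r) (hc : 0 < c) :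
    ∀ᵐ p ∂surfaceMeasure r c, p.1 ∈ Icc (r * Real.exp (-c)) r ∧
      p.2.1 ∈ Icc (r * Real.exp (-c)) r ∧ p.2.2 ∈ Icc (r * Real.exp (-c)) r ∧
      p.1 * p.2.1 * p.2.2 = r ^ 3 * Real.exp (-c) := by
  have hmem {s : ℝ} (hs : s ∈ Ioo 0 1) : expCurve r c s ∈ Icc (r * Real.exp (-c)) r := by
    have := image_expCurve_Ioo hr hc ▸ mem_image_of_mem (expCurve r c) hs
    rw [expCurve_zero, expCurve_one] at this
    exact Ioo_subset_Icc_self this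
  rw [surfaceMeasure, ae_map_iff (by fun_prop) (by measurability)]
  filter_upwards [ae_simplexMeasure _ _] with p ⟨h₁, h₂, h₃, hsum⟩
  refine ⟨hmem h₁, hmem h₂, hmem h₃, ?_⟩
  simp only [Prod.map_fst, Prod.map_snd]
  rw [expCurve_mul_expCurve_mul_expCurve, hsum, expCurve_one]
  ring

/-- The image of Lebesgue measure on `[0, l]` on the segment `{(t, 1 - 2t, 1 - 2t)}`. -/
noncomputable def segmentMeasure (l : ℝ) : Measure (ℝ × ℝ × ℝ) :=
  (volume.restrict (Ioo 0 l)).map fun t => (t, 1 - 2 * t, 1 - 2 * t)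

lemma marginalSum_segmentMeasure (l : ℝ) : marginalSum (segmentMeasure l)
    = volume.restrict (Ioo 0 l) + volume.restrict (Ioo (1 - 2 * l) 1) := by
  have hderiv (t : ℝ) : HasDerivAt (fun t : ℝ => 1 - 2 * t) (-2) t :=
    ((hasDerivAt_const_mul 2).const_sub 1).congr_deriv (by norm_num)
  have himage : (fun t : ℝ => 1 - 2 * t) '' Ioo 0 l = Ioo (1 - 2 * l) 1 := by
    rw [← image_image (fun x => 1 - x) (fun t => 2 * t), image_mul_left_Ioo two_pos,
      image_const_sub_Ioo, mul_zero, sub_zero]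
  have hmap : (2 : ℝ≥0∞) • (volume.restrict (Ioo 0 l)).map (fun t : ℝ => 1 - 2 * t)
      = volume.restrict (Ioo (1 - 2 * l) 1) := by
    rw [← himage, ← map_withDensity_abs_deriv measurableSet_Ioo
      (fun t _ => (hderiv t).hasDerivWithinAt) (fun x _ y _ hxy => by linarith),
      withDensity_const, Measure.map_smul]
    norm_num
  simp only [marginalSum, segmentMeasure]
  rw [Measure.map_map (by fun_prop) (by fun_prop), Measure.map_map (by fun_prop) (by fun_prop),
    Measure.map_map (by fun_prop) (by fun_prop), ← hmap, two_smul, add_assoc]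
  congr 1
  exact Measure.map_id

end Measures

section Mset

lemma measurableSet_Mset (l : ℝ) : MeasurableSet (Mset l) := by
  refine MeasurableSet.union ?_ (IsClosed.measurableSet ?_)
  · have himage : {p : ℝ × ℝ × ℝ | ∃ t, 0 ≤ t ∧ t ≤ l ∧
        (p = (t, 1 - 2*t, 1 - 2*t) ∨ p = (1 - 2*t, t, 1 - 2*t) ∨ p = (1 - 2*t, 1 - 2*t, t))}
        = (fun t : ℝ => (t, 1 - 2*t, 1 - 2*t)) '' Icc 0 l ∪
          ((fun t : ℝ => (1 - 2*t, t, 1 - 2*t)) '' Icc 0 l ∪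
            (fun t : ℝ => (1 - 2*t, 1 - 2*t, t)) '' Icc 0 l) := by
      ext p
      simp only [mem_ofPred_eq, mem_union, mem_image, mem_Icc, ← exists_or]
      refine exists_congr fun t => ?_
      simp only [eq_comm (a := p)]
      tauto
    rw [himage]
    exact (isCompact_Icc.image (by fun_prop)).measurableSet.union
      ((isCompact_Icc.image (by fun_prop)).measurableSet.union
        (isCompact_Icc.image (by fun_prop)).measurableSet)
  · iterate 6 refine IsClosed.and (isClosed_le (by fun_prop) (by fun_prop)) ?_
    exact isClosed_eq (by fun_prop) (by fun_prop)

lemma rotate_mem_Mset {l a b d : ℝ} (h : (a, b, d) ∈ Mset l) : (b, d, a) ∈ Mset l := by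
  rcases h with ⟨t, h0, hl, h | h | h⟩ | ⟨ha0, ha1, hb0, hb1, hd0, hd1, habd⟩
  · exact Or.inl ⟨t, h0, hl, by simp_all⟩
  · exact Or.inl ⟨t, h0, hl, by simp_all⟩
  · exact Or.inl ⟨t, h0, hl, by simp_all⟩
  · exact Or.inr ⟨hb0, hb1, hd0, hd1, ha0, ha1, by linarith⟩

variable {l : ℝ}

lemma segmentMeasure_compl_Mset (l : ℝ) : segmentMeasure l (Mset l)ᶜ = 0 := by
  refine (ae_map_iff (by fun_prop) (measurableSet_Mset l)).2 ?_
  filter_upwards [ae_restrict_mem measurableSet_Ioo] with t ht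
  exact Or.inl ⟨t, ht.1.le, ht.2.le, Or.inl rfl⟩

lemma surfaceMeasure_compl_Mset {c : ℝ} (hl : l < 1 / 2) (hc : 0 < c)
    (hlc : (1 - 2 * l) * Real.exp (-c) = l) : surfaceMeasure (1 - 2 * l) c (Mset l)ᶜ = 0 := by
  filter_upwards [ae_surfaceMeasure (by linarith) hc] with p ⟨h₁, h₂, h₃, hprod⟩
  rw [hlc] at h₁ h₂ h₃
  exact Or.inr ⟨h₁.1, h₁.2, h₂.1, h₂.2, h₃.1, h₃.2,
    by linear_combination hprod + (1 - 2 * l) ^ 2 * hlc⟩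

lemma marginalSum_segmentMeasure_add_surfaceMeasure {c : ℝ} (hl : l ∈ Ioo 0 (1 / 3)) (hc : 0 < c)
    (hlc : (1 - 2 * l) * Real.exp (-c) = l) (hmean : (3 + 2 * c) * Real.exp (-c) = 3 - c) :
    marginalSum (segmentMeasure l + surfaceMeasure (1 - 2 * l) c)
      = volume.restrict (Icc 0 1) := by
  have hlr : l < 1 - 2 * l := by linarith [hl.2]
  have hr : 0 < 1 - 2 * l := hl.1.trans hlr
  rw [marginalSum_add, marginalSum_segmentMeasure, marginalSum_surfaceMeasure hr hc hmean, hlc,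
    add_right_comm, restrict_Ioo_add_restrict_Ioo hl.1.le hlr.le,
    restrict_Ioo_add_restrict_Ioo hr.le (by linarith [hl.1]), restrict_Ioo_eq_restrict_Ioc,
    restrict_Ioc_eq_restrict_Icc]

lemma one_sub_two_mul_mul_exp_neg (hl : l ∈ Ioo 0 (1 / 2))
    (hroot : 9 * l + Real.log (1 - 2 * l) - Real.log l = 3) :
    (1 - 2 * l) * Real.exp (-(3 - 9 * l)) = l := by
  have hr : 0 < 1 - 2 * l := by linarith [hl.2]
  rw [show -(3 - 9 * l) = Real.log l - Real.log (1 - 2 * l) by linarith, Real.exp_sub,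
    Real.exp_log hl.1, Real.exp_log hr, mul_div_cancel₀ _ hr.ne']

end Mset

/-- If `l ∈ (0, 1/4)` satisfies `9l + log(1−2l) − log l = 3`, then there exists a
`(3,1)`-stochastic probability measure concentrated on the set `M`. -/
theorem exists_stochastic_measure_on_M (l : ℝ) (hl : l ∈ Set.Ioo (0 : ℝ) (1/4))
    (hroot : 9 * l + Real.log (1 - 2*l) - Real.log l = 3) :
    ∃ π : Measure (ℝ × ℝ × ℝ), IsProbabilityMeasure π ∧ π (Mset l) = 1 ∧
      π.map (fun p => p.1) = volume.restrict (Set.Icc (0 : ℝ) 1) ∧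
      π.map (fun p => p.2.1) = volume.restrict (Set.Icc (0 : ℝ) 1) ∧
      π.map (fun p => p.2.2) = volume.restrict (Set.Icc (0 : ℝ) 1) := by
  obtain ⟨hl0, hl4⟩ := hl
  have hc : 0 < 3 - 9 * l := by linarith
  have hlc := one_sub_two_mul_mul_exp_neg ⟨hl0, by linarith⟩ hroot
  have hmean : (3 + 2 * (3 - 9 * l)) * Real.exp (-(3 - 9 * l)) = 3 - (3 - 9 * l) := by
    linear_combination 9 * hlc
  obtain ⟨π, hπ, hfst, hsnd, hthd⟩ := exists_measure_marginals_eq_marginalSum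
    (ρ := segmentMeasure l + surfaceMeasure (1 - 2 * l) (3 - 9 * l)) (measurableSet_Mset l)
    (fun _ _ _ => rotate_mem_Mset) (by rw [Measure.add_apply, segmentMeasure_compl_Mset,
      surfaceMeasure_compl_Mset (by linarith) hc hlc, add_zero])
  rw [marginalSum_segmentMeasure_add_surfaceMeasure ⟨hl0, by linarith⟩ hc hlc hmean]
    at hfst hsnd hthd
  have hprob : IsProbabilityMeasure π := by
    have : IsProbabilityMeasure (π.map fun p => p.1) := ⟨by simp [hfst]⟩
    exact π.isProbabilityMeasure_of_map fun p => p.1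
  exact ⟨π, hprob, (prob_compl_eq_zero_iff (measurableSet_Mset l)).1 hπ, hfst, hsnd, hthd⟩
end

section
/- Let C : [0,1] → ℝ be continuously differentiable such that t ↦ t·C'(t) is strictly increasing on [0,1]. Let l ∈ (0, 1/6) satisfy 9l + log(1−2l) − log l = 3, let r = 1 − 2l, c = l·r², let λ be as defined, and set f̂(s) = ∫₀^s λ(t)·C'(t·λ(t)) dt. Call a triple (f, g, h) of Lebesgue-integrable functions on [0,1] admissible if f(x) + g(y) + h(z) ≤ C(x·y·z) for all (x,y,z) ∈ [0,1]³, and call an admissible triple a dual solution if ∫₀¹ f + ∫₀¹ g + ∫₀¹ h ≥ ∫₀¹ f' + ∫₀¹ g' + ∫₀¹ h' for every admissible triple (f', g', h'). Then (f, g, h) is a dual solution if and only if there exist constants C_f, C_g, C_h with C_f + C_g + C_h = C(0) − 2·∫₀¹ λ(t)·C'(t·λ(t)) dt such that f(x) ≤ f̂(x) + C_f, g(y) ≤ f̂(y) + C_g, h(z) ≤ f̂(z) + C_h for all x, y, z ∈ [0,1], with equality holding Lebesgue-almost everywhere in each of the three inequalities. -/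
open Set MeasureTheory intervalIntegral

/-- The piecewise function `λ`: `(1−2x)²` on `[0, l)`, `c/x` on `[l, r)` and `x(1−x)/2` on
`[r, 1]`, where `r = 1 − 2l` and `c = l·r²`. -/
noncomputable def lam (l : ℝ) (x : ℝ) : ℝ :=
  if x < l then (1 - 2*x)^2
  else if x < 1 - 2*l then (l * (1 - 2*l)^2) / x
  else x * (1 - x) / 2

/-- The potential `f̂(s) = ∫₀^s λ(t)·C'(t·λ(t)) dt`. -/
noncomputable def fhat (l : ℝ) (C' : ℝ → ℝ) (s : ℝ) : ℝ :=
  ∫ t in (0 : ℝ)..s, lam l t * C' (t * lam l t)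

/-- A triple `(f, g, h)` of Lebesgue-integrable functions on `[0,1]` is admissible for the
cost `C(xyz)` if `f(x) + g(y) + h(z) ≤ C(xyz)` for all `(x,y,z) ∈ [0,1]³`. -/
def Admissible (C : ℝ → ℝ) (f g h : ℝ → ℝ) : Prop :=
  IntegrableOn f (Set.Icc (0 : ℝ) 1) ∧ IntegrableOn g (Set.Icc (0 : ℝ) 1) ∧
  IntegrableOn h (Set.Icc (0 : ℝ) 1) ∧
  ∀ x ∈ Set.Icc (0 : ℝ) 1, ∀ y ∈ Set.Icc (0 : ℝ) 1, ∀ z ∈ Set.Icc (0 : ℝ) 1,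
    f x + g y + h z ≤ C (x * y * z)

/-- An admissible triple is a dual solution if it maximizes
`∫₀¹ f + ∫₀¹ g + ∫₀¹ h` among all admissible triples. -/
def IsDualSolution (C : ℝ → ℝ) (f g h : ℝ → ℝ) : Prop :=
  Admissible C f g h ∧
  ∀ f' g' h' : ℝ → ℝ, Admissible C f' g' h' →
    (∫ x in Set.Icc (0 : ℝ) 1, f' x) + (∫ x in Set.Icc (0 : ℝ) 1, g' x)
        + (∫ x in Set.Icc (0 : ℝ) 1, h' x) ≤
      (∫ x in Set.Icc (0 : ℝ) 1, f x) + (∫ x in Set.Icc (0 : ℝ) 1, g x)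
        + (∫ x in Set.Icc (0 : ℝ) 1, h x)

/-! Write `K = C 0 - 2 f̂ 1`. On the set of *contact* triples, where
`x λ(x) = y λ(y) = z λ(z) = xyz`, the gap `C (xyz) - f̂ x - f̂ y - f̂ z - K` is constant along
curves and vanishes at `(0, 1, 1)`. If `t C' t` is strictly increasing, the first-order conditions
force a minimiser of the gap with nonzero coordinates to be a contact triple, so the gap is
nonnegative and `(f̂, f̂, f̂ + K)` is admissible.

For an admissible `(f, g, h)`, the symmetrised excess `S = f + g + h - (3 f̂ + K)` has nonpositive
sums over contact triples. In logarithmic coordinates the contact surface is the simplex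
`p + q + s = L`, where a primitive of `S` lies below a parabola `k p (p - 2 L / 3)`. The root
equation for `l` says exactly that the density `exp (-p)` has mean `L / 3`, so that the derivative
of the parabola integrates to `0` against it; whence `∫ S ≤ 0`, with equality only if `S` is affine
in `p` almost everywhere. So for an optimal triple almost every point belongs to a contact triple
saturating the constraint, which forces each component to have the slopes of `f̂`. -/

section Simplex

/-- `S p + S q + S s ≤ 0` on the simplex `p + q + s = L` with nonnegative coordinates: the form
which admissibility takes on the contact set in logarithmic coordinates. -/
def SimplexNonpos (L : ℝ) (S : ℝ → ℝ) : Prop :=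
  ∀ ⦃p q s : ℝ⦄, 0 ≤ p → 0 ≤ q → 0 ≤ s → p + q + s = L → S p + S q + S s ≤ 0

/-- The integrated form of `SimplexNonpos`: along every segment of the simplex `p + q + s = L`
which is parallel to none of its sides, the slopes of `A` over the three coordinates have
nonpositive sum. -/
def SimplexSlopesNonpos (L : ℝ) (A : ℝ → ℝ) : Prop :=
  ∀ ⦃p q s p' q' s' : ℝ⦄, 0 ≤ p → 0 ≤ q → 0 ≤ s → p + q + s = L →
    0 ≤ p' → 0 ≤ q' → 0 ≤ s' → p' + q' + s' = L → p ≠ p' → q ≠ q' → s ≠ s' →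
    slope A p p' + slope A q q' + slope A s s' ≤ 0

theorem integral_comp_segment_eq_slope {S : ℝ → ℝ} {c a b : ℝ}
    (ha : IntervalIntegrable S volume c a) (hb : IntervalIntegrable S volume c b) (hab : a ≠ b) :
    ∫ t in (0 : ℝ)..1, S (a + (b - a) * t) = slope (fun x => ∫ t in c..x, S t) a b := by
  rw [intervalIntegral.integral_comp_add_mul _ (sub_ne_zero.2 hab.symm), slope_def_module,
    intervalIntegral.integral_interval_sub_left hb ha]
  simp only [mul_zero, add_zero, mul_one, add_sub_cancel]

theorem intervalIntegrable_comp_segment {S : ℝ → ℝ} {a b : ℝ}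
    (h : IntervalIntegrable S volume a b) :
    IntervalIntegrable (fun t => S (a + (b - a) * t)) volume 0 1 := by
  rcases eq_or_ne b a with rfl | hab
  · simp only [sub_self, zero_mul, intervalIntegrable_const]
  · simpa [sub_ne_zero.2 hab] using (h.comp_add_left a).comp_mul_left (c := b - a)

theorem SimplexNonpos.slopes_primitive {L : ℝ} {S : ℝ → ℝ} (hS : SimplexNonpos L S)
    (hint : IntervalIntegrable S volume 0 L) :
    SimplexSlopesNonpos L fun x => ∫ t in (0 : ℝ)..x, S t := by
  intro p q s p' q' s' hp hq hs hsum hp' hq' hs' hsum' hpp hqq hss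
  have sub {x : ℝ} (hx : x ∈ Icc 0 L) : IntervalIntegrable S volume 0 x :=
    hint.mono_set (uIcc_subset_uIcc_left (Icc_subset_uIcc hx))
  have ip := sub (x := p) ⟨hp, by linarith⟩
  have iq := sub (x := q) ⟨hq, by linarith⟩
  have is := sub (x := s) ⟨hs, by linarith⟩
  have ip' := sub (x := p') ⟨hp', by linarith⟩
  have iq' := sub (x := q') ⟨hq', by linarith⟩
  have is' := sub (x := s') ⟨hs', by linarith⟩
  have jp := intervalIntegrable_comp_segment (ip.symm.trans ip')
  have jq := intervalIntegrable_comp_segment (iq.symm.trans iq')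
  have js := intervalIntegrable_comp_segment (is.symm.trans is')
  rw [← integral_comp_segment_eq_slope ip ip' hpp, ← integral_comp_segment_eq_slope iq iq' hqq,
    ← integral_comp_segment_eq_slope is is' hss, ← intervalIntegral.integral_add jp jq,
    ← intervalIntegral.integral_add (jp.add jq) js]
  have segment_nonneg {a b t : ℝ} (ha : 0 ≤ a) (hb : 0 ≤ b) (ht : t ∈ Icc (0 : ℝ) 1) :
      0 ≤ a + (b - a) * t := by
    linear_combination mul_nonneg ha (sub_nonneg.2 ht.2) + mul_nonneg hb ht.1
  refine (intervalIntegral.integral_mono_on zero_le_one ((jp.add jq).add js)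
    (intervalIntegrable_const (c := (0 : ℝ))) fun t ht => ?_).trans_eq
    intervalIntegral.integral_zero
  exact hS (segment_nonneg hp hp' ht) (segment_nonneg hq hq' ht) (segment_nonneg hs hs' ht)
    (by linear_combination (1 - t) * hsum + t * hsum')

theorem slope_nonneg_of_isMaxOn {A : ℝ → ℝ} {s : Set ℝ} {x c : ℝ} (hc : IsMaxOn A s c) (hx : x ∈ s)
    (hxc : x ≤ c) : 0 ≤ slope A x c := by
  rw [slope_def_field]
  exact div_nonneg (sub_nonneg.2 (hc hx)) (sub_nonneg.2 hxc)

theorem SimplexSlopesNonpos.max_nonpos {L : ℝ} {A : ℝ → ℝ} (hA : SimplexSlopesNonpos L A)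
    (hA0 : A 0 = 0) {a b : ℝ} (ha : a ∈ Icc 0 (2 * L / 3)) (hb : b ∈ Icc (2 * L / 3) L)
    (hab : A a = A b) (hmax : IsMaxOn A (Icc 0 L) a) : A a ≤ 0 := by
  by_contra! hpos
  have hmaxb : IsMaxOn A (Icc 0 L) b := fun x hx => hab ▸ hmax hx
  obtain ⟨ha0, haL⟩ := ha
  obtain ⟨hLb, hbL⟩ := hb
  have ha_pos : 0 < a := ha0.lt_of_ne fun h => hpos.ne' (h ▸ hA0)
  have hslope : slope A 0 a = A a / a := by rw [slope_def_field, hA0, sub_zero, sub_zero]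
  have hslope_pos : 0 < slope A 0 a := hslope ▸ div_pos hpos ha_pos
  rcases le_or_gt (a + b) L with h | h
  · have hle := hA (p := 0) (q := b) (s := L - b) (p' := a) (q' := L - a - b) (s' := b)
      (by linarith) (by linarith) (by linarith) (by ring) (by linarith) (by linarith)
      (by linarith) (by ring) (by linarith) (by intro; linarith) (by intro; linarith)
    rw [slope_comm A b] at hle
    linarith [
      slope_nonneg_of_isMaxOn hmaxb (x := L - a - b) ⟨by linarith, by linarith⟩ (by linarith),
      slope_nonneg_of_isMaxOn hmaxb (x := L - b) ⟨by linarith, by linarith⟩ (by linarith)]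
  rcases le_or_gt (2 * a) L with h₂ | h₂
  · have hle := hA (p := 0) (q := b) (s := L - b) (p' := a) (q' := L - 2 * a) (s' := a)
      (by linarith) (by linarith) (by linarith) (by ring) (by linarith) (by linarith)
      (by linarith) (by ring) (by linarith) (by intro; linarith) (by intro; linarith)
    rw [slope_comm A b] at hle
    linarith [
      slope_nonneg_of_isMaxOn hmaxb (x := L - 2 * a) ⟨by linarith, by linarith⟩ (by linarith),
      slope_nonneg_of_isMaxOn hmax (x := L - b) ⟨by linarith, by linarith⟩ (by linarith)]
  · -- The slopes add up to at least `A a / a + A a / (L - a)` because `2 a - L ≤ L - a`.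
    have hle := hA (p := 0) (q := L - a) (s := a) (p' := a) (q' := 0) (s' := L - a)
      (by linarith) (by linarith) (by linarith) (by ring) (by linarith) (by linarith)
      (by linarith) (by ring) (by linarith) (by intro; linarith) (by intro; linarith)
    rw [slope_comm A _ 0, slope_comm A a, slope_def_field A 0 (L - a),
      slope_def_field A (L - a) a, hA0] at hle
    have hdrop : (A a - A (L - a)) / (L - a) ≤ (A a - A (L - a)) / (a - (L - a)) :=
      div_le_div_of_nonneg_left (sub_nonneg.2 (hmax ⟨by linarith, by linarith⟩)) (by linarith)
        (by linarith)
    have hpos' : 0 < A a / (L - a) := div_pos hpos (by linarith)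
    rw [sub_zero, sub_zero] at hle
    rw [sub_div] at hdrop
    linarith

theorem SimplexSlopesNonpos.sub_parabola {L : ℝ} {A : ℝ → ℝ} (hA : SimplexSlopesNonpos L A)
    (k : ℝ) : SimplexSlopesNonpos L fun x => A x - k * (x * (x - 2 * L / 3)) := by
  have slope_sub_parabola {x y : ℝ} (hxy : x ≠ y) :
      slope (fun x => A x - k * (x * (x - 2 * L / 3))) x y =
        slope A x y - k * (x + y - 2 * L / 3) := by
    have := sub_ne_zero.2 hxy.symm
    simp only [slope_def_field]
    field_simp
    ring
  intro p q s p' q' s' hp hq hs hsum hp' hq' hs' hsum' hpp hqq hss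
  rw [slope_sub_parabola hpp, slope_sub_parabola hqq, slope_sub_parabola hss]
  linear_combination hA hp hq hs hsum hp' hq' hs' hsum' hpp hqq hss - k * hsum - k * hsum'

theorem exists_forall_sub_mul_le {X : Type*} {K : Set X} {A P : X → ℝ} (hA : BddAbove (A '' K))
    (hP : ∀ x ∈ K, P x ≤ 0) {y : X} (hy : 0 < P y) :
    ∃ k, ∀ x ∈ K, A x - k * P x ≤ A y - k * P y := by
  obtain ⟨c, hc⟩ := hA
  refine ⟨min 0 ((A y - c) / P y), fun x hx => ?_⟩
  have hx0 := mul_nonneg_of_nonpos_of_nonpos (min_le_left 0 ((A y - c) / P y)) (hP x hx)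
  have hy0 := (le_div_iff₀ hy).1 (min_le_right 0 ((A y - c) / P y))
  linarith [hc (mem_image_of_mem A hx)]

theorem continuous_sSup_image_sub_mul {X : Type*} [TopologicalSpace X] {K : Set X} {A P : X → ℝ}
    (hK : IsCompact K) (hA : ContinuousOn A K) (hP : ContinuousOn P K) :
    Continuous fun k => sSup ((fun x => A x - k * P x) '' K) := by
  have : CompactSpace K := isCompact_iff_compactSpace.1 hK
  have hA' : Continuous fun x : K => A x := hA.domRestrict
  have hP' : Continuous fun x : K => P x := hP.domRestrict
  have hsup := isCompact_univ.continuous_sSup (f := fun (k : ℝ) (x : K) => A x - k * P x)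
    ((hA'.comp continuous_snd).sub (continuous_fst.mul (hP'.comp continuous_snd)))
  simpa only [image_univ, image_eq_range _ K] using hsup

/-- Two maxima are balanced by tilting with a function which changes sign between them. -/
theorem exists_isMaxOn_union_sub_mul {X : Type*} [TopologicalSpace X] {K₁ K₂ : Set X}
    {A P : X → ℝ} (hK₁ : IsCompact K₁) (hK₂ : IsCompact K₂) (hA : ContinuousOn A (K₁ ∪ K₂))
    (hP : ContinuousOn P (K₁ ∪ K₂)) (hP₁ : ∀ x ∈ K₁, P x ≤ 0) (hP₂ : ∀ x ∈ K₂, 0 ≤ P x)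
    {x₁ x₂ : X} (hx₁ : x₁ ∈ K₁) (hx₂ : x₂ ∈ K₂) (hPx₁ : P x₁ < 0) (hPx₂ : 0 < P x₂) :
    ∃ k, ∃ a ∈ K₁, ∃ b ∈ K₂, A a - k * P a = A b - k * P b ∧
      IsMaxOn (fun x => A x - k * P x) (K₁ ∪ K₂) a := by
  have hA₁ := hA.mono subset_union_left
  have hA₂ := hA.mono subset_union_right
  have hP₁c := hP.mono subset_union_left
  have hP₂c := hP.mono subset_union_right
  have hF₁ (k : ℝ) : ContinuousOn (fun x => A x - k * P x) K₁ := hA₁.sub (hP₁c.const_mul k)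
  have hF₂ (k : ℝ) : ContinuousOn (fun x => A x - k * P x) K₂ := hA₂.sub (hP₂c.const_mul k)
  obtain ⟨k₁, hk₁⟩ := exists_forall_sub_mul_le (hK₁.image_of_continuousOn hA₁).bddAbove hP₁ hPx₂
  obtain ⟨k₂, hk₂⟩ := exists_forall_sub_mul_le (P := -P)
    (hK₂.image_of_continuousOn hA₂).bddAbove (fun x hx => neg_nonpos.2 (hP₂ x hx)) (neg_pos.2 hPx₁)
  obtain ⟨k, hk⟩ := mem_range_of_exists_le_of_exists_ge
    ((continuous_sSup_image_sub_mul hK₁ hA₁ hP₁c).sub (continuous_sSup_image_sub_mul hK₂ hA₂ hP₂c))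
    ⟨k₁, sub_nonpos.2 <| (csSup_le (Nonempty.image _ ⟨x₁, hx₁⟩) (forall_mem_image.2 hk₁)).trans
      (le_csSup (hK₂.image_of_continuousOn (hF₂ k₁)).bddAbove (mem_image_of_mem _ hx₂))⟩
    ⟨-k₂, sub_nonneg.2 <| (csSup_le (Nonempty.image _ ⟨x₂, hx₂⟩) (forall_mem_image.2 fun x hx => by
      simpa using hk₂ x hx)).trans
      (le_csSup (hK₁.image_of_continuousOn (hF₁ (-k₂))).bddAbove (mem_image_of_mem _ hx₁))⟩
  obtain ⟨a, ha, hka⟩ := hK₁.exists_sSup_image_eq ⟨x₁, hx₁⟩ (hF₁ k)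
  obtain ⟨b, hb, hkb⟩ := hK₂.exists_sSup_image_eq ⟨x₂, hx₂⟩ (hF₂ k)
  have hab : A a - k * P a = A b - k * P b := by rw [← hka, ← hkb]; exact sub_eq_zero.1 hk
  refine ⟨k, a, ha, b, hb, hab, ?_⟩
  rintro x (hx | hx)
  · exact (le_csSup (hK₁.image_of_continuousOn (hF₁ k)).bddAbove
      (mem_image_of_mem _ hx)).trans_eq hka
  · exact ((le_csSup (hK₂.image_of_continuousOn (hF₂ k)).bddAbove
      (mem_image_of_mem _ hx)).trans_eq hkb).trans_eq hab.symm

theorem SimplexSlopesNonpos.exists_le_parabola {L : ℝ} (hL : 0 < L) {A : ℝ → ℝ}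
    (hA : SimplexSlopesNonpos L A) (hcont : ContinuousOn A (Icc 0 L)) (hA0 : A 0 = 0) :
    ∃ k, ∀ x ∈ Icc 0 L, A x ≤ k * (x * (x - 2 * L / 3)) := by
  have hunion : Icc 0 (2 * L / 3) ∪ Icc (2 * L / 3) L = Icc 0 L :=
    Icc_union_Icc_eq_Icc (by linarith) (by linarith)
  obtain ⟨k, a, ha, b, hb, hab, hmax⟩ := exists_isMaxOn_union_sub_mul
    (P := fun x => x * (x - 2 * L / 3)) isCompact_Icc isCompact_Icc (hunion ▸ hcont)
    (by fun_prop) (fun x hx => mul_nonpos_of_nonneg_of_nonpos hx.1 (sub_nonpos.2 hx.2))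
    (fun x hx => mul_nonneg (by linarith [hx.1]) (sub_nonneg.2 hx.1))
    (x₁ := L / 3) (x₂ := L) ⟨by linarith, by linarith⟩ ⟨by linarith, le_rfl⟩
    (mul_neg_of_pos_of_neg (by linarith) (by linarith)) (mul_pos hL (by linarith))
  rw [hunion] at hmax
  have hnonpos := (hA.sub_parabola k).max_nonpos (by simp [hA0]) ha hb hab hmax
  exact ⟨k, fun x hx => sub_nonpos.1 ((hmax hx).trans hnonpos)⟩

end Simplex

section Weight

theorem integral_mul_eq_sub_integral_primitive_mul_deriv {R w : ℝ → ℝ} {a b : ℝ}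
    (hR : IntervalIntegrable R volume a b) (hw : ContDiff ℝ 1 w) :
    ∫ x in a..b, R x * w x =
      (∫ t in a..b, R t) * w b - ∫ x in a..b, (∫ t in a..x, R t) * deriv w x := by
  have hparts := hw.contDiffOn.absolutelyContinuousOnInterval.integral_mul_deriv_eq_deriv_mul
    (hR.absolutelyContinuousOnInterval_intervalIntegral left_mem_uIcc)
  have hderiv : ∫ x in a..b, R x * w x =
      ∫ x in a..b, w x * deriv (fun x => ∫ t in a..x, R t) x := by
    refine intervalIntegral.integral_congr_ae ?_
    filter_upwards [hR.ae_hasDerivAt_integral] with x hx hxI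
    rw [(hx (uIoc_subset_uIcc hxI) a left_mem_uIcc).deriv, mul_comm]
  rw [hderiv, hparts, intervalIntegral.integral_same, mul_zero, sub_zero, mul_comm (w b)]
  simp only [mul_comm]

theorem ae_eq_zero_of_primitive_eq_zero {R : ℝ → ℝ} {a b : ℝ} (hab : a ≤ b)
    (hR : IntervalIntegrable R volume a b) (h : ∀ x ∈ Icc a b, ∫ t in a..x, R t = 0) :
    ∀ᵐ x, x ∈ Icc a b → R x = 0 := by
  filter_upwards [hR.ae_hasDerivAt_integral, Measure.ae_ne volume a, Measure.ae_ne volume b]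
    with x hx hxa hxb hxI
  have hd := hx (by rwa [uIcc_of_le hab]) a left_mem_uIcc
  refine hd.unique ((hasDerivAt_const x (0 : ℝ)).congr_of_eventuallyEq ?_)
  filter_upwards [Icc_mem_nhds (hxI.1.lt_of_ne' hxa) (hxI.2.lt_of_ne hxb)] with y hy using h y hy

theorem integral_mul_nonpos_of_primitive_nonpos {R w : ℝ → ℝ} {a b : ℝ} (hab : a ≤ b)
    (hR : IntervalIntegrable R volume a b) (hprim : ∀ x ∈ Icc a b, ∫ t in a..x, R t ≤ 0)
    (hw : ContDiff ℝ 1 w) (hw' : ∀ x ∈ Icc a b, deriv w x ≤ 0) (hwb : 0 ≤ w b) :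
    ∫ x in a..b, R x * w x ≤ 0 := by
  rw [integral_mul_eq_sub_integral_primitive_mul_deriv hR hw]
  exact sub_nonpos.2 <| (mul_nonpos_of_nonpos_of_nonneg (hprim b (right_mem_Icc.2 hab))
    hwb).trans <| intervalIntegral.integral_nonneg hab fun x hx =>
      mul_nonneg_of_nonpos_of_nonpos (hprim x hx) (hw' x hx)

theorem ae_eq_zero_of_integral_mul_nonneg {R w : ℝ → ℝ} {a b : ℝ} (hab : a < b)
    (hR : IntervalIntegrable R volume a b) (hprim : ∀ x ∈ Icc a b, ∫ t in a..x, R t ≤ 0)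
    (hw : ContDiff ℝ 1 w) (hw' : ∀ x ∈ Icc a b, deriv w x < 0) (hwb : 0 ≤ w b)
    (h0 : 0 ≤ ∫ x in a..b, R x * w x) :
    ∀ᵐ x, x ∈ Icc a b → R x = 0 := by
  refine ae_eq_zero_of_primitive_eq_zero hab.le hR ?_
  by_contra! ⟨c, hc, hne⟩
  have hcont : ContinuousOn (fun x => (∫ t in a..x, R t) * deriv w x) (Icc a b) :=
    (intervalIntegral.continuousOn_primitive_interval' hR left_mem_uIcc |>.mono
      Icc_subset_uIcc).mul (hw.continuous_deriv le_rfl).continuousOn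
  have hpos : 0 < ∫ x in a..b, (∫ t in a..x, R t) * deriv w x :=
    intervalIntegral.integral_pos hab hcont
      (fun x hx => mul_nonneg_of_nonpos_of_nonpos (hprim x (Ioc_subset_Icc_self hx))
        (hw' x (Ioc_subset_Icc_self hx)).le)
      ⟨c, hc, mul_pos_of_neg_of_neg ((hprim c hc).lt_of_ne hne) (hw' c hc)⟩
  rw [integral_mul_eq_sub_integral_primitive_mul_deriv hR hw] at h0
  linarith [mul_nonpos_of_nonpos_of_nonneg (hprim b (right_mem_Icc.2 hab.le)) hwb]

theorem integral_linear_mul_exp_neg (m L : ℝ) :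
    ∫ x in (0 : ℝ)..L, (2 * x - m) * Real.exp (-x) =
      (2 - m) - (2 * L - m + 2) * Real.exp (-L) := by
  have hderiv (x : ℝ) : HasDerivAt (fun x : ℝ => -(2 * x - m + 2) * Real.exp (-x))
      ((2 * x - m) * Real.exp (-x)) x := by
    have hlin : HasDerivAt (fun x : ℝ => -(2 * x - m + 2)) (-(2 * 1)) x :=
      ((((hasDerivAt_id x).const_mul 2).sub_const m).add_const 2).neg
    exact (hlin.mul (hasDerivAt_neg x).exp).congr_deriv (by ring)
  rw [intervalIntegral.integral_eq_sub_of_hasDerivAt (fun x _ => hderiv x)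
    ((by fun_prop : Continuous _).intervalIntegrable _ _)]
  simp only [mul_zero, neg_zero, Real.exp_zero]
  ring

theorem deriv_exp_neg_lt_zero (x : ℝ) : deriv (fun x => Real.exp (-x)) x < 0 := by
  rw [(hasDerivAt_neg x).exp.deriv]
  linarith [Real.exp_pos (-x)]

namespace SimplexNonpos

variable {L : ℝ} {S : ℝ → ℝ}

theorem exists_primitive_nonpos (hS : SimplexNonpos L S) (hL : 0 < L)
    (hint : IntervalIntegrable S volume 0 L) :
    ∃ k, ∀ x ∈ Icc 0 L, ∫ t in (0 : ℝ)..x, (S t - k * (2 * t - 2 * L / 3)) ≤ 0 := by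
  obtain ⟨k, hk⟩ := (hS.slopes_primitive hint).exists_le_parabola hL
    ((intervalIntegral.continuousOn_primitive_interval' hint left_mem_uIcc).mono Icc_subset_uIcc)
    intervalIntegral.integral_same
  refine ⟨k, fun x hx => ?_⟩
  have hparabola : ∫ t in (0 : ℝ)..x, k * (2 * t - 2 * L / 3) = k * (x * (x - 2 * L / 3)) := by
    rw [intervalIntegral.integral_const_mul, intervalIntegral.integral_sub
      ((continuous_const_mul 2).intervalIntegrable _ _) intervalIntegrable_const,
      intervalIntegral.integral_const_mul, integral_id, intervalIntegral.integral_const,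
      smul_eq_mul]
    ring
  rw [intervalIntegral.integral_sub (hint.mono_set (uIcc_subset_uIcc_left (Icc_subset_uIcc hx)))
    ((by fun_prop : Continuous _).intervalIntegrable _ _), hparabola]
  exact sub_nonpos.2 (hk x hx)

theorem integral_sub_affine_mul_exp_neg
    (hmean : 1 - L / 3 = (2 * L / 3 + 1) * Real.exp (-L)) (hint : IntervalIntegrable S volume 0 L)
    (k : ℝ) :
    ∫ x in (0 : ℝ)..L, (S x - k * (2 * x - 2 * L / 3)) * Real.exp (-x) =
      ∫ x in (0 : ℝ)..L, S x * Real.exp (-x) := by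
  simp only [sub_mul _ (k * _), mul_assoc k]
  rw [intervalIntegral.integral_sub (hint.mul_continuousOn (by fun_prop))
    ((by fun_prop : Continuous _).intervalIntegrable _ _), intervalIntegral.integral_const_mul,
    integral_linear_mul_exp_neg]
  linear_combination -2 * k * hmean

theorem integral_mul_exp_neg_nonpos (hS : SimplexNonpos L S) (hL : 0 < L)
    (hmean : 1 - L / 3 = (2 * L / 3 + 1) * Real.exp (-L)) (hint : IntervalIntegrable S volume 0 L) :
    ∫ x in (0 : ℝ)..L, S x * Real.exp (-x) ≤ 0 := by
  obtain ⟨k, hk⟩ := hS.exists_primitive_nonpos hL hint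
  rw [← integral_sub_affine_mul_exp_neg hmean hint k]
  exact integral_mul_nonpos_of_primitive_nonpos hL.le
    (hint.sub ((by fun_prop : Continuous _).intervalIntegrable _ _)) hk (by fun_prop)
    (fun x _ => (deriv_exp_neg_lt_zero x).le) (Real.exp_pos _).le

theorem exists_ae_eq_affine (hS : SimplexNonpos L S) (hL : 0 < L)
    (hmean : 1 - L / 3 = (2 * L / 3 + 1) * Real.exp (-L)) (hint : IntervalIntegrable S volume 0 L)
    (h0 : 0 ≤ ∫ x in (0 : ℝ)..L, S x * Real.exp (-x)) :
    ∃ k, ∀ᵐ x, x ∈ Icc 0 L → S x = k * (2 * x - 2 * L / 3) := by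
  obtain ⟨k, hk⟩ := hS.exists_primitive_nonpos hL hint
  rw [← integral_sub_affine_mul_exp_neg hmean hint k] at h0
  have hzero := ae_eq_zero_of_integral_mul_nonneg hL
    (hint.sub ((by fun_prop : Continuous _).intervalIntegrable _ _)) hk (by fun_prop)
    (fun x _ => deriv_exp_neg_lt_zero x) (Real.exp_pos _).le h0
  exact ⟨k, hzero.mono fun x hx hxI => sub_eq_zero.1 (hx hxI)⟩

end SimplexNonpos

theorem ae_exists_add_add_eq_zero {L k : ℝ} {S : ℝ → ℝ}
    (hS : ∀ᵐ x, x ∈ Icc 0 L → S x = k * (2 * x - 2 * L / 3)) :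
    ∀ᵐ p, p ∈ Icc 0 L → ∃ q s, 0 ≤ q ∧ 0 ≤ s ∧ p + q + s = L ∧ S p + S q + S s = 0 := by
  filter_upwards [hS, Measure.ae_ne volume L] with p hp hpL hpI
  have hrefl : ∀ᵐ q : ℝ, L - p - q ∈ Icc 0 L →
      S (L - p - q) = k * (2 * (L - p - q) - 2 * L / 3) :=
    (Measure.measurePreserving_sub_left volume (L - p)).quasiMeasurePreserving.ae hS
  obtain ⟨q, hq, hSq, hSs⟩ := (Measure.dense_of_ae (hS.and hrefl)).inter_open_nonempty
    (Ioo 0 (L - p)) isOpen_Ioo (nonempty_Ioo.2 (sub_pos.2 (hpI.2.lt_of_ne hpL)))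
  refine ⟨q, L - p - q, hq.1.le, by linarith [hq.2], by ring, ?_⟩
  rw [hp hpI, hSq ⟨hq.1.le, by linarith [hq.2, hpI.1]⟩,
    hSs ⟨by linarith [hq.2], by linarith [hq.1, hpI.1]⟩]
  ring

end Weight

section Surface

theorem ae_mem_image_of_ae {φ : ℝ → ℝ} {s : Set ℝ} {P : ℝ → Prop} (hφ : DifferentiableOn ℝ φ s)
    (h : ∀ᵐ p, p ∈ s → P (φ p)) : ∀ᵐ x, x ∈ φ '' s → P x := by
  have hnull : volume (φ '' {p | ¬(p ∈ s → P (φ p))}) = 0 :=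
    addHaar_image_eq_zero_of_differentiableOn_of_addHaar_eq_zero volume
      (hφ.mono fun p hp => (Classical.not_imp.1 hp).1) (ae_iff.1 h)
  filter_upwards [compl_mem_ae_iff.2 hnull]
  rintro _ hx ⟨p, hp, rfl⟩
  by_contra hP
  exact hx ⟨p, fun himp => hP (himp hp), rfl⟩

theorem hasDerivAt_mul_exp_neg (r p : ℝ) :
    HasDerivAt (fun p => r * Real.exp (-p)) (-(r * Real.exp (-p))) p :=
  ((hasDerivAt_neg p).exp.const_mul r).congr_deriv (by ring)

theorem injective_mul_exp_neg {r : ℝ} (hr : r ≠ 0) :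
    Function.Injective fun p => r * Real.exp (-p) := fun _ _ h =>
  neg_injective (Real.exp_injective (mul_left_cancel₀ hr h))

variable {l r : ℝ} {S : ℝ → ℝ}

theorem mul_exp_neg_log_div (hl : 0 < l) (hr : 0 < r) : r * Real.exp (-Real.log (r / l)) = l := by
  rw [Real.exp_neg, Real.exp_log (div_pos hr hl), inv_div, mul_div_cancel₀ _ hr.ne']

theorem image_mul_exp_neg (hl : 0 < l) (hlr : l ≤ r) :
    (fun p => r * Real.exp (-p)) '' Icc 0 (Real.log (r / l)) = Icc l r := by
  have hr : 0 < r := hl.trans_le hlr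
  have hanti : Antitone fun p => r * Real.exp (-p) := fun p q hpq =>
    mul_le_mul_of_nonneg_left (Real.exp_le_exp.2 (neg_le_neg hpq)) hr.le
  refine Subset.antisymm ?_ fun x hx => ?_
  · rintro _ ⟨p, hp, rfl⟩
    exact ⟨(mul_exp_neg_log_div hl hr).symm.trans_le (hanti hp.2),
      (hanti hp.1).trans_eq (by simp only [neg_zero, Real.exp_zero, mul_one])⟩
  · have hx0 : 0 < x := hl.trans_le hx.1
    exact ⟨Real.log (r / x), ⟨Real.log_nonneg ((one_le_div hx0).2 hx.2), Real.log_le_log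
      (div_pos hr hx0) (div_le_div_of_nonneg_left hr.le hl hx.1)⟩, mul_exp_neg_log_div hx0 hr⟩

theorem mul_exp_neg_mul_mul (hl : 0 < l) (hr : 0 < r) {p q s : ℝ}
    (h : p + q + s = Real.log (r / l)) :
    r * Real.exp (-p) * (r * Real.exp (-q)) * (r * Real.exp (-s)) = l * r ^ 2 := by
  have hexp : Real.exp (-Real.log (r / l)) = Real.exp (-p) * Real.exp (-q) * Real.exp (-s) := by
    rw [← h, neg_add, neg_add, Real.exp_add, Real.exp_add]
  linear_combination (r ^ 2) * mul_exp_neg_log_div hl hr - r ^ 3 * hexp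

theorem intervalIntegrable_comp_mul_exp_neg (hl : 0 < l) (hlr : l ≤ r)
    (hint : IntegrableOn S (Icc l r)) :
    IntervalIntegrable (fun p => S (r * Real.exp (-p))) volume 0 (Real.log (r / l)) := by
  have hr : 0 < r := hl.trans_le hlr
  rw [← image_mul_exp_neg hl hlr, integrableOn_image_iff_integrableOn_abs_deriv_smul
    measurableSet_Icc (fun p _ => (hasDerivAt_mul_exp_neg r p).hasDerivWithinAt)
    (injective_mul_exp_neg hr.ne').injOn] at hint
  have hquot := hint.continuousOn_mul (g := fun p => (r * Real.exp (-p))⁻¹)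
    (ContinuousOn.inv₀ (by fun_prop) fun p _ => by positivity) isCompact_Icc
  rw [intervalIntegrable_iff_integrableOn_Icc_of_le (Real.log_nonneg ((one_le_div hl).2 hlr))]
  refine hquot.congr_fun (fun p _ => ?_) measurableSet_Icc
  beta_reduce
  rw [abs_neg, abs_of_pos (by positivity), smul_eq_mul, inv_mul_cancel_left₀ (by positivity)]

theorem setIntegral_Icc_eq_integral_comp_mul_exp_neg (hl : 0 < l) (hlr : l ≤ r) (S : ℝ → ℝ) :
    ∫ x in Icc l r, S x =
      r * ∫ p in (0 : ℝ)..Real.log (r / l), S (r * Real.exp (-p)) * Real.exp (-p) := by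
  have hr : 0 < r := hl.trans_le hlr
  rw [← image_mul_exp_neg hl hlr, integral_image_eq_integral_abs_deriv_smul measurableSet_Icc
    (fun p _ => (hasDerivAt_mul_exp_neg r p).hasDerivWithinAt) (injective_mul_exp_neg hr.ne').injOn,
    ← intervalIntegral.integral_const_mul,
    intervalIntegral.integral_of_le (Real.log_nonneg ((one_le_div hl).2 hlr)),
    ← integral_Icc_eq_integral_Ioc]
  refine setIntegral_congr_fun measurableSet_Icc fun p _ => ?_
  rw [abs_neg, abs_of_pos (by positivity), smul_eq_mul]
  ring

theorem simplexNonpos_comp_mul_exp_neg (hl : 0 < l) (hlr : l ≤ r)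
    (hS : ∀ x ∈ Icc l r, ∀ y ∈ Icc l r, ∀ z ∈ Icc l r, x * y * z = l * r ^ 2 →
      S x + S y + S z ≤ 0) :
    SimplexNonpos (Real.log (r / l)) fun p => S (r * Real.exp (-p)) := by
  intro p q s hp hq hs h
  have mem {u : ℝ} (hu : 0 ≤ u) (huL : u ≤ Real.log (r / l)) : r * Real.exp (-u) ∈ Icc l r :=
    image_mul_exp_neg hl hlr ▸ mem_image_of_mem _ ⟨hu, huL⟩
  exact hS _ (mem hp (by linarith)) _ (mem hq (by linarith)) _ (mem hs (by linarith))
    (mul_exp_neg_mul_mul hl (hl.trans_le hlr) h)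

/-- The hypothesis says that the density `exp (-p)` has mean `L / 3` on `[0, L]`, where
`L = log (r / l)`. -/
theorem one_sub_log_div_eq (hl : 0 < l) (hr : 0 < r)
    (hmean : (1 - Real.log (r / l) / 3) * r = (2 * Real.log (r / l) / 3 + 1) * l) :
    1 - Real.log (r / l) / 3 =
      (2 * Real.log (r / l) / 3 + 1) * Real.exp (-Real.log (r / l)) := by
  refine mul_right_cancel₀ hr.ne' ?_
  rw [hmean, mul_assoc, mul_comm _ r, mul_exp_neg_log_div hl hr]

theorem setIntegral_nonpos_of_surface (hl : 0 < l) (hlr : l < r)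
    (hmean : (1 - Real.log (r / l) / 3) * r = (2 * Real.log (r / l) / 3 + 1) * l)
    (hint : IntegrableOn S (Icc l r))
    (hS : ∀ x ∈ Icc l r, ∀ y ∈ Icc l r, ∀ z ∈ Icc l r, x * y * z = l * r ^ 2 →
      S x + S y + S z ≤ 0) :
    ∫ x in Icc l r, S x ≤ 0 := by
  have hr : 0 < r := hl.trans hlr
  rw [setIntegral_Icc_eq_integral_comp_mul_exp_neg hl hlr.le]
  exact mul_nonpos_of_nonneg_of_nonpos hr.le <|
    (simplexNonpos_comp_mul_exp_neg hl hlr.le hS).integral_mul_exp_neg_nonpos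
      (Real.log_pos ((one_lt_div hl).2 hlr)) (one_sub_log_div_eq hl hr hmean)
      (intervalIntegrable_comp_mul_exp_neg hl hlr.le hint)

theorem ae_exists_surface_of_setIntegral_nonneg (hl : 0 < l) (hlr : l < r)
    (hmean : (1 - Real.log (r / l) / 3) * r = (2 * Real.log (r / l) / 3 + 1) * l)
    (hint : IntegrableOn S (Icc l r))
    (hS : ∀ x ∈ Icc l r, ∀ y ∈ Icc l r, ∀ z ∈ Icc l r, x * y * z = l * r ^ 2 →
      S x + S y + S z ≤ 0)
    (h0 : 0 ≤ ∫ x in Icc l r, S x) :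
    ∀ᵐ x, x ∈ Icc l r → ∃ y ∈ Icc l r, ∃ z ∈ Icc l r,
      x * y * z = l * r ^ 2 ∧ S x + S y + S z = 0 := by
  have hr : 0 < r := hl.trans hlr
  rw [setIntegral_Icc_eq_integral_comp_mul_exp_neg hl hlr.le] at h0
  obtain ⟨k, hk⟩ := (simplexNonpos_comp_mul_exp_neg hl hlr.le hS).exists_ae_eq_affine
    (Real.log_pos ((one_lt_div hl).2 hlr)) (one_sub_log_div_eq hl hr hmean)
    (intervalIntegrable_comp_mul_exp_neg hl hlr.le hint) (nonneg_of_mul_nonneg_right h0 hr)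
  rw [← image_mul_exp_neg hl hlr.le]
  refine ae_mem_image_of_ae
    (fun p _ => (hasDerivAt_mul_exp_neg r p).differentiableAt.differentiableWithinAt) ?_
  filter_upwards [ae_exists_add_add_eq_zero hk] with p hp hpI
  obtain ⟨q, s, hq, hs, hsum, hzero⟩ := hp hpI
  exact ⟨_, mem_image_of_mem _ ⟨hq, by linarith [hpI.1]⟩, _,
    mem_image_of_mem _ ⟨hs, by linarith [hpI.1]⟩, mul_exp_neg_mul_mul hl hr hsum, hzero⟩

end Surface

section Contact

/-- The contact set, on which the constraint is saturated by the dual solutions: the curve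
`(t, 1 - 2t, 1 - 2t)`, `t ∈ [0, l]`, with its permutations, and the surface `xyz = l (1 - 2l)²`
inside `[l, 1 - 2l]³`. -/
def Contact (l x y z : ℝ) : Prop :=
  (x ∈ Icc 0 l ∧ y = 1 - 2 * x ∧ z = 1 - 2 * x) ∨
  (y ∈ Icc 0 l ∧ z = 1 - 2 * y ∧ x = 1 - 2 * y) ∨
  (z ∈ Icc 0 l ∧ x = 1 - 2 * z ∧ y = 1 - 2 * z) ∨
  (x ∈ Icc l (1 - 2 * l) ∧ y ∈ Icc l (1 - 2 * l) ∧ z ∈ Icc l (1 - 2 * l) ∧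
    x * y * z = l * (1 - 2 * l) ^ 2)

variable {l x y z : ℝ}

theorem lam_of_le (h0 : 0 < l) (h3 : l < 1 / 3) (hx : x ≤ l) : lam l x = (1 - 2 * x) ^ 2 := by
  rcases hx.lt_or_eq with h | rfl
  · rw [lam, if_pos h]
  · rw [lam, if_neg (lt_irrefl x), if_pos (by linarith), mul_div_cancel_left₀ _ h0.ne']

theorem lam_of_mem_Icc (h0 : 0 < l) (hx : x ∈ Icc l (1 - 2 * l)) :
    lam l x = l * (1 - 2 * l) ^ 2 / x := by
  rw [lam, if_neg hx.1.not_gt]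
  rcases hx.2.lt_or_eq with h | rfl
  · rw [if_pos h]
  · rw [if_neg (lt_irrefl _), eq_div_iff (h0.trans_le hx.1).ne']
    ring

theorem lam_of_ge (h3 : l < 1 / 3) (hx : 1 - 2 * l ≤ x) : lam l x = x * (1 - x) / 2 := by
  rw [lam, if_neg (by linarith), if_neg hx.not_gt]

theorem continuous_lam (h0 : 0 < l) (h3 : l < 1 / 3) : Continuous (lam l) := by
  have hleft : ContinuousOn (lam l) (Iic l) :=
    (by fun_prop : ContinuousOn (fun x => (1 - 2 * x) ^ 2) (Iic l)).congr
      fun x hx => lam_of_le h0 h3 hx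
  have hmiddle : ContinuousOn (lam l) (Icc l (1 - 2 * l)) :=
    (continuousOn_const.div continuousOn_id fun x hx => (h0.trans_le hx.1).ne').congr
      fun x hx => lam_of_mem_Icc h0 hx
  have hright : ContinuousOn (lam l) (Ici (1 - 2 * l)) :=
    (by fun_prop : ContinuousOn (fun x => x * (1 - x) / 2) (Ici (1 - 2 * l))).congr
      fun x hx => lam_of_ge h3 hx
  have hglue := (hleft.union_of_isClosed hmiddle isClosed_Iic isClosed_Icc).union_of_isClosed
    hright (isClosed_Iic.union isClosed_Icc) isClosed_Ici
  rwa [Iic_union_Icc_eq_Iic (by linarith), Iic_union_Ici, continuousOn_univ] at hglue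

namespace Contact

theorem rotate (h : Contact l x y z) : Contact l y z x := by
  rcases h with h | h | h | ⟨hx, hy, hz, h⟩
  · exact Or.inr (Or.inr (Or.inl h))
  · exact Or.inl h
  · exact Or.inr (Or.inl h)
  · exact Or.inr (Or.inr (Or.inr ⟨hy, hz, hx, by linarith⟩))

theorem curve {t : ℝ} (ht : t ∈ Icc 0 l) : Contact l t (1 - 2 * t) (1 - 2 * t) :=
  Or.inl ⟨ht, rfl, rfl⟩

theorem surface (hx : x ∈ Icc l (1 - 2 * l)) (hy : y ∈ Icc l (1 - 2 * l))
    (hz : z ∈ Icc l (1 - 2 * l)) (h : x * y * z = l * (1 - 2 * l) ^ 2) : Contact l x y z :=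
  Or.inr (Or.inr (Or.inr ⟨hx, hy, hz, h⟩))

theorem mem_left (h0 : 0 < l) (h3 : l < 1 / 3) (h : Contact l x y z) : x ∈ Icc (0 : ℝ) 1 := by
  rcases h with ⟨hx, -, -⟩ | ⟨hy, -, rfl⟩ | ⟨hz, rfl, -⟩ | ⟨hx, -, -, -⟩
  · exact ⟨hx.1, by linarith [hx.2]⟩
  · exact ⟨by linarith [hy.2], by linarith [hy.1]⟩
  · exact ⟨by linarith [hz.2], by linarith [hz.1]⟩
  · exact ⟨by linarith [hx.1], by linarith [hx.2]⟩

theorem mem_middle (h0 : 0 < l) (h3 : l < 1 / 3) (h : Contact l x y z) : y ∈ Icc (0 : ℝ) 1 :=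
  h.rotate.mem_left h0 h3

theorem mem_right (h0 : 0 < l) (h3 : l < 1 / 3) (h : Contact l x y z) : z ∈ Icc (0 : ℝ) 1 :=
  h.rotate.rotate.mem_left h0 h3

theorem mul_eq_lam (h0 : 0 < l) (h3 : l < 1 / 3) (h : Contact l x y z) : y * z = lam l x := by
  rcases h with ⟨hx, rfl, rfl⟩ | ⟨hy, rfl, rfl⟩ | ⟨hz, rfl, rfl⟩ | ⟨hx, -, -, h⟩
  · rw [lam_of_le h0 h3 hx.2, sq]
  · rw [lam_of_ge h3 (by linarith [hy.2])]
    ring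
  · rw [lam_of_ge h3 (by linarith [hz.2])]
    ring
  · rw [lam_of_mem_Icc h0 hx, eq_div_iff (h0.trans_le hx.1).ne', ← h]
    ring

theorem exists_of_mem (h0 : 0 < l) (h3 : l < 1 / 3) (hx : x ∈ Icc (0 : ℝ) 1) :
    ∃ y z, Contact l x y z := by
  rcases le_total x l with h | h
  · exact ⟨_, _, curve ⟨hx.1, h⟩⟩
  rcases le_total x (1 - 2 * l) with h' | h'
  · have hx0 : 0 < x := h0.trans_le h
    refine ⟨1 - 2 * l, l * (1 - 2 * l) / x, surface ⟨h, h'⟩ ⟨by linarith, le_rfl⟩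
      ⟨?_, ?_⟩ (by field_simp)⟩
    · exact (le_div_iff₀ hx0).2 (mul_le_mul_of_nonneg_left h' h0.le)
    · exact (div_le_iff₀ hx0).2 (by rw [mul_comm]; exact mul_le_mul_of_nonneg_left h (by linarith))
  · have hcurve := curve (l := l) (t := (1 - x) / 2) ⟨by linarith [hx.2], by linarith⟩
    rw [mul_div_cancel₀ _ two_ne_zero, sub_sub_cancel] at hcurve
    exact ⟨x, _, hcurve.rotate⟩

end Contact

variable {S : ℝ → ℝ}

theorem intervalIntegrable_curve (h0 : 0 ≤ l) (h2 : l ≤ 1 / 2)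
    (hint : IntegrableOn S (Icc (0 : ℝ) 1)) :
    IntervalIntegrable (fun t => S (1 - 2 * t)) volume 0 l := by
  have hS : IntervalIntegrable S volume 1 (1 - 2 * l) :=
    ((intervalIntegrable_iff_integrableOn_Icc_of_le (by linarith)).2
      (hint.mono_set (Icc_subset_Icc (by linarith) le_rfl))).symm
  simpa using (hS.comp_sub_left 1).comp_mul_left (c := 2)

theorem setIntegral_unitInterval_eq_curve_add_surface (h0 : 0 ≤ l) (h3 : l ≤ 1 / 3)
    (hint : IntegrableOn S (Icc (0 : ℝ) 1)) :
    ∫ x in Icc (0 : ℝ) 1, S x =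
      (∫ t in (0 : ℝ)..l, (S t + 2 * S (1 - 2 * t))) + ∫ x in Icc l (1 - 2 * l), S x := by
  have sub {a b : ℝ} (ha : 0 ≤ a) (hab : a ≤ b) (hb : b ≤ 1) : IntervalIntegrable S volume a b :=
    (intervalIntegrable_iff_integrableOn_Icc_of_le hab).2 (hint.mono_set (Icc_subset_Icc ha hb))
  have hchange : ∫ x in (1 - 2 * l)..1, S x = 2 * ∫ t in (0 : ℝ)..l, S (1 - 2 * t) := by
    rw [intervalIntegral.integral_comp_sub_mul S two_ne_zero 1, smul_eq_mul, mul_zero, sub_zero,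
      mul_inv_cancel_left₀ two_ne_zero]
  rw [intervalIntegral.integral_add (sub le_rfl h0 (by linarith))
    ((intervalIntegrable_curve h0 (by linarith) hint).const_mul 2),
    intervalIntegral.integral_const_mul, ← hchange, integral_Icc_eq_integral_Ioc,
    integral_Icc_eq_integral_Ioc, ← intervalIntegral.integral_of_le zero_le_one,
    ← intervalIntegral.integral_of_le (by linarith : l ≤ 1 - 2 * l),
    ← intervalIntegral.integral_add_adjacent_intervals (sub le_rfl h0 (by linarith))
      (sub h0 (by linarith : l ≤ 1) le_rfl),
    ← intervalIntegral.integral_add_adjacent_intervals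
      (sub h0 (by linarith : l ≤ 1 - 2 * l) (by linarith)) (sub (by linarith) (by linarith) le_rfl)]
  ring

theorem ae_eq_zero_of_nonpos_of_integral_nonneg {F : ℝ → ℝ} {a b : ℝ} (hab : a ≤ b)
    (hF : IntervalIntegrable F volume a b) (hle : ∀ x ∈ Icc a b, F x ≤ 0)
    (h0 : 0 ≤ ∫ x in a..b, F x) : ∀ᵐ x, x ∈ Icc a b → F x = 0 := by
  rw [intervalIntegrable_iff_integrableOn_Icc_of_le hab] at hF
  rw [intervalIntegral.integral_of_le hab, ← integral_Icc_eq_integral_Ioc] at h0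
  have hneg : ∫ x in Icc a b, -F x = 0 := by
    rw [MeasureTheory.integral_neg, neg_eq_zero]
    exact (setIntegral_nonpos measurableSet_Icc hle).antisymm h0
  have hzero := (setIntegral_eq_zero_iff_of_nonneg_ae (ae_restrict_of_forall_mem measurableSet_Icc
    fun x hx => neg_nonneg.2 (hle x hx)) hF.neg).1 hneg
  filter_upwards [(ae_restrict_iff' measurableSet_Icc).1 hzero] with x hx hxI
  exact neg_eq_zero.1 (hx hxI)

theorem mean_of_root (h0 : 0 < l) (h3 : l < 1 / 3)
    (hroot : 9 * l + Real.log (1 - 2 * l) - Real.log l = 3) :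
    (1 - Real.log ((1 - 2 * l) / l) / 3) * (1 - 2 * l) =
      (2 * Real.log ((1 - 2 * l) / l) / 3 + 1) * l := by
  rw [Real.log_div (by linarith) h0.ne']
  linear_combination -hroot / 3

theorem setIntegral_nonpos_of_contact (h0 : 0 < l) (h3 : l < 1 / 3)
    (hroot : 9 * l + Real.log (1 - 2 * l) - Real.log l = 3) (hint : IntegrableOn S (Icc (0 : ℝ) 1))
    (hS : ∀ x y z, Contact l x y z → S x + S y + S z ≤ 0) : ∫ x in Icc (0 : ℝ) 1, S x ≤ 0 := by
  have hcurve : 0 ≤ ∫ t in (0 : ℝ)..l, -(S t + 2 * S (1 - 2 * t)) :=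
    intervalIntegral.integral_nonneg h0.le fun t ht => by linarith [hS _ _ _ (Contact.curve ht)]
  rw [intervalIntegral.integral_neg] at hcurve
  have hsurface := setIntegral_nonpos_of_surface h0 (by linarith) (mean_of_root h0 h3 hroot)
    (hint.mono_set (Icc_subset_Icc h0.le (by linarith)))
    fun x hx y hy z hz h => hS x y z (Contact.surface hx hy hz h)
  rw [setIntegral_unitInterval_eq_curve_add_surface h0.le h3.le hint]
  linarith

theorem ae_exists_contact_of_setIntegral_nonneg (h0 : 0 < l) (h3 : l < 1 / 3)
    (hroot : 9 * l + Real.log (1 - 2 * l) - Real.log l = 3) (hint : IntegrableOn S (Icc (0 : ℝ) 1))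
    (hS : ∀ x y z, Contact l x y z → S x + S y + S z ≤ 0)
    (hnonneg : 0 ≤ ∫ x in Icc (0 : ℝ) 1, S x) :
    ∀ᵐ x, x ∈ Icc (0 : ℝ) 1 → ∃ y z, Contact l x y z ∧ S x + S y + S z = 0 := by
  have hcurve_le : ∀ t ∈ Icc 0 l, S t + 2 * S (1 - 2 * t) ≤ 0 := fun t ht => by
    linarith [hS _ _ _ (Contact.curve ht)]
  have hcurve_int : IntervalIntegrable (fun t => S t + 2 * S (1 - 2 * t)) volume 0 l :=
    ((intervalIntegrable_iff_integrableOn_Icc_of_le h0.le).2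
      (hint.mono_set (Icc_subset_Icc le_rfl (by linarith)))).add
      ((intervalIntegrable_curve h0.le (by linarith) hint).const_mul 2)
  have hmean := mean_of_root h0 h3 hroot
  have hsurface_int := hint.mono_set (Icc_subset_Icc h0.le (by linarith : 1 - 2 * l ≤ 1))
  have hsurface_le : ∀ x ∈ Icc l (1 - 2 * l), ∀ y ∈ Icc l (1 - 2 * l), ∀ z ∈ Icc l (1 - 2 * l),
      x * y * z = l * (1 - 2 * l) ^ 2 → S x + S y + S z ≤ 0 :=
    fun x hx y hy z hz h => hS x y z (Contact.surface hx hy hz h)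
  rw [setIntegral_unitInterval_eq_curve_add_surface h0.le h3.le hint] at hnonneg
  have hcurve := ae_eq_zero_of_nonpos_of_integral_nonneg h0.le hcurve_int hcurve_le (by
    linarith [setIntegral_nonpos_of_surface h0 (by linarith) hmean hsurface_int hsurface_le])
  have hsurface := ae_exists_surface_of_setIntegral_nonneg h0 (by linarith) hmean hsurface_int
    hsurface_le (by
      have := intervalIntegral.integral_nonneg (μ := volume) h0.le
        fun t ht => neg_nonneg.2 (hcurve_le t ht)
      rw [intervalIntegral.integral_neg] at this
      linarith)
  have himage : ∀ᵐ x, x ∈ (fun t => 1 - 2 * t) '' Icc 0 l →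
      ∃ y z, Contact l x y z ∧ S x + S y + S z = 0 :=
    ae_mem_image_of_ae (by fun_prop) (hcurve.mono fun t ht htI =>
      ⟨_, _, (Contact.curve htI).rotate, by linarith [ht htI]⟩)
  filter_upwards [hcurve, hsurface, himage] with x hxc hxs hxi hx
  rcases le_total x l with h | h
  · exact ⟨_, _, Contact.curve ⟨hx.1, h⟩, by linarith [hxc ⟨hx.1, h⟩]⟩
  rcases le_total x (1 - 2 * l) with h' | h'
  · obtain ⟨y, hy, z, hz, hxyz, hsum⟩ := hxs ⟨h, h'⟩
    exact ⟨y, z, Contact.surface ⟨h, h'⟩ hy hz hxyz, hsum⟩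
  · exact hxi ⟨(1 - x) / 2, ⟨by linarith [hx.2], by linarith⟩, by ring⟩

end Contact

section Potential

variable {l : ℝ} {C C' : ℝ → ℝ}

theorem lam_mem_Icc (h0 : 0 < l) (h3 : l < 1 / 3) {x : ℝ} (hx : x ∈ Icc (0 : ℝ) 1) :
    lam l x ∈ Icc (0 : ℝ) 1 := by
  obtain ⟨y, z, h⟩ := Contact.exists_of_mem h0 h3 hx
  rw [← h.mul_eq_lam h0 h3]
  exact unitInterval.mul_mem (h.mem_middle h0 h3) (h.mem_right h0 h3)

theorem lam_one (h0 : 0 < l) (h3 : l < 1 / 3) : lam l 1 = 0 := by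
  rw [lam_of_ge h3 (by linarith)]
  norm_num

theorem hasDerivWithinAt_comp_mul_const
    (hC : ∀ t ∈ Icc (0 : ℝ) 1, HasDerivWithinAt C (C' t) (Icc 0 1) t) {v x : ℝ}
    (hv : v ∈ Icc (0 : ℝ) 1) (hx : x ∈ Icc (0 : ℝ) 1) :
    HasDerivWithinAt (fun s => C (s * v)) (v * C' (x * v)) (Icc 0 1) x :=
  ((hC _ (unitInterval.mul_mem hx hv)).comp x ((hasDerivAt_id x).mul_const v).hasDerivWithinAt
    fun _ hs => unitInterval.mul_mem hs hv).congr_deriv (by ring)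

theorem continuousOn_mul_comp_mul {v : ℝ → ℝ} (hv : ContinuousOn v (Icc 0 1))
    (hmaps : MapsTo v (Icc 0 1) (Icc 0 1)) (hC'cont : ContinuousOn C' (Icc 0 1)) :
    ContinuousOn (fun p : ℝ × ℝ => v p.2 * C' (p.1 * v p.2)) (Icc 0 1 ×ˢ Icc 0 1) := by
  have hv₂ : ContinuousOn (fun p : ℝ × ℝ => v p.2) (Icc 0 1 ×ˢ Icc 0 1) :=
    hv.comp continuousOn_snd fun p hp => hp.2
  exact hv₂.mul (hC'cont.comp (continuousOn_fst.mul hv₂)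
    fun p hp => unitInterval.mul_mem hp.1 (hmaps hp.2))

theorem fhat_zero : fhat l C' 0 = 0 := intervalIntegral.integral_same

theorem continuousOn_deriv_fhat (h0 : 0 < l) (h3 : l < 1 / 3)
    (hC'cont : ContinuousOn C' (Icc 0 1)) :
    ContinuousOn (fun t => lam l t * C' (t * lam l t)) (Icc 0 1) :=
  (continuousOn_mul_comp_mul (continuous_lam h0 h3).continuousOn
    (fun _ => lam_mem_Icc h0 h3) hC'cont).comp (f := fun t : ℝ => (t, t)) (by fun_prop)
    fun _ ht => ⟨ht, ht⟩

theorem hasDerivWithinAt_fhat (h0 : 0 < l) (h3 : l < 1 / 3)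
    (hC'cont : ContinuousOn C' (Icc 0 1)) {x : ℝ} (hx : x ∈ Icc (0 : ℝ) 1) :
    HasDerivWithinAt (fhat l C') (lam l x * C' (x * lam l x)) (Icc 0 1) x := by
  have hcont := continuousOn_deriv_fhat h0 h3 hC'cont
  have : Fact (x ∈ Icc (0 : ℝ) 1) := ⟨hx⟩
  exact intervalIntegral.integral_hasDerivWithinAt_right
    ((hcont.mono (Icc_subset_Icc le_rfl hx.2)).intervalIntegrable_of_Icc hx.1)
    (hcont.stronglyMeasurableAtFilter_nhdsWithin measurableSet_Icc x) (hcont x hx)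

theorem continuousOn_fhat (h0 : 0 < l) (h3 : l < 1 / 3) (hC'cont : ContinuousOn C' (Icc 0 1)) :
    ContinuousOn (fhat l C') (Icc 0 1) :=
  fun _ hx => (hasDerivWithinAt_fhat h0 h3 hC'cont hx).continuousWithinAt

/-- The slack left in the dual constraint at `(x, y, z)` by the triple `(f̂, f̂, f̂ + K)`, where
`K = C 0 - 2 f̂ 1` is the normalisation that makes it vanish at the contact point `(0, 1, 1)`. -/
noncomputable def gap (l : ℝ) (C C' : ℝ → ℝ) (x y z : ℝ) : ℝ :=
  C (x * y * z) - (fhat l C' x + fhat l C' y + fhat l C' z + (C 0 - 2 * fhat l C' 1))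

theorem gap_rotate (x y z : ℝ) : gap l C C' y z x = gap l C C' x y z := by
  rw [gap, gap, mul_rotate y z x, mul_right_comm]
  ring_nf

theorem hasDerivWithinAt_gap_curve
    (hC : ∀ t ∈ Icc (0 : ℝ) 1, HasDerivWithinAt C (C' t) (Icc 0 1) t) (h0 : 0 < l)
    (h3 : l < 1 / 3) (hC'cont : ContinuousOn C' (Icc 0 1)) {t : ℝ} (ht : t ∈ Icc 0 l) :
    HasDerivWithinAt (fun t => gap l C C' t (1 - 2 * t) (1 - 2 * t)) 0 (Icc 0 l) t := by
  have hcontact : ∀ s ∈ Icc 0 l, Contact l s (1 - 2 * s) (1 - 2 * s) := fun s hs => .curve hs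
  have hleft : MapsTo id (Icc 0 l) (Icc (0 : ℝ) 1) := fun s hs => (hcontact s hs).mem_left h0 h3
  have hright : MapsTo (fun s => 1 - 2 * s) (Icc 0 l) (Icc (0 : ℝ) 1) :=
    fun s hs => (hcontact s hs).mem_middle h0 h3
  have hlin : HasDerivAt (fun s : ℝ => 1 - 2 * s) (-2) t := by
    simpa using ((hasDerivAt_id t).const_mul 2).const_sub 1
  have dC := (hC _ (unitInterval.mul_mem (unitInterval.mul_mem (hleft ht) (hright ht))
    (hright ht))).comp t (((hasDerivAt_id t).mul hlin).mul hlin).hasDerivWithinAt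
    fun s hs => unitInterval.mul_mem (unitInterval.mul_mem (hleft hs) (hright hs)) (hright hs)
  have dleft := (hasDerivWithinAt_fhat h0 h3 hC'cont (hleft ht)).mono hleft
  have dright := (hasDerivWithinAt_fhat h0 h3 hC'cont (hright ht)).comp t
    hlin.hasDerivWithinAt hright
  refine (dC.sub (((dleft.add dright).add dright).add_const _)).congr_deriv ?_
  simp only [id_eq, Pi.mul_apply]
  rw [← (hcontact t ht).mul_eq_lam h0 h3, ← (hcontact t ht).rotate.mul_eq_lam h0 h3,
    show t * ((1 - 2 * t) * (1 - 2 * t)) = t * (1 - 2 * t) * (1 - 2 * t) by ring,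
    show (1 - 2 * t) * ((1 - 2 * t) * t) = t * (1 - 2 * t) * (1 - 2 * t) by ring]
  ring

theorem gap_curve (hC : ∀ t ∈ Icc (0 : ℝ) 1, HasDerivWithinAt C (C' t) (Icc 0 1) t)
    (h0 : 0 < l) (h3 : l < 1 / 3) (hC'cont : ContinuousOn C' (Icc 0 1)) {t : ℝ}
    (ht : t ∈ Icc 0 l) : gap l C C' t (1 - 2 * t) (1 - 2 * t) = 0 := by
  have hderiv := fun s hs => hasDerivWithinAt_gap_curve (t := s) hC h0 h3 hC'cont hs
  rw [constant_of_derivWithin_zero (fun s hs => (hderiv s hs).differentiableWithinAt)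
    (fun s hs => (hderiv s (Ico_subset_Icc_self hs)).derivWithin
      (uniqueDiffOn_Icc h0 s (Ico_subset_Icc_self hs))) t ht]
  simp only [gap, zero_mul, mul_zero, sub_zero, fhat_zero]
  ring

theorem exists_fhat_eq_mul_log_add (h0 : 0 < l) (h3 : l < 1 / 3)
    (hC'cont : ContinuousOn C' (Icc 0 1)) :
    ∃ a b : ℝ, ∀ x ∈ Icc l (1 - 2 * l), fhat l C' x = a * Real.log x + b := by
  set a := l * (1 - 2 * l) ^ 2 * C' (l * (1 - 2 * l) ^ 2) with ha
  have hsub : Icc l (1 - 2 * l) ⊆ Icc 0 1 := Icc_subset_Icc h0.le (by linarith)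
  have hderiv : ∀ x ∈ Icc l (1 - 2 * l), HasDerivWithinAt
      (fun x => fhat l C' x - a * Real.log x) 0 (Icc l (1 - 2 * l)) x := by
    intro x hx
    have hx0 : x ≠ 0 := (h0.trans_le hx.1).ne'
    refine (((hasDerivWithinAt_fhat h0 h3 hC'cont (hsub hx)).mono hsub).sub
      ((Real.hasDerivAt_log hx0).hasDerivWithinAt.const_mul a)).congr_deriv ?_
    rw [lam_of_mem_Icc h0 hx, mul_div_cancel₀ _ hx0, ha]
    ring
  refine ⟨a, fhat l C' l - a * Real.log l, fun x hx => ?_⟩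
  have hconst := constant_of_derivWithin_zero (fun s hs => (hderiv s hs).differentiableWithinAt)
    (fun s hs => (hderiv s (Ico_subset_Icc_self hs)).derivWithin
      (uniqueDiffOn_Icc (by linarith) s (Ico_subset_Icc_self hs))) x hx
  linarith

theorem gap_surface (hC : ∀ t ∈ Icc (0 : ℝ) 1, HasDerivWithinAt C (C' t) (Icc 0 1) t)
    (h0 : 0 < l) (h3 : l < 1 / 3) (hC'cont : ContinuousOn C' (Icc 0 1)) {x y z : ℝ}
    (hx : x ∈ Icc l (1 - 2 * l)) (hy : y ∈ Icc l (1 - 2 * l)) (hz : z ∈ Icc l (1 - 2 * l))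
    (h : x * y * z = l * (1 - 2 * l) ^ 2) : gap l C C' x y z = 0 := by
  obtain ⟨a, b, hab⟩ := exists_fhat_eq_mul_log_add (C' := C') h0 h3 hC'cont
  have hcorner := gap_curve hC h0 h3 hC'cont (right_mem_Icc.2 h0.le)
  have hx0 : x ≠ 0 := (h0.trans_le hx.1).ne'
  have hy0 : y ≠ 0 := (h0.trans_le hy.1).ne'
  have hz0 : z ≠ 0 := (h0.trans_le hz.1).ne'
  have hr0 : 1 - 2 * l ≠ 0 := by linarith
  have hlog := congrArg Real.log h
  rw [Real.log_mul (mul_ne_zero hx0 hy0) hz0, Real.log_mul hx0 hy0,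
    Real.log_mul h0.ne' (pow_ne_zero 2 hr0), Real.log_pow] at hlog
  push_cast at hlog
  rw [gap, mul_assoc, ← sq, hab l ⟨le_rfl, by linarith⟩, hab (1 - 2 * l) ⟨by linarith, le_rfl⟩]
    at hcorner
  rw [gap, h, hab x hx, hab y hy, hab z hz]
  linear_combination hcorner - a * hlog

theorem gap_eq_zero_of_contact
    (hC : ∀ t ∈ Icc (0 : ℝ) 1, HasDerivWithinAt C (C' t) (Icc 0 1) t) (h0 : 0 < l)
    (h3 : l < 1 / 3) (hC'cont : ContinuousOn C' (Icc 0 1)) {x y z : ℝ}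
    (h : Contact l x y z) : gap l C C' x y z = 0 := by
  rcases h with ⟨hx, rfl, rfl⟩ | ⟨hy, rfl, rfl⟩ | ⟨hz, rfl, rfl⟩ | ⟨hx, hy, hz, h⟩
  · exact gap_curve hC h0 h3 hC'cont hx
  · rw [← gap_rotate]
    exact gap_curve hC h0 h3 hC'cont hy
  · rw [gap_rotate]
    exact gap_curve hC h0 h3 hC'cont hz
  · exact gap_surface hC h0 h3 hC'cont hx hy hz h

end Potential

section GapNonneg

variable {l x y z : ℝ} {C C' : ℝ → ℝ}

theorem injOn_mul_one_sub_two_mul_sq : InjOn (fun t : ℝ => t * (1 - 2 * t) ^ 2) (Iic (1 / 6)) := by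
  intro s hs t ht h
  rw [mem_Iic] at hs ht
  have hfactor : (s - t) * (2 * (1 / 6 - s) + 2 * (1 / 6 - t) +
      2 * ((1 / 6 - s) ^ 2 + (1 / 6 - t) ^ 2 + (1 / 3 - s - t) ^ 2)) = 0 := by
    linear_combination h
  rcases mul_eq_zero.1 hfactor with h | h
  · linarith
  · linarith [sq_nonneg (1 / 6 - s), sq_nonneg (1 / 6 - t), sq_nonneg (1 / 3 - s - t)]

theorem exists_mul_lam_eq (h0 : 0 < l) (h3 : l < 1 / 3) (hx : x ∈ Icc (0 : ℝ) 1) :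
    ∃ t ∈ Icc 0 l, x * lam l x = t * (1 - 2 * t) ^ 2 ∧
      (x = t ∨ x = 1 - 2 * t ∨ t = l ∧ x ∈ Icc l (1 - 2 * l)) := by
  rcases le_total x l with h | h
  · exact ⟨x, ⟨hx.1, h⟩, by rw [lam_of_le h0 h3 h], Or.inl rfl⟩
  rcases le_total x (1 - 2 * l) with h' | h'
  · refine ⟨l, ⟨h0.le, le_rfl⟩, ?_, Or.inr (Or.inr ⟨rfl, h, h'⟩)⟩
    rw [lam_of_mem_Icc h0 ⟨h, h'⟩, mul_div_cancel₀ _ (h0.trans_le h).ne']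
  · refine ⟨(1 - x) / 2, ⟨by linarith [hx.2], by linarith⟩, ?_, Or.inr (Or.inl (by ring))⟩
    rw [lam_of_ge h3 h']
    ring

theorem Contact.of_eq_or_eq {t : ℝ} (ht0 : 0 < t) (ht3 : t < 1 / 3) (htl : t ≤ l)
    (hx : x = t ∨ x = 1 - 2 * t) (hy : y = t ∨ y = 1 - 2 * t) (hz : z = t ∨ z = 1 - 2 * t)
    (h : x * y * z = t * (1 - 2 * t) ^ 2) : Contact l x y z := by
  have hcurve : Contact l t (1 - 2 * t) (1 - 2 * t) := .curve ⟨ht0.le, htl⟩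
  have hlt : t < 1 - 2 * t := by linarith
  have hpos : 0 < 1 - 2 * t := ht0.trans hlt
  have httt : t * t * t < t * (1 - 2 * t) ^ 2 := by
    rw [mul_assoc, ← sq]
    gcongr
  have httr : t * t * (1 - 2 * t) < t * (1 - 2 * t) ^ 2 := by nlinarith [mul_pos ht0 hpos]
  have hrrr : t * (1 - 2 * t) ^ 2 < (1 - 2 * t) * (1 - 2 * t) * (1 - 2 * t) := by
    nlinarith [mul_pos hpos hpos]
  rcases hx with rfl | rfl <;> rcases hy with rfl | rfl <;> rcases hz with rfl | rfl <;>
    first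
      | exact hcurve
      | exact hcurve.rotate
      | exact hcurve.rotate.rotate
      | linarith

theorem Contact.of_mul_lam_eq (h0 : 0 < l) (h6 : l ≤ 1 / 6) (hx : x ∈ Icc (0 : ℝ) 1)
    (hy : y ∈ Icc (0 : ℝ) 1) (hz : z ∈ Icc (0 : ℝ) 1) (hpos : 0 < x * y * z)
    (hxv : x * lam l x = x * y * z) (hyv : y * lam l y = x * y * z)
    (hzv : z * lam l z = x * y * z) : Contact l x y z := by
  have h3 : l < 1 / 3 := by linarith
  obtain ⟨t, ht, htv, hxt⟩ := exists_mul_lam_eq h0 h3 hx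
  have hxyz := hxv.symm.trans htv
  have same_level : ∀ w ∈ Icc (0 : ℝ) 1, w * lam l w = x * y * z →
      w = t ∨ w = 1 - 2 * t ∨ t = l ∧ w ∈ Icc l (1 - 2 * l) := by
    intro w hw hwv
    obtain ⟨s, hs, hsv, hws⟩ := exists_mul_lam_eq h0 h3 hw
    have hst : s = t := injOn_mul_one_sub_two_mul_sq (hs.2.trans h6) (ht.2.trans h6)
      (hsv.symm.trans (hwv.trans hxyz))
    rwa [hst] at hws
  rcases ht.2.lt_or_eq with htl | rfl
  · have corner : ∀ w ∈ Icc (0 : ℝ) 1, w * lam l w = x * y * z → w = t ∨ w = 1 - 2 * t :=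
      fun w hw hwv => (same_level w hw hwv).imp_right
        (Or.resolve_right · fun h => htl.ne h.1)
    have ht0 : 0 < t := ht.1.lt_of_ne fun h => by
      rw [hxyz, ← h, zero_mul] at hpos
      exact hpos.false
    exact .of_eq_or_eq ht0 (htl.trans h3) htl.le (corner x hx hxv) (corner y hy hyv)
      (corner z hz hzv) hxyz
  · have middle : ∀ w ∈ Icc (0 : ℝ) 1, w * lam t w = x * y * z → w ∈ Icc t (1 - 2 * t) := by
      intro w hw hwv
      rcases same_level w hw hwv with rfl | rfl | h
      exacts [⟨le_rfl, by linarith⟩, ⟨by linarith, le_rfl⟩, h.2]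
    exact .surface (middle x hx hxv) (middle y hy hyv) (middle z hz hzv) hxyz

theorem monotoneOn_fhat (h0 : 0 < l) (h3 : l < 1 / 3) (hC'cont : ContinuousOn C' (Icc 0 1))
    (hU : MonotoneOn (fun t => t * C' t) (Icc 0 1)) : MonotoneOn (fhat l C') (Icc 0 1) := by
  refine monotoneOn_of_hasDerivWithinAt_nonneg (convex_Icc 0 1) (continuousOn_fhat h0 h3 hC'cont)
    (fun x hx => (hasDerivWithinAt_fhat h0 h3 hC'cont (interior_subset hx)).mono interior_subset)
    fun x hx => ?_
  rw [interior_Icc] at hx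
  have hxI := Ioo_subset_Icc_self hx
  have hlam := unitInterval.mul_mem hxI (lam_mem_Icc h0 h3 hxI)
  have hnonneg := hU ⟨le_rfl, zero_le_one⟩ hlam hlam.1
  simp only [zero_mul, mul_assoc] at hnonneg
  exact nonneg_of_mul_nonneg_right hnonneg hx.1

theorem gap_zero_nonneg (h0 : 0 < l) (h3 : l < 1 / 3) (hC'cont : ContinuousOn C' (Icc 0 1))
    (hU : MonotoneOn (fun t => t * C' t) (Icc 0 1)) (hy : y ∈ Icc (0 : ℝ) 1)
    (hz : z ∈ Icc (0 : ℝ) 1) : 0 ≤ gap l C C' 0 y z := by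
  have hmono := monotoneOn_fhat h0 h3 hC'cont hU
  have hy1 := hmono hy ⟨zero_le_one, le_rfl⟩ hy.2
  have hz1 := hmono hz ⟨zero_le_one, le_rfl⟩ hz.2
  rw [gap, zero_mul, zero_mul, fhat_zero]
  linarith

theorem mul_lam_eq_of_isMinOn_gap
    (hC : ∀ t ∈ Icc (0 : ℝ) 1, HasDerivWithinAt C (C' t) (Icc 0 1) t) (h0 : 0 < l)
    (h3 : l < 1 / 3) (hC'cont : ContinuousOn C' (Icc 0 1))
    (hU : StrictMonoOn (fun t => t * C' t) (Icc 0 1)) (hx : x ∈ Ioc (0 : ℝ) 1)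
    (hy : y ∈ Ioc (0 : ℝ) 1) (hz : z ∈ Ioc (0 : ℝ) 1)
    (hmin : IsMinOn (fun s => gap l C C' s y z) (Icc 0 1) x) : x * lam l x = x * y * z := by
  have hxI := Ioc_subset_Icc_self hx
  have hyz : y * z ∈ Ioc (0 : ℝ) 1 := ⟨mul_pos hy.1 hz.1, mul_le_one₀ hy.2 hz.1.le hz.2⟩
  have hyzI := Ioc_subset_Icc_self hyz
  set d := y * z * C' (x * (y * z)) - lam l x * C' (x * lam l x) with hd
  have hderiv : HasDerivWithinAt (fun s => gap l C C' s y z) d (Icc 0 1) x := by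
    simp only [gap, mul_assoc, add_assoc]
    exact (hasDerivWithinAt_comp_mul_const hC hyzI hxI).sub
      ((hasDerivWithinAt_fhat h0 h3 hC'cont hxI).add_const _)
  have hslope : ∀ s ∈ Icc (0 : ℝ) 1, 0 ≤ (s - x) * d := fun s hs => by
    simpa using hmin.localize.hasFDerivWithinAt_nonneg hderiv.hasFDerivWithinAt
      (sub_mem_posTangentConeAt_of_segment_subset ((convex_Icc (0 : ℝ) 1).segment_subset hxI hs))
  have hd_nonpos : d ≤ 0 := by nlinarith [hslope 0 ⟨le_rfl, zero_le_one⟩, hx.1]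
  have hx1 : x < 1 := by
    refine hx.2.lt_of_ne ?_
    rintro rfl
    have hpos := hU ⟨le_rfl, zero_le_one⟩ hyzI hyz.1
    simp only [zero_mul] at hpos
    rw [hd, lam_one h0 h3, one_mul] at hd_nonpos
    linarith
  have hd_zero : d = 0 := hd_nonpos.antisymm
    (nonneg_of_mul_nonneg_right (hslope 1 ⟨zero_le_one, le_rfl⟩) (sub_pos.2 hx1))
  rw [mul_assoc]
  refine hU.injOn (unitInterval.mul_mem hxI (lam_mem_Icc h0 h3 hxI))
    (unitInterval.mul_mem hxI hyzI) ?_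
  linear_combination -x * hd_zero + x * hd

theorem continuousOn_gap (hC : ∀ t ∈ Icc (0 : ℝ) 1, HasDerivWithinAt C (C' t) (Icc 0 1) t)
    (h0 : 0 < l) (h3 : l < 1 / 3) (hC'cont : ContinuousOn C' (Icc 0 1)) :
    ContinuousOn (fun p : ℝ × ℝ × ℝ => gap l C C' p.1 p.2.1 p.2.2)
      (Icc 0 1 ×ˢ Icc 0 1 ×ˢ Icc 0 1) := by
  have hCc : ContinuousOn C (Icc 0 1) := fun t ht => (hC t ht).continuousWithinAt
  have hfc := continuousOn_fhat h0 h3 hC'cont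
  exact (hCc.comp (by fun_prop) fun p hp =>
      unitInterval.mul_mem (unitInterval.mul_mem hp.1 hp.2.1) hp.2.2).sub
    ((((hfc.comp continuousOn_fst fun p hp => hp.1).add
      (hfc.comp (by fun_prop) fun p hp => hp.2.1)).add
      (hfc.comp (by fun_prop) fun p hp => hp.2.2)).add continuousOn_const)

theorem gap_nonneg_of_strictMonoOn
    (hC : ∀ t ∈ Icc (0 : ℝ) 1, HasDerivWithinAt C (C' t) (Icc 0 1) t) (h0 : 0 < l)
    (h6 : l ≤ 1 / 6) (hC'cont : ContinuousOn C' (Icc 0 1))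
    (hU : StrictMonoOn (fun t => t * C' t) (Icc 0 1)) (hx : x ∈ Icc (0 : ℝ) 1)
    (hy : y ∈ Icc (0 : ℝ) 1) (hz : z ∈ Icc (0 : ℝ) 1) : 0 ≤ gap l C C' x y z := by
  have h3 : l < 1 / 3 := by linarith
  obtain ⟨⟨a, b, c⟩, ⟨ha, hb, hc⟩, hmin⟩ :=
    (isCompact_Icc.prod (isCompact_Icc.prod isCompact_Icc)).exists_isMinOn
      ⟨(x, y, z), hx, hy, hz⟩ (continuousOn_gap hC h0 h3 hC'cont)
  have hle : ∀ {u v w}, u ∈ Icc (0 : ℝ) 1 → v ∈ Icc (0 : ℝ) 1 → w ∈ Icc (0 : ℝ) 1 →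
      gap l C C' a b c ≤ gap l C C' u v w := fun hu hv hw =>
    isMinOn_iff.1 hmin (_, _, _) ⟨hu, hv, hw⟩
  refine le_trans ?_ (hle hx hy hz)
  rcases ha.1.eq_or_lt with rfl | ha0
  · exact gap_zero_nonneg h0 h3 hC'cont hU.monotoneOn hb hc
  rcases hb.1.eq_or_lt with rfl | hb0
  · rw [← gap_rotate]
    exact gap_zero_nonneg h0 h3 hC'cont hU.monotoneOn hc ha
  rcases hc.1.eq_or_lt with rfl | hc0
  · rw [gap_rotate]
    exact gap_zero_nonneg h0 h3 hC'cont hU.monotoneOn ha hb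
  have hav := mul_lam_eq_of_isMinOn_gap hC h0 h3 hC'cont hU ⟨ha0, ha.2⟩ ⟨hb0, hb.2⟩ ⟨hc0, hc.2⟩
    fun s hs => hle hs hb hc
  have hbv := mul_lam_eq_of_isMinOn_gap hC h0 h3 hC'cont hU ⟨hb0, hb.2⟩ ⟨hc0, hc.2⟩ ⟨ha0, ha.2⟩
    fun s hs => by simpa only [mem_ofPred_eq, gap_rotate a] using hle ha hs hc
  have hcv := mul_lam_eq_of_isMinOn_gap hC h0 h3 hC'cont hU ⟨hc0, hc.2⟩ ⟨ha0, ha.2⟩ ⟨hb0, hb.2⟩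
    fun s hs => by simpa only [mem_ofPred_eq, gap_rotate c a b, gap_rotate s a b] using hle ha hb hs
  exact (gap_eq_zero_of_contact hC h0 h3 hC'cont (.of_mul_lam_eq h0 h6 ha hb hc
    (mul_pos (mul_pos ha0 hb0) hc0) hav (by linarith) (by linarith))).ge

theorem fhat_add_const (h0 : 0 < l) (h3 : l < 1 / 3) (hC'cont : ContinuousOn C' (Icc 0 1))
    (ε : ℝ) (hx : x ∈ Icc (0 : ℝ) 1) :
    fhat l (fun t => C' t + ε) x = fhat l C' x + ε * ∫ t in (0 : ℝ)..x, lam l t := by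
  rw [fhat, fhat, ← intervalIntegral.integral_const_mul, ← intervalIntegral.integral_add
    (((continuousOn_deriv_fhat h0 h3 hC'cont).mono
      (Icc_subset_Icc le_rfl hx.2)).intervalIntegrable_of_Icc hx.1)
    (((continuous_lam h0 h3).const_mul ε).intervalIntegrable 0 x)]
  simp only [mul_add, mul_comm]

theorem gap_nonneg (hC : ∀ t ∈ Icc (0 : ℝ) 1, HasDerivWithinAt C (C' t) (Icc 0 1) t)
    (h0 : 0 < l) (h6 : l ≤ 1 / 6) (hC'cont : ContinuousOn C' (Icc 0 1))
    (hU : MonotoneOn (fun t => t * C' t) (Icc 0 1)) (hx : x ∈ Icc (0 : ℝ) 1)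
    (hy : y ∈ Icc (0 : ℝ) 1) (hz : z ∈ Icc (0 : ℝ) 1) : 0 ≤ gap l C C' x y z := by
  have h3 : l < 1 / 3 := by linarith
  -- Adding `ε t` to the cost makes `t ↦ t C' t` strictly increasing; then let `ε → 0`.
  have hperturb : ∀ ε > 0, 0 ≤ gap l (fun t => C t + ε * t) (fun t => C' t + ε) x y z :=
    fun ε hε => gap_nonneg_of_strictMonoOn
      (fun t ht => (hC t ht).add (by simpa using (hasDerivWithinAt_id t _).const_mul ε)) h0 h6
      (hC'cont.add continuousOn_const)
      (fun s hs t ht hst => by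
        have := hU hs ht hst.le
        simp only [mul_add] at this ⊢
        linarith [mul_lt_mul_of_pos_right hst hε])
      hx hy hz
  have htendsto : Filter.Tendsto
      (fun ε => gap l (fun t => C t + ε * t) (fun t => C' t + ε) x y z) (nhdsWithin 0 (Ioi 0))
      (nhds (gap l C C' x y z)) := by
    simp only [gap, fhat_add_const h0 h3 hC'cont _ hx, fhat_add_const h0 h3 hC'cont _ hy,
      fhat_add_const h0 h3 hC'cont _ hz, fhat_add_const h0 h3 hC'cont _ ⟨zero_le_one, le_rfl⟩]
    refine (Continuous.tendsto' ?_ 0 _ ?_).mono_left nhdsWithin_le_nhds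
    · fun_prop
    · simp only [zero_mul, add_zero]
  exact ge_of_tendsto htendsto (eventually_mem_nhdsWithin.mono hperturb)

end GapNonneg

section Rigidity

variable {D : Set ℝ} {G : ℝ → ℝ} {a b u w ε δ : ℝ}

theorem abs_sub_le_of_forall_sub_lt (hδ : 0 < δ) (hD : Dense D)
    (hG : ∀ u ∈ D ∩ Icc a b, ∀ w ∈ D ∩ Icc a b, u ≤ w → w - u < δ → |G w - G u| ≤ ε * (w - u))
    (hu : u ∈ D ∩ Icc a b) (hw : w ∈ D ∩ Icc a b) (huw : u ≤ w) :
    |G w - G u| ≤ ε * (w - u) := by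
  obtain ⟨n, hn⟩ := exists_nat_ge ((w - u) / (δ / 2))
  rw [div_le_iff₀ (half_pos hδ)] at hn
  induction n generalizing u with
  | zero => exact hG u hu w hw huw (by rw [Nat.cast_zero, zero_mul] at hn; linarith)
  | succ n ih =>
    rcases lt_or_ge (w - u) δ with hlt | hge
    · exact hG u hu w hw huw hlt
    obtain ⟨m, hmD, hum, hmu⟩ := hD.exists_between (show u + δ / 2 < u + δ by linarith)
    have hm : m ∈ D ∩ Icc a b := ⟨hmD, by linarith [hu.2.1], by linarith [hw.2.2]⟩
    push_cast at hn
    calc |G w - G u| ≤ |G w - G m| + |G m - G u| := abs_sub_le _ _ _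
      _ ≤ ε * (w - m) + ε * (m - u) :=
        add_le_add (ih hm (by linarith) (by linarith))
          (hG u hu m hm (by linarith) (by linarith))
      _ = ε * (w - u) := by ring

theorem eq_of_forall_exists_abs_sub_le (hD : Dense D)
    (hG : ∀ ε > 0, ∃ δ > 0, ∀ u ∈ D ∩ Icc a b, ∀ w ∈ D ∩ Icc a b, u ≤ w → w - u < δ →
      |G w - G u| ≤ ε * (w - u)) (hu : u ∈ D ∩ Icc a b) (hw : w ∈ D ∩ Icc a b) : G u = G w := by
  wlog huw : u ≤ w generalizing u w
  · exact (this hw hu (le_of_not_ge huw)).symm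
  have hle : ∀ ε > 0, |G w - G u| ≤ ε * (w - u) := fun ε hε =>
    let ⟨_, hδ, hloc⟩ := hG ε hε
    abs_sub_le_of_forall_sub_lt hδ hD hloc hu hw huw
  have htendsto : Filter.Tendsto (fun ε => ε * (w - u)) (nhdsWithin 0 (Ioi 0)) (nhds 0) :=
    ((continuous_mul_const (w - u)).tendsto' 0 0 (zero_mul _)).mono_left nhdsWithin_le_nhds
  have hzero := ge_of_tendsto htendsto (eventually_mem_nhdsWithin.mono hle)
  exact (sub_eq_zero.1 (abs_nonpos_iff.1 hzero)).symm

variable {C C' v f φ : ℝ → ℝ}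

theorem exists_abs_sub_comp_mul_le
    (hC : ∀ t ∈ Icc (0 : ℝ) 1, HasDerivWithinAt C (C' t) (Icc 0 1) t)
    (hC'cont : ContinuousOn C' (Icc 0 1)) (hv : ContinuousOn v (Icc 0 1))
    (hmaps : MapsTo v (Icc 0 1) (Icc 0 1)) (hε : 0 < ε) :
    ∃ δ > 0, ∀ u ∈ Icc (0 : ℝ) 1, ∀ w ∈ Icc (0 : ℝ) 1, |w - u| < δ →
      |C (w * v u) - C (w * v w) - (C (u * v u) - C (u * v w))| ≤ ε * |w - u| := by
  obtain ⟨δ, hδ, hclose⟩ := Metric.uniformContinuousOn_iff.1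
    ((isCompact_Icc.prod isCompact_Icc).uniformContinuousOn_of_continuous
      (continuousOn_mul_comp_mul hv hmaps hC'cont)) ε hε
  refine ⟨δ, hδ, fun u hu w hw huw => ?_⟩
  exact Convex.norm_image_sub_le_of_norm_hasDerivWithin_le
    (fun s hs => (hasDerivWithinAt_comp_mul_const hC (hmaps hu) hs).sub
      (hasDerivWithinAt_comp_mul_const hC (hmaps hw) hs))
    (fun s hs => (hclose (s, u) ⟨hs, hu⟩ (s, w) ⟨hs, hw⟩
      (by simpa [Prod.dist_eq, dist_comm u, Real.dist_eq] using huw)).le)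
    (convex_Icc 0 1) hu hw

theorem exists_eq_add_const_of_sub_le
    (hC : ∀ t ∈ Icc (0 : ℝ) 1, HasDerivWithinAt C (C' t) (Icc 0 1) t)
    (hC'cont : ContinuousOn C' (Icc 0 1)) (hv : ContinuousOn v (Icc 0 1))
    (hmaps : MapsTo v (Icc 0 1) (Icc 0 1)) (hD : Dense D)
    (hf : ∀ u ∈ D ∩ Icc 0 1, ∀ w ∈ Icc (0 : ℝ) 1, f w - f u ≤ C (w * v u) - C (u * v u))
    (hφ : ∀ u ∈ D ∩ Icc 0 1, ∀ w ∈ Icc (0 : ℝ) 1, φ w - φ u ≤ C (w * v u) - C (u * v u)) :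
    ∃ k, ∀ u ∈ D ∩ Icc 0 1, f u = φ u + k := by
  obtain ⟨m, hmD, hm⟩ := hD.exists_between (zero_lt_one (α := ℝ))
  refine ⟨f m - φ m, fun u hu => ?_⟩
  have hconst := eq_of_forall_exists_abs_sub_le (G := fun x => f x - φ x) hD (fun ε hε => ?_) hu
    ⟨hmD, Ioo_subset_Icc_self hm⟩
  · linarith
  obtain ⟨δ, hδ, hclose⟩ := exists_abs_sub_comp_mul_le hC hC'cont hv hmaps hε
  refine ⟨δ, hδ, fun u hu w hw huw hlt => ?_⟩
  have hbound := hclose u hu.2 w hw.2 (by rwa [abs_of_nonneg (sub_nonneg.2 huw)])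
  rw [abs_of_nonneg (sub_nonneg.2 huw)] at hbound
  refine le_trans (abs_le.2 ⟨?_, ?_⟩) ((le_abs_self _).trans hbound) <;>
    linarith [hf u hu w hw.2, hf w hw u hu.2, hφ u hu w hw.2, hφ w hw u hu.2]

end Rigidity

section Duality

variable {l : ℝ} {C C' f g h : ℝ → ℝ}

theorem Admissible.rotate (hadm : Admissible C f g h) : Admissible C g h f := by
  obtain ⟨hf, hg, hh, hle⟩ := hadm
  refine ⟨hg, hh, hf, fun x hx y hy z hz => ?_⟩
  have hzxy := hle z hz x hx y hy
  rw [mul_rotate] at hzxy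
  linarith

theorem IsDualSolution.rotate (hsol : IsDualSolution C f g h) : IsDualSolution C g h f :=
  ⟨hsol.1.rotate, fun f' g' h' hadm => by linarith [hsol.2 h' f' g' hadm.rotate.rotate]⟩

/-- The symmetrised difference `f + g + h - (3 f̂ + K)`, `K = C 0 - 2 f̂ 1`, between a dual triple
and the candidate optimum `(f̂, f̂, f̂ + K)`. -/
noncomputable def excess (l : ℝ) (C C' f g h : ℝ → ℝ) (x : ℝ) : ℝ :=
  f x + g x + h x - (3 * fhat l C' x + (C 0 - 2 * fhat l C' 1))

theorem excess_add_add (x y z : ℝ) :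
    excess l C C' f g h x + excess l C C' f g h y + excess l C C' f g h z =
      (f x + g y + h z - C (x * y * z)) + (f y + g z + h x - C (y * z * x)) +
        (f z + g x + h y - C (z * x * y)) + 3 * gap l C C' x y z := by
  rw [mul_rotate z x y, mul_rotate y z x, mul_rotate z x y]
  simp only [excess, gap]
  ring

theorem excess_add_add_nonpos_of_contact
    (hC : ∀ t ∈ Icc (0 : ℝ) 1, HasDerivWithinAt C (C' t) (Icc 0 1) t) (h0 : 0 < l)
    (h3 : l < 1 / 3) (hC'cont : ContinuousOn C' (Icc 0 1)) (hadm : Admissible C f g h)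
    {x y z : ℝ} (hxyz : Contact l x y z) :
    excess l C C' f g h x + excess l C C' f g h y + excess l C C' f g h z ≤
      f x + g y + h z - C (x * y * z) := by
  have hx := hxyz.mem_left h0 h3
  have hy := hxyz.mem_middle h0 h3
  have hz := hxyz.mem_right h0 h3
  rw [excess_add_add, gap_eq_zero_of_contact hC h0 h3 hC'cont hxyz]
  linarith [hadm.2.2.2 y hy z hz x hx, hadm.2.2.2 z hz x hx y hy]

theorem setIntegral_eq_add_of_ae_eq {φ : ℝ → ℝ} {k : ℝ} (hφ : IntegrableOn φ (Icc 0 1))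
    (hae : ∀ᵐ x ∂volume.restrict (Icc (0 : ℝ) 1), f x = φ x + k) :
    ∫ x in Icc (0 : ℝ) 1, f x = (∫ x in Icc (0 : ℝ) 1, φ x) + k := by
  rw [integral_congr_ae hae, MeasureTheory.integral_add hφ (integrable_const k)]
  simp

theorem integrableOn_excess (h0 : 0 < l) (h3 : l < 1 / 3) (hC'cont : ContinuousOn C' (Icc 0 1))
    (hadm : Admissible C f g h) : IntegrableOn (excess l C C' f g h) (Icc 0 1) :=
  ((hadm.1.add hadm.2.1).add hadm.2.2.1).sub
    (((continuousOn_fhat h0 h3 hC'cont).integrableOn_Icc.const_mul 3).add (integrable_const _))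

theorem setIntegral_excess (h0 : 0 < l) (h3 : l < 1 / 3) (hC'cont : ContinuousOn C' (Icc 0 1))
    (hadm : Admissible C f g h) :
    ∫ x in Icc (0 : ℝ) 1, excess l C C' f g h x =
      (∫ x in Icc (0 : ℝ) 1, f x) + (∫ x in Icc (0 : ℝ) 1, g x) + (∫ x in Icc (0 : ℝ) 1, h x) -
        (3 * (∫ x in Icc (0 : ℝ) 1, fhat l C' x) + (C 0 - 2 * fhat l C' 1)) := by
  obtain ⟨hf, hg, hh, -⟩ := hadm
  have hfhat : IntegrableOn (fun x => 3 * fhat l C' x) (Icc 0 1) :=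
    (continuousOn_fhat h0 h3 hC'cont).integrableOn_Icc.const_mul 3
  simp only [excess]
  rw [MeasureTheory.integral_sub (f := fun x => f x + g x + h x)
      (g := fun x => 3 * fhat l C' x + (C 0 - 2 * fhat l C' 1)) ((hf.add hg).add hh)
      (hfhat.add (integrable_const _)),
    MeasureTheory.integral_add (f := fun x => f x + g x) (hf.add hg) hh,
    MeasureTheory.integral_add hf hg,
    setIntegral_eq_add_of_ae_eq hfhat (Filter.EventuallyEq.refl _ _),
    MeasureTheory.integral_const_mul]

theorem Admissible.integral_le
    (hC : ∀ t ∈ Icc (0 : ℝ) 1, HasDerivWithinAt C (C' t) (Icc 0 1) t) (h0 : 0 < l)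
    (h3 : l < 1 / 3) (hC'cont : ContinuousOn C' (Icc 0 1))
    (hroot : 9 * l + Real.log (1 - 2 * l) - Real.log l = 3) (hadm : Admissible C f g h) :
    (∫ x in Icc (0 : ℝ) 1, f x) + (∫ x in Icc (0 : ℝ) 1, g x) + (∫ x in Icc (0 : ℝ) 1, h x) ≤
      3 * (∫ x in Icc (0 : ℝ) 1, fhat l C' x) + (C 0 - 2 * fhat l C' 1) := by
  have hnonpos := setIntegral_nonpos_of_contact h0 h3 hroot
    (integrableOn_excess h0 h3 hC'cont hadm) fun x y z hxyz =>
      (excess_add_add_nonpos_of_contact hC h0 h3 hC'cont hadm hxyz).trans <| sub_nonpos.2 <|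
        hadm.2.2.2 x (hxyz.mem_left h0 h3) y (hxyz.mem_middle h0 h3) z (hxyz.mem_right h0 h3)
  rw [setIntegral_excess h0 h3 hC'cont hadm] at hnonpos
  linarith

theorem IsDualSolution.integral_ge
    (hC : ∀ t ∈ Icc (0 : ℝ) 1, HasDerivWithinAt C (C' t) (Icc 0 1) t) (h0 : 0 < l)
    (h6 : l ≤ 1 / 6) (hC'cont : ContinuousOn C' (Icc 0 1))
    (hU : MonotoneOn (fun t => t * C' t) (Icc 0 1)) (hsol : IsDualSolution C f g h) :
    3 * (∫ x in Icc (0 : ℝ) 1, fhat l C' x) + (C 0 - 2 * fhat l C' 1) ≤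
      (∫ x in Icc (0 : ℝ) 1, f x) + (∫ x in Icc (0 : ℝ) 1, g x) +
        (∫ x in Icc (0 : ℝ) 1, h x) := by
  have hint : IntegrableOn (fhat l C') (Icc 0 1) :=
    (continuousOn_fhat h0 (by linarith) hC'cont).integrableOn_Icc
  have hbest := hsol.2 (fhat l C') (fhat l C') (fun x => fhat l C' x + (C 0 - 2 * fhat l C' 1))
    ⟨hint, hint, hint.add (integrable_const _), fun x hx y hy z hz => by
      have hgap := gap_nonneg hC h0 h6 hC'cont hU hx hy hz
      rw [gap] at hgap
      linarith⟩
  rw [setIntegral_eq_add_of_ae_eq hint (Filter.EventuallyEq.refl _ _)] at hbest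
  linarith

theorem IsDualSolution.ae_exists_contact
    (hC : ∀ t ∈ Icc (0 : ℝ) 1, HasDerivWithinAt C (C' t) (Icc 0 1) t) (h0 : 0 < l)
    (h6 : l ≤ 1 / 6) (hC'cont : ContinuousOn C' (Icc 0 1))
    (hU : MonotoneOn (fun t => t * C' t) (Icc 0 1))
    (hroot : 9 * l + Real.log (1 - 2 * l) - Real.log l = 3) (hsol : IsDualSolution C f g h) :
    ∀ᵐ x, x ∈ Icc (0 : ℝ) 1 → ∃ y z, Contact l x y z ∧ f x + g y + h z = C (x * y * z) := by
  have h3 : l < 1 / 3 := by linarith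
  have hle := fun x y z (hxyz : Contact l x y z) => hsol.1.2.2.2 x (hxyz.mem_left h0 h3)
    y (hxyz.mem_middle h0 h3) z (hxyz.mem_right h0 h3)
  have hexcess := fun x y z (hxyz : Contact l x y z) =>
    excess_add_add_nonpos_of_contact hC h0 h3 hC'cont hsol.1 hxyz
  have hnonneg : 0 ≤ ∫ x in Icc (0 : ℝ) 1, excess l C C' f g h x := by
    rw [setIntegral_excess h0 h3 hC'cont hsol.1]
    exact sub_nonneg.2 (hsol.integral_ge hC h0 h6 hC'cont hU)
  filter_upwards [ae_exists_contact_of_setIntegral_nonneg h0 h3 hroot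
    (integrableOn_excess h0 h3 hC'cont hsol.1)
    (fun x y z hxyz => by linarith [hexcess x y z hxyz, hle x y z hxyz]) hnonneg] with x hx hxI
  obtain ⟨y, z, hxyz, hsum⟩ := hx hxI
  exact ⟨y, z, hxyz, (hle x y z hxyz).antisymm (by linarith [hexcess x y z hxyz])⟩

theorem sub_le_of_contact_eq (h0 : 0 < l) (h3 : l < 1 / 3)
    (hle : ∀ x ∈ Icc (0 : ℝ) 1, ∀ y ∈ Icc (0 : ℝ) 1, ∀ z ∈ Icc (0 : ℝ) 1,
      f x + g y + h z ≤ C (x * y * z)) {x y z w : ℝ} (hxyz : Contact l x y z)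
    (heq : f x + g y + h z = C (x * y * z)) (hw : w ∈ Icc (0 : ℝ) 1) :
    f w - f x ≤ C (w * lam l x) - C (x * lam l x) := by
  rw [← hxyz.mul_eq_lam h0 h3, ← mul_assoc, ← mul_assoc]
  linarith [hle w hw y (hxyz.mem_middle h0 h3) z (hxyz.mem_right h0 h3)]

theorem IsDualSolution.exists_ae_eq_fhat_add
    (hC : ∀ t ∈ Icc (0 : ℝ) 1, HasDerivWithinAt C (C' t) (Icc 0 1) t) (h0 : 0 < l)
    (h6 : l ≤ 1 / 6) (hC'cont : ContinuousOn C' (Icc 0 1))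
    (hU : MonotoneOn (fun t => t * C' t) (Icc 0 1))
    (hroot : 9 * l + Real.log (1 - 2 * l) - Real.log l = 3) (hsol : IsDualSolution C f g h) :
    ∃ k, ∀ᵐ x ∂volume.restrict (Icc (0 : ℝ) 1), f x = fhat l C' x + k := by
  have h3 : l < 1 / 3 := by linarith
  have hcontact := hsol.ae_exists_contact hC h0 h6 hC'cont hU hroot
  obtain ⟨k, hk⟩ := exists_eq_add_const_of_sub_le (f := f) (φ := fhat l C') hC hC'cont
    (continuous_lam h0 h3).continuousOn (fun _ => lam_mem_Icc h0 h3)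
    (Measure.dense_of_ae hcontact)
    (fun u hu w hw => by
      obtain ⟨y, z, hxyz, heq⟩ := hu.1 hu.2
      exact sub_le_of_contact_eq h0 h3 hsol.1.2.2.2 hxyz heq hw)
    (fun u hu w hw => by
      obtain ⟨y, z, hxyz, -⟩ := hu.1 hu.2
      refine sub_le_of_contact_eq (g := fhat l C')
        (h := fun x => fhat l C' x + (C 0 - 2 * fhat l C' 1)) h0 h3
        (fun x hx y hy z hz => ?_) hxyz ?_ hw
      · linarith [sub_nonneg.1 (gap_nonneg hC h0 h6 hC'cont hU hx hy hz)]
      · linarith [sub_eq_zero.1 (gap_eq_zero_of_contact hC h0 h3 hC'cont hxyz)])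
  refine ⟨k, (ae_restrict_iff' measurableSet_Icc).2 ?_⟩
  filter_upwards [hcontact] with x hx hxI
  exact hk x ⟨hx, hxI⟩

theorem le_of_ae_le_of_continuousOn {φ : ℝ → ℝ} {a b k x : ℝ} (hab : a ≠ b)
    (hφ : ContinuousOn φ (Icc a b)) (hae : ∀ᵐ x ∂volume.restrict (Icc a b), k ≤ φ x)
    (hx : x ∈ Icc a b) : k ≤ φ x := by
  rw [ae_restrict_iff' measurableSet_Icc] at hae
  have hclosure : x ∈ closure (Ioo a b ∩ {x | x ∈ Icc a b → k ≤ φ x}) :=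
    closure_minimal ((Measure.dense_of_ae hae).open_subset_closure_inter isOpen_Ioo)
      isClosed_closure (by rwa [closure_Ioo hab])
  exact ContinuousWithinAt.closure_le hclosure continuousWithinAt_const
    ((hφ x hx).mono fun y hy => Ioo_subset_Icc_self hy.1)
    fun y hy => hy.2 (Ioo_subset_Icc_self hy.1)

theorem Admissible.le_fhat_add
    (hC : ∀ t ∈ Icc (0 : ℝ) 1, HasDerivWithinAt C (C' t) (Icc 0 1) t) (h0 : 0 < l)
    (h3 : l < 1 / 3) (hC'cont : ContinuousOn C' (Icc 0 1)) (hadm : Admissible C f g h)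
    {a b c : ℝ} (hsum : a + b + c = C 0 - 2 * fhat l C' 1)
    (hg : ∀ᵐ y ∂volume.restrict (Icc (0 : ℝ) 1), g y = fhat l C' y + b)
    (hh : ∀ᵐ z ∂volume.restrict (Icc (0 : ℝ) 1), h z = fhat l C' z + c)
    {x : ℝ} (hx : x ∈ Icc (0 : ℝ) 1) : f x ≤ fhat l C' x + a := by
  have hCc : ContinuousOn C (Icc 0 1) := fun t ht => (hC t ht).continuousWithinAt
  have hfc := continuousOn_fhat h0 h3 hC'cont
  have hbound_z : ∀ y ∈ Icc (0 : ℝ) 1, ∀ z ∈ Icc (0 : ℝ) 1,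
      f x + g y + c ≤ C (x * y * z) - fhat l C' z := fun y hy z hz =>
    le_of_ae_le_of_continuousOn (φ := fun z => C (x * y * z) - fhat l C' z) zero_ne_one
      ((hCc.comp (by fun_prop) fun z hz =>
        unitInterval.mul_mem (unitInterval.mul_mem hx hy) hz).sub hfc)
      (by
        filter_upwards [hh, ae_restrict_mem measurableSet_Icc] with w hw hwI
        linarith [hadm.2.2.2 x hx y hy w hwI]) hz
  have hbound_yz : ∀ y ∈ Icc (0 : ℝ) 1, ∀ z ∈ Icc (0 : ℝ) 1,
      f x + b + c + fhat l C' z ≤ C (x * y * z) - fhat l C' y := fun y hy z hz =>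
    le_of_ae_le_of_continuousOn (φ := fun y => C (x * y * z) - fhat l C' y) zero_ne_one
      ((hCc.comp (by fun_prop) fun y hy =>
        unitInterval.mul_mem (unitInterval.mul_mem hx hy) hz).sub hfc)
      (by
        filter_upwards [hg, ae_restrict_mem measurableSet_Icc] with w hw hwI
        linarith [hbound_z w hwI z hz]) hy
  obtain ⟨y, z, hxyz⟩ := Contact.exists_of_mem h0 h3 hx
  linarith [hbound_yz y (hxyz.mem_middle h0 h3) z (hxyz.mem_right h0 h3),
    sub_eq_zero.1 (gap_eq_zero_of_contact hC h0 h3 hC'cont hxyz)]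

theorem integral_add_add_of_ae_eq (h0 : 0 < l) (h3 : l < 1 / 3)
    (hC'cont : ContinuousOn C' (Icc 0 1)) {a b c : ℝ}
    (hf : ∀ᵐ x ∂volume.restrict (Icc (0 : ℝ) 1), f x = fhat l C' x + a)
    (hg : ∀ᵐ y ∂volume.restrict (Icc (0 : ℝ) 1), g y = fhat l C' y + b)
    (hh : ∀ᵐ z ∂volume.restrict (Icc (0 : ℝ) 1), h z = fhat l C' z + c) :
    (∫ x in Icc (0 : ℝ) 1, f x) + (∫ x in Icc (0 : ℝ) 1, g x) + (∫ x in Icc (0 : ℝ) 1, h x) =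
      3 * (∫ x in Icc (0 : ℝ) 1, fhat l C' x) + (a + b + c) := by
  have hint : IntegrableOn (fhat l C') (Icc 0 1) :=
    (continuousOn_fhat h0 h3 hC'cont).integrableOn_Icc
  rw [setIntegral_eq_add_of_ae_eq hint hf, setIntegral_eq_add_of_ae_eq hint hg,
    setIntegral_eq_add_of_ae_eq hint hh]
  ring

theorem integrableOn_of_ae_eq_fhat_add (h0 : 0 < l) (h3 : l < 1 / 3)
    (hC'cont : ContinuousOn C' (Icc 0 1)) {k : ℝ}
    (hae : ∀ᵐ x ∂volume.restrict (Icc (0 : ℝ) 1), f x = fhat l C' x + k) :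
    IntegrableOn f (Icc 0 1) :=
  ((continuousOn_fhat h0 h3 hC'cont).add continuousOn_const).integrableOn_Icc.congr_fun_ae
    (Filter.EventuallyEq.symm hae)

theorem isDualSolution_of_ae_eq_fhat_add
    (hC : ∀ t ∈ Icc (0 : ℝ) 1, HasDerivWithinAt C (C' t) (Icc 0 1) t) (h0 : 0 < l)
    (h6 : l ≤ 1 / 6) (hC'cont : ContinuousOn C' (Icc 0 1))
    (hU : MonotoneOn (fun t => t * C' t) (Icc 0 1))
    (hroot : 9 * l + Real.log (1 - 2 * l) - Real.log l = 3) {a b c : ℝ}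
    (hsum : a + b + c = C 0 - 2 * fhat l C' 1)
    (hfle : ∀ x ∈ Icc (0 : ℝ) 1, f x ≤ fhat l C' x + a)
    (hgle : ∀ y ∈ Icc (0 : ℝ) 1, g y ≤ fhat l C' y + b)
    (hhle : ∀ z ∈ Icc (0 : ℝ) 1, h z ≤ fhat l C' z + c)
    (hf : ∀ᵐ x ∂volume.restrict (Icc (0 : ℝ) 1), f x = fhat l C' x + a)
    (hg : ∀ᵐ y ∂volume.restrict (Icc (0 : ℝ) 1), g y = fhat l C' y + b)
    (hh : ∀ᵐ z ∂volume.restrict (Icc (0 : ℝ) 1), h z = fhat l C' z + c) :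
    IsDualSolution C f g h := by
  have h3 : l < 1 / 3 := by linarith
  have hint {φ : ℝ → ℝ} {k : ℝ}
      (hae : ∀ᵐ x ∂volume.restrict (Icc (0 : ℝ) 1), φ x = fhat l C' x + k) :=
    integrableOn_of_ae_eq_fhat_add h0 h3 hC'cont hae
  refine ⟨⟨hint hf, hint hg, hint hh, fun x hx y hy z hz => ?_⟩, fun f' g' h' hadm => ?_⟩
  · linarith [hfle x hx, hgle y hy, hhle z hz,
      sub_nonneg.1 (gap_nonneg hC h0 h6 hC'cont hU hx hy hz)]
  · rw [integral_add_add_of_ae_eq h0 h3 hC'cont hf hg hh, hsum]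
    exact hadm.integral_le hC h0 h3 hC'cont hroot

end Duality

theorem dual_solution_unique_general (C C' : ℝ → ℝ)
    (hC : ∀ t ∈ Icc (0 : ℝ) 1, HasDerivWithinAt C (C' t) (Icc (0 : ℝ) 1) t)
    (hC'cont : ContinuousOn C' (Icc (0 : ℝ) 1))
    (hU : MonotoneOn (fun t => t * C' t) (Icc (0 : ℝ) 1)) (l : ℝ) (hl : l ∈ Ioo (0 : ℝ) (1 / 6))
    (hroot : 9 * l + Real.log (1 - 2 * l) - Real.log l = 3) (f g h : ℝ → ℝ) :
    IsDualSolution C f g h ↔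
      ∃ Cf Cg Ch : ℝ,
        Cf + Cg + Ch = C 0 - 2 * (∫ t in (0 : ℝ)..1, lam l t * C' (t * lam l t)) ∧
        (∀ x ∈ Icc (0 : ℝ) 1, f x ≤ fhat l C' x + Cf) ∧
        (∀ y ∈ Icc (0 : ℝ) 1, g y ≤ fhat l C' y + Cg) ∧
        (∀ z ∈ Icc (0 : ℝ) 1, h z ≤ fhat l C' z + Ch) ∧
        (∀ᵐ x ∂volume.restrict (Icc (0 : ℝ) 1), f x = fhat l C' x + Cf) ∧
        (∀ᵐ y ∂volume.restrict (Icc (0 : ℝ) 1), g y = fhat l C' y + Cg) ∧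
        (∀ᵐ z ∂volume.restrict (Icc (0 : ℝ) 1), h z = fhat l C' z + Ch) := by
  have h0 := hl.1
  have h6 := hl.2.le
  have h3 : l < 1 / 3 := by linarith
  refine ⟨fun hsol => ?_, fun ⟨Cf, Cg, Ch, hsum, hfle, hgle, hhle, hf, hg, hh⟩ =>
    isDualSolution_of_ae_eq_fhat_add hC h0 h6 hC'cont hU hroot hsum hfle hgle hhle hf hg hh⟩
  obtain ⟨Cf, hf⟩ := hsol.exists_ae_eq_fhat_add hC h0 h6 hC'cont hU hroot
  obtain ⟨Cg, hg⟩ := hsol.rotate.exists_ae_eq_fhat_add hC h0 h6 hC'cont hU hroot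
  obtain ⟨Ch, hh⟩ := hsol.rotate.rotate.exists_ae_eq_fhat_add hC h0 h6 hC'cont hU hroot
  have hsum : Cf + Cg + Ch = C 0 - 2 * fhat l C' 1 := by
    have hle := hsol.1.integral_le hC h0 h3 hC'cont hroot
    have hge := hsol.integral_ge hC h0 h6 hC'cont hU
    rw [integral_add_add_of_ae_eq h0 h3 hC'cont hf hg hh] at hle hge
    linarith
  exact ⟨Cf, Cg, Ch, hsum,
    fun x hx => hsol.1.le_fhat_add hC h0 h3 hC'cont hsum hg hh hx,
    fun y hy => hsol.1.rotate.le_fhat_add hC h0 h3 hC'cont (by linarith) hh hf hy,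
    fun z hz => hsol.1.rotate.rotate.le_fhat_add hC h0 h3 hC'cont (by linarith) hf hg hz,
    hf, hg, hh⟩

/-- Uniqueness of the dual solution: `(f, g, h)` is a dual solution if and only if there are
constants `C_f + C_g + C_h = C(0) − 2∫₀¹ λ(t)C'(tλ(t)) dt` with `f ≤ f̂ + C_f`, `g ≤ f̂ + C_g`,
`h ≤ f̂ + C_h` everywhere on `[0,1]` and equality Lebesgue-almost everywhere. -/
theorem dual_solution_unique (C C' : ℝ → ℝ)
    (hC : ∀ t ∈ Set.Icc (0 : ℝ) 1, HasDerivWithinAt C (C' t) (Set.Icc (0 : ℝ) 1) t)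
    (hC'cont : ContinuousOn C' (Set.Icc (0 : ℝ) 1))
    (hU : StrictMonoOn (fun t => t * C' t) (Set.Icc (0 : ℝ) 1))
    (l : ℝ) (hl : l ∈ Set.Ioo (0 : ℝ) (1/6))
    (hroot : 9 * l + Real.log (1 - 2*l) - Real.log l = 3)
    (f g h : ℝ → ℝ)
    (hf : IntegrableOn f (Set.Icc (0 : ℝ) 1)) (hg : IntegrableOn g (Set.Icc (0 : ℝ) 1))
    (hh : IntegrableOn h (Set.Icc (0 : ℝ) 1)) :
    IsDualSolution C f g h ↔
      ∃ Cf Cg Ch : ℝ,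
        Cf + Cg + Ch = C 0 - 2 * (∫ t in (0 : ℝ)..1, lam l t * C' (t * lam l t)) ∧
        (∀ x ∈ Set.Icc (0 : ℝ) 1, f x ≤ fhat l C' x + Cf) ∧
        (∀ y ∈ Set.Icc (0 : ℝ) 1, g y ≤ fhat l C' y + Cg) ∧
        (∀ z ∈ Set.Icc (0 : ℝ) 1, h z ≤ fhat l C' z + Ch) ∧
        (∀ᵐ x ∂(volume.restrict (Set.Icc (0 : ℝ) 1)), f x = fhat l C' x + Cf) ∧
        (∀ᵐ y ∂(volume.restrict (Set.Icc (0 : ℝ) 1)), g y = fhat l C' y + Cg) ∧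
        (∀ᵐ z ∂(volume.restrict (Set.Icc (0 : ℝ) 1)), h z = fhat l C' z + Ch) :=
  dual_solution_unique_general C C' hC hC'cont hU.monotoneOn l hl hroot f g h
end
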